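/- For every n ≥ 2, the outer automorphism group Out(F_n) = Aut(F_n)/Inn(F_n) of the free group F_n of rank n has uniformly exponential growth, i.e., ω(Out(F_n)) > 1. -/

import Mathlib

open Filter

variable {G : Type*} [Group G]

noncomputable def wordLength (S : Set G) (g : G) : ℕ :=
  sInf {k | ∃ w : List G, w.length = k ∧ (∀ x ∈ w, x ∈ S ∨ x⁻¹ ∈ S) ∧ w.prod = g}

noncomputable def ballCard (S : Set G) (n : ℕ) : ℕ :=
  Set.ncard {g : G | wordLength S g ≤ n}

noncomputable def growthRate (S : Set G) : ℝ :=
  limUnder atTop (fun n : ℕ => (ballCard S n : ℝ) ^ ((n : ℝ)⁻¹))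

noncomputable def minGrowth (G : Type*) [Group G] : ℝ :=
  sInf {x : ℝ | ∃ S : Finset G, Subgroup.closure (S : Set G) = ⊤ ∧ growthRate (S : Set G) = x}

/-- The subgroup of inner automorphisms is normal in the automorphism group. -/
instance conjRange_normal (H : Type*) [Group H] :
    (MulAut.conj : H →* MulAut H).range.Normal := by
  constructor
  intro x hx φ
  obtain ⟨g, rfl⟩ := hx
  refine ⟨φ g, ?_⟩
  ext y
  simp [MulAut.conj]

/-- Words of length at most `k` in `S ∪ S⁻¹`. -/
def InBall {G : Type*} [Group G] (S : Set G) (k : ℕ) (g : G) : Prop :=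
  ∃ w : List G, w.length ≤ k ∧ (∀ x ∈ w, x ∈ S ∨ x⁻¹ ∈ S) ∧ w.prod = g

section ball
variable {G : Type*} [Group G] {S : Set G}

lemma InBall.one (k : ℕ) : InBall S k 1 := ⟨[], by simp⟩

lemma InBall.mono {k l : ℕ} (h : k ≤ l) {g : G} (hg : InBall S k g) : InBall S l g := by
  obtain ⟨w, h1, h2, h3⟩ := hg
  exact ⟨w, h1.trans h, h2, h3⟩

lemma InBall.mul {k l : ℕ} {g h : G} (hg : InBall S k g) (hh : InBall S l h) :
    InBall S (k + l) (g * h) := by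
  obtain ⟨w, h1, h2, h3⟩ := hg
  obtain ⟨v, i1, i2, i3⟩ := hh
  refine ⟨w ++ v, by simp; omega, ?_, by simp [h3, i3]⟩
  intro x hx
  rcases List.mem_append.1 hx with h | h
  · exact h2 x h
  · exact i2 x h

lemma InBall.inv {k : ℕ} {g : G} (hg : InBall S k g) : InBall S k g⁻¹ := by
  obtain ⟨w, h1, h2, h3⟩ := hg
  refine ⟨(w.map (·⁻¹)).reverse, by simpa using h1, ?_, ?_⟩
  · intro x hx
    simp only [List.mem_reverse, List.mem_map] at hx
    obtain ⟨y, hy, rfl⟩ := hx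
    rcases h2 y hy with h | h
    · right; simpa using h
    · left; exact h
  · rw [← h3, List.prod_inv_reverse]

lemma InBall.pow {k : ℕ} {g : G} (hg : InBall S k g) (m : ℕ) : InBall S (m * k) (g ^ m) := by
  induction m with
  | zero => simpa using InBall.one _
  | succ m ih =>
    rw [pow_succ, Nat.succ_mul]
    exact ih.mul hg

lemma InBall.of_mem {g : G} (hg : g ∈ S) : InBall S 1 g := ⟨[g], by simp [hg]⟩

lemma exists_inBall (hS : Subgroup.closure S = ⊤) (g : G) : ∃ k, InBall S k g := by
  have : g ∈ Subgroup.closure S := by rw [hS]; trivial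
  induction this using Subgroup.closure_induction with
  | mem x hx => exact ⟨1, .of_mem hx⟩
  | one => exact ⟨0, .one _⟩
  | mul x y _ _ hx hy =>
    obtain ⟨k, hk⟩ := hx
    obtain ⟨l, hl⟩ := hy
    exact ⟨_, hk.mul hl⟩
  | inv x _ hx =>
    obtain ⟨k, hk⟩ := hx
    exact ⟨k, hk.inv⟩

lemma wordLength_le_iff (hS : Subgroup.closure S = ⊤) (g : G) (k : ℕ) :
    wordLength S g ≤ k ↔ InBall S k g := by
  unfold wordLength
  constructor
  · intro h
    have hne : {k | ∃ w : List G, w.length = k ∧ (∀ x ∈ w, x ∈ S ∨ x⁻¹ ∈ S) ∧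
        w.prod = g}.Nonempty := by
      obtain ⟨k, w, h1, h2, h3⟩ := exists_inBall hS g
      exact ⟨w.length, w, rfl, h2, h3⟩
    obtain ⟨w, h1, h2, h3⟩ := Nat.sInf_mem hne
    exact ⟨w, h1.le.trans h, h2, h3⟩
  · rintro ⟨w, h1, h2, h3⟩
    refine le_trans (Nat.sInf_le ?_) h1
    exact ⟨w, rfl, h2, h3⟩

lemma finite_ball (hf : S.Finite) (k : ℕ) : {g : G | InBall S k g}.Finite := by
  have h1 : (S ∪ S⁻¹).Finite := hf.union hf.inv
  have : Finite ↥(S ∪ S⁻¹) := h1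
  have h2 := (List.finite_length_le ↥(S ∪ S⁻¹) k)
  refine (h2.image (fun l => (l.map Subtype.val).prod)).subset ?_
  rintro g ⟨w, a, b, c⟩
  refine ⟨w.attach.map (fun x => ⟨x.1, b x.1 x.2⟩), by simpa using a, ?_⟩
  simp [c, Function.comp_def]

lemma ballCard_eq (hS : Subgroup.closure S = ⊤) (k : ℕ) :
    ballCard S k = Set.ncard {g : G | InBall S k g} := by
  unfold ballCard
  congr 1
  ext g
  exact wordLength_le_iff hS g k

lemma ballCard_pos (hS : Subgroup.closure S = ⊤) (hf : S.Finite) (k : ℕ) : 0 < ballCard S k := by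
  rw [ballCard_eq hS, Set.ncard_pos (finite_ball hf k)]
  exact ⟨1, .one _⟩

lemma ballCard_add (hS : Subgroup.closure S = ⊤) (hf : S.Finite) (k l : ℕ) :
    ballCard S (k + l) ≤ ballCard S k * ballCard S l := by
  rw [ballCard_eq hS, ballCard_eq hS, ballCard_eq hS]
  open Pointwise in
  have : {g : G | InBall S (k + l) g} ⊆ {g : G | InBall S k g} * {g : G | InBall S l g} := by
    rintro g ⟨w, h1, h2, h3⟩
    refine ⟨(w.take k).prod, ⟨w.take k, by simp, fun x hx => h2 x (List.mem_of_mem_take hx), rfl⟩,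
      (w.drop k).prod, ⟨w.drop k, by simp; omega, fun x hx => h2 x (List.mem_of_mem_drop hx), rfl⟩,
      ?_⟩
    simp [List.prod_take_mul_prod_drop, h3]
  refine (Set.ncard_le_ncard this ((finite_ball hf k).mul (finite_ball hf l))).trans ?_
  rw [← Set.image_mul_prod, ← Set.ncard_prod]
  exact Set.ncard_image_le ((finite_ball hf k).prod (finite_ball hf l))

/-- The product of the word in `a`, `b` coded by a list of booleans. -/
def bword {M : Type*} [Monoid M] (a b : M) (l : List Bool) : M :=
  (l.map (fun c => if c then b else a)).prod

lemma InBall.bword {L : ℕ} {a b : G} (ha : InBall S L a) (hb : InBall S L b) (l : List Bool) :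
    InBall S (L * l.length) (bword a b l) := by
  induction l with
  | nil => exact InBall.one _
  | cons c l ih =>
    have : _root_.bword a b (c :: l) = (if c then b else a) * _root_.bword a b l := by
      simp [_root_.bword]
    rw [this, List.length_cons, Nat.mul_succ, add_comm]
    refine InBall.mul ?_ ih
    split_ifs <;> assumption

lemma growthRate_ge (hS : Subgroup.closure S = ⊤) (hf : S.Finite) {L : ℕ} (hL : 0 < L) {a b : G}
    (ha : InBall S L a) (hb : InBall S L b)
    (hinj : ∀ l l' : List Bool, l.length = l'.length → bword a b l = bword a b l' → l = l') :
    Real.exp (Real.log 2 / L) ≤ growthRate S := by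
  have hpos : ∀ k, (0 : ℝ) < ballCard S k := fun k => by exact_mod_cast ballCard_pos hS hf k
  have hsub : Subadditive (fun k => Real.log (ballCard S k)) := by
    intro k l
    rw [← Real.log_mul (hpos k).ne' (hpos l).ne']
    apply Real.log_le_log (hpos _)
    exact_mod_cast ballCard_add hS hf k l
  have hbdd : BddBelow (Set.range fun k : ℕ => Real.log (ballCard S k) / k) := by
    refine ⟨0, ?_⟩
    rintro _ ⟨k, rfl⟩
    have : (1 : ℝ) ≤ ballCard S k := by exact_mod_cast ballCard_pos hS hf k
    have := Real.log_nonneg this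
    positivity
  have ht := hsub.tendsto_lim hbdd
  have ht2 : Tendsto (fun k : ℕ => (ballCard S k : ℝ) ^ ((k : ℝ)⁻¹)) atTop
      (nhds (Real.exp hsub.lim)) := by
    refine ((Real.continuous_exp.tendsto _).comp ht).congr ?_
    intro k
    simp only [Function.comp]
    rw [Real.rpow_def_of_pos (hpos k), div_eq_mul_inv]
  unfold growthRate
  rw [ht2.limUnder_eq]
  apply Real.exp_le_exp.2
  have hsubseq : Tendsto (fun k : ℕ => L * (k + 1)) atTop atTop := by
    apply tendsto_atTop_mono (f := fun k : ℕ => k) _ tendsto_id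
    intro k
    nlinarith
  refine ge_of_tendsto' (ht.comp hsubseq) ?_
  intro k
  simp only [Function.comp]
  have hcard : 2 ^ (k + 1) ≤ ballCard S (L * (k + 1)) := by
    rw [ballCard_eq hS]
    have h1 : Set.ncard (Set.range (fun v : List.Vector Bool (k + 1) => bword a b v.1)) =
        2 ^ (k + 1) := by
      rw [← Set.image_univ, Set.ncard_image_of_injective, Set.ncard_univ, Nat.card_eq_fintype_card,
        card_vector, Fintype.card_bool]
      intro v v' h
      exact Subtype.ext (hinj _ _ (by rw [v.2, v'.2]) h)
    rw [← h1]
    refine Set.ncard_le_ncard ?_ (finite_ball hf _)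
    rintro _ ⟨v, rfl⟩
    have := InBall.bword ha hb v.1
    rwa [v.2] at this
  have h2 : ((k + 1 : ℕ) : ℝ) * Real.log 2 ≤ Real.log (ballCard S (L * (k + 1))) := by
    rw [← Real.log_pow]
    apply Real.log_le_log (by positivity)
    exact_mod_cast hcard
  rw [div_le_div_iff₀ (by positivity) (by positivity)]
  push_cast at h2 ⊢
  have : (0 : ℝ) < L := by exact_mod_cast hL
  nlinarith

lemma one_lt_minGrowth (hfg : Group.FG G) {L : ℕ} (hL : 0 < L)
    (h : ∀ S : Finset G, Subgroup.closure (S : Set G) = ⊤ → ∃ a b : G, InBall (S : Set G) L a ∧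
      InBall (S : Set G) L b ∧
      ∀ l l' : List Bool, l.length = l'.length → bword a b l = bword a b l' → l = l') :
    1 < minGrowth G := by
  have h1 : Real.exp (Real.log 2 / L) ≤ minGrowth G := by
    apply le_csInf
    · obtain ⟨S, hS⟩ := hfg.out
      exact ⟨_, S, hS, rfl⟩
    · rintro _ ⟨S, hS, rfl⟩
      obtain ⟨a, b, ha, hb, hi⟩ := h S hS
      exact growthRate_ge hS S.finite_toSet hL ha hb hi
  refine lt_of_lt_of_le ?_ h1
  rw [Real.one_lt_exp_iff]
  have := Real.log_pos (by norm_num : (1 : ℝ) < 2)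
  positivity

end ball

section nielsen
open FreeGroup

lemma exists_common_pre {β : Type*} [DecidableEq β] (l₁ l₂ : List β) :
    ∃ p r₁ r₂, l₁ = p ++ r₁ ∧ l₂ = p ++ r₂ ∧ ∀ x ∈ r₁.head?, ∀ y ∈ r₂.head?, x ≠ y := by
  induction l₁ generalizing l₂ with
  | nil => exact ⟨[], [], l₂, by simp⟩
  | cons a l ih =>
    cases l₂ with
    | nil => exact ⟨[], a :: l, [], by simp⟩
    | cons b m =>
      by_cases h : a = b
      · subst h
        obtain ⟨p, r₁, r₂, h1, h2, h3⟩ := ih m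
        exact ⟨a :: p, r₁, r₂, by simp [h1], by simp [h2], h3⟩
      · exact ⟨[], a :: l, b :: m, by simp, by simp, by simpa using h⟩

variable {α : Type*} [DecidableEq α]

lemma norm_inv_mul_of_pre {a b : FreeGroup α} {p r₁ r₂ : List (α × Bool)}
    (ha : a.toWord = p ++ r₁) (hb : b.toWord = p ++ r₂)
    (h : ∀ x ∈ r₁.head?, ∀ y ∈ r₂.head?, x ≠ y) :
    norm (a⁻¹ * b) = r₁.length + r₂.length := by
  have hra : IsReduced (p ++ r₁) := ha ▸ isReduced_toWord
  have hrb : IsReduced (p ++ r₂) := hb ▸ isReduced_toWord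
  have h1 : a⁻¹ * b = mk (invRev r₁ ++ r₂) := by
    rw [← mk_toWord (x := a), ← mk_toWord (x := b), ha, hb, ← mul_mk, ← mul_mk, ← mul_mk, ← inv_mk]
    group
  have hra' : IsReduced (invRev r₁) := by
    rw [isReduced_iff_reduce_eq, reduce_invRev, isReduced_iff_reduce_eq.1]
    exact List.IsChain.right_of_append hra
  have h2 : IsReduced (invRev r₁ ++ r₂) := by
    unfold FreeGroup.IsReduced
    rw [List.isChain_append]
    refine ⟨hra', List.IsChain.right_of_append hrb, ?_⟩
    intro x hx y hy
    cases r₁ with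
    | nil => simp [invRev] at hx
    | cons z r =>
      have hz := h z (by simp) y hy
      simp [invRev] at hx
      subst hx
      intro h1
      simp only at h1 ⊢
      by_contra h2
      apply hz
      ext
      · exact h1
      · cases hz : z.2 <;> cases hy : y.2 <;> simp_all
  rw [h1, FreeGroup.norm, toWord_mk, h2.reduce_eq, List.length_append, invRev_length]

/-- Twice the length of the longest common initial segment. -/
def gp (a b : FreeGroup α) : ℤ := (norm a : ℤ) + norm b - norm (a⁻¹ * b)

lemma gp_le_iff (a b : FreeGroup α) (k : ℕ) :
    2 * (k : ℤ) ≤ gp a b ↔ k ≤ norm a ∧ k ≤ norm b ∧ a.toWord.take k = b.toWord.take k := by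
  obtain ⟨p, r₁, r₂, ha, hb, h⟩ := exists_common_pre a.toWord b.toWord
  have hn := norm_inv_mul_of_pre ha hb h
  have hna : norm a = p.length + r₁.length := by rw [FreeGroup.norm, ha, List.length_append]
  have hnb : norm b = p.length + r₂.length := by rw [FreeGroup.norm, hb, List.length_append]
  have hg : gp a b = 2 * (p.length : ℤ) := by rw [gp, hn, hna, hnb]; push_cast; ring
  rw [hg, hna, hnb, ha, hb]
  constructor
  · intro hk
    have hk : k ≤ p.length := by omega
    refine ⟨by omega, by omega, ?_⟩
    rw [List.take_append_of_le_length hk, List.take_append_of_le_length hk]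
  · rintro ⟨h1, h2, h3⟩
    by_contra hk
    have hk : p.length < k := by omega
    cases r₁ with
    | nil => simp at h1; omega
    | cons x r₁ =>
      cases r₂ with
      | nil => simp at h2; omega
      | cons y r₂ =>
        apply h x (by simp) y (by simp)
        have h4 := congrArg (fun l => l[p.length]?) h3
        simpa [List.getElem?_take, hk] using h4

lemma gp_even (a b : FreeGroup α) : ∃ k : ℕ, gp a b = 2 * k := by
  obtain ⟨p, r₁, r₂, ha, hb, h⟩ := exists_common_pre a.toWord b.toWord
  have hn := norm_inv_mul_of_pre ha hb h
  refine ⟨p.length, ?_⟩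
  rw [gp, hn, FreeGroup.norm, FreeGroup.norm, ha, hb]
  simp only [List.length_append]
  push_cast; ring

lemma gp_comm (a b : FreeGroup α) : gp a b = gp b a := by
  have : norm (a⁻¹ * b) = norm (b⁻¹ * a) := by
    rw [← norm_inv_eq]; simp
  rw [gp, gp, this]; ring

lemma gp_ultra (a b c : FreeGroup α) : min (gp a b) (gp b c) ≤ gp a c := by
  obtain ⟨k, hk⟩ := gp_even a b
  obtain ⟨l, hl⟩ := gp_even b c
  have h1 := (gp_le_iff a b (min k l)).1 (by rw [hk]; push_cast; omega)
  have h2 := (gp_le_iff b c (min k l)).1 (by rw [hl]; push_cast; omega)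
  have h3 := (gp_le_iff a c (min k l)).2 ⟨h1.1, h2.2.1, h1.2.2.trans h2.2.2⟩
  rw [hk, hl]
  push_cast at h3
  omega

lemma gp_le_left (a b : FreeGroup α) : gp a b ≤ 2 * norm a := by
  obtain ⟨k, hk⟩ := gp_even a b
  have := ((gp_le_iff a b k).1 hk.ge).1
  omega

lemma gp_inv_self_lt {e : FreeGroup α} (he : e ≠ 1) : gp e⁻¹ e < norm e := by
  by_contra hcon
  push Not at hcon
  obtain ⟨k, hk⟩ := gp_even e⁻¹ e
  obtain ⟨h1, h2, h3⟩ := (gp_le_iff e⁻¹ e k).1 hk.ge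
  have hpos : norm e ≠ 0 := by rwa [ne_eq, FreeGroup.norm_eq_zero]
  have hr : IsReduced e.toWord := isReduced_toWord
  have hlen : norm e = e.toWord.length := rfl
  rw [toWord_inv] at h3
  have key : ∀ i, i < k → (hi : i < e.toWord.length) →
      ((e.toWord[e.toWord.length - 1 - i]'(by omega)).1 = e.toWord[i].1 ∧
      (!(e.toWord[e.toWord.length - 1 - i]'(by omega)).2) = e.toWord[i].2) := by
    intro i hik hi
    have h4 := congrArg (fun l => l[i]?) h3
    simp only [List.getElem?_take, hik, if_true] at h4
    rw [List.getElem?_eq_getElem (by simpa using hi), List.getElem?_eq_getElem hi] at h4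
    simp only [invRev, List.getElem_reverse, List.getElem_map, List.length_map, Option.some.injEq]
      at h4
    rw [← h4]
    simp
  rcases Nat.even_or_odd' (norm e) with ⟨m, hm | hm⟩
  · have h5 := key (m - 1) (by omega) (by omega)
    have h6 := List.isChain_iff_getElem.1 hr (m - 1) (by omega)
    have h7 : e.toWord.length - 1 - (m - 1) = m - 1 + 1 := by omega
    simp only [h7] at h5
    have h8 := h6 h5.1.symm
    rw [h8] at h5
    simp at h5
  · have h5 := key m (by omega) (by omega)
    have h7 : e.toWord.length - 1 - m = m := by omega
    simp only [h7] at h5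
    simp at h5

end nielsen

section nielsen2
open FreeGroup

lemma toWord_mk_of_norm {α : Type*} [DecidableEq α] {l : List (α × Bool)}
    (h : (mk l).norm = l.length) : (mk l).toWord = l := by
  have h1 : (mk l).toWord.Sublist l := by
    rw [toWord_mk]; exact (reduce.red (L := l)).sublist
  exact h1.eq_of_length h

variable {n : ℕ}

/-- Numerical weight of a word. -/
def wt (l : List (Fin n × Bool)) : ℕ :=
  Nat.ofDigits (2 * n + 2) (l.map (fun x => 2 * x.1.val + x.2.toNat))

lemma wt_inj {l m : List (Fin n × Bool)} (hl : l.length = m.length) (h : wt l = wt m) : l = m := by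
  have h1 : ∀ x : Fin n × Bool, 2 * x.1.val + x.2.toNat < 2 * n + 2 := by
    intro x
    have := x.1.2
    have := Bool.toNat_le x.2
    omega
  have h2 := Nat.ofDigits_inj_of_len_eq (by omega) (by simpa using hl) 
    (by intro y hy; obtain ⟨x, _, rfl⟩ := List.mem_map.1 hy; exact h1 x)
    (by intro y hy; obtain ⟨x, _, rfl⟩ := List.mem_map.1 hy; exact h1 x) h
  refine List.map_injective_iff.2 ?_ h2
  rintro ⟨a, x⟩ ⟨b, y⟩ hab
  simp only at hab
  cases x <;> cases y <;> simp at hab ⊢ <;> omega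

lemma wt_append (l m : List (Fin n × Bool)) :
    wt (l ++ m) = wt l + (2 * n + 2) ^ l.length * wt m := by
  simp [wt, Nat.ofDigits_append]

/-- weight of the first half of the word -/
def hwt (g : FreeGroup (Fin n)) : ℕ := wt (g.toWord.take ((g.norm + 1) / 2))

/-- Nielsen measure. -/
def ms (g : FreeGroup (Fin n)) : ℕ ×ₗ ℕ := toLex (g.norm, hwt g + hwt g⁻¹)

lemma ms_inv (g : FreeGroup (Fin n)) : ms g⁻¹ = ms g := by
  simp [ms, norm_inv_eq, add_comm]

lemma ms_lt_of_norm {g h : FreeGroup (Fin n)} (H : g.norm < h.norm) : ms g < ms h := by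
  rw [ms, ms, Prod.Lex.toLex_lt_toLex]
  exact Or.inl H

lemma ms_tie {b c : FreeGroup (Fin n)} {p q c' : List (Fin n × Bool)}
    (hb : b.toWord = p ++ invRev q) (hpq : p.length = q.length) (hc : c.toWord = q ++ c')
    (hlen : 2 * q.length ≤ c.norm) (hnorm : (b * c).norm = c.norm) (hf : wt p < wt q) :
    ms (b * c) < ms c := by
  have hcn : c.norm = q.length + c'.length := by rw [FreeGroup.norm, hc, List.length_append]
  have h1 : b * c = mk (p ++ c') := by
    rw [← mk_toWord (x := b), ← mk_toWord (x := c), hb, hc, ← mul_mk, ← mul_mk, ← mul_mk, ← inv_mk]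
    group
  have h2 : (b * c).toWord = p ++ c' := by
    rw [h1]
    apply toWord_mk_of_norm
    rw [← h1, hnorm, hcn, List.length_append, hpq]
  have h3 : hwt (b * c) < hwt c := by
    have hp : p.take ((c.norm + 1) / 2) = p := List.take_of_length_le (by omega)
    have hq : q.take ((c.norm + 1) / 2) = q := List.take_of_length_le (by omega)
    rw [hwt, hwt, hnorm, h2, hc, List.take_append, List.take_append, wt_append, wt_append,
      hp, hq, hpq]
    omega
  have h4 : hwt (b * c)⁻¹ = hwt c⁻¹ := by
    rw [hwt, hwt, norm_inv_eq, norm_inv_eq, hnorm, toWord_inv, toWord_inv, h2, hc, invRev_append,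
      invRev_append, List.take_append_of_le_length, List.take_append_of_le_length]
    · simp; omega
    · simp; omega
  rw [ms, ms, Prod.Lex.toLex_lt_toLex]
  right
  simp only
  exact ⟨hnorm, by omega⟩

/-- signed element of a tuple -/
def sg (u : Fin n → FreeGroup (Fin n)) (x : Fin n × Bool) : FreeGroup (Fin n) :=
  if x.2 then u x.1 else (u x.1)⁻¹

lemma sg_not (u : Fin n → FreeGroup (Fin n)) (x : Fin n × Bool) :
    sg u (x.1, !x.2) = (sg u x)⁻¹ := by
  rcases x with ⟨i, b⟩
  cases b <;> simp [sg]

lemma nielsen_n1 {u : Fin n → FreeGroup (Fin n)} (h1 : ∀ i, u i ≠ 1)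
    (hm : ∀ x y : Fin n × Bool, x.1 ≠ y.1 → ¬ ms (sg u x * sg u y) < ms (sg u y))
    {x y : Fin n × Bool} (hxy : x.1 = y.1 → x.2 = y.2) :
    gp (sg u x)⁻¹ (sg u y) ≤ (sg u x).norm ∧ gp (sg u x)⁻¹ (sg u y) ≤ (sg u y).norm := by
  by_cases h : x.1 = y.1
  · have : x = y := Prod.ext h (hxy h)
    subst this
    have : sg u x ≠ 1 := by
      unfold sg; split_ifs <;> simp [h1]
    have := gp_inv_self_lt this
    omega
  · have a1 := hm x y h
    have a2 := hm (y.1, !y.2) (x.1, !x.2) (fun h' => h h'.symm)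
    rw [sg_not, sg_not, ← mul_inv_rev, ms_inv, ms_inv] at a2
    have b1 : ¬ (sg u x * sg u y).norm < (sg u y).norm := fun H => a1 (ms_lt_of_norm H)
    have b2 : ¬ (sg u x * sg u y).norm < (sg u x).norm := fun H => a2 (ms_lt_of_norm H)
    have hg : gp (sg u x)⁻¹ (sg u y)
        = (sg u x).norm + (sg u y).norm - (sg u x * sg u y).norm := by
      rw [gp, norm_inv_eq, inv_inv]
    omega

lemma nielsen_n2 {u : Fin n → FreeGroup (Fin n)} (h1 : ∀ i, u i ≠ 1)
    (hm : ∀ x y : Fin n × Bool, x.1 ≠ y.1 → ¬ ms (sg u x * sg u y) < ms (sg u y))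
    {x y z : Fin n × Bool} (hxy : x.1 = y.1 → x.2 = y.2) (hyz : y.1 = z.1 → y.2 = z.2) :
    gp (sg u x)⁻¹ (sg u y) + gp (sg u y)⁻¹ (sg u z) < 2 * (sg u y).norm := by
  obtain ⟨c1, c2⟩ := nielsen_n1 h1 hm hxy
  obtain ⟨d1, d2⟩ := nielsen_n1 h1 hm hyz
  by_contra hcon
  have e1 : gp (sg u x)⁻¹ (sg u y) = (sg u y).norm := by omega
  have e2 : gp (sg u y)⁻¹ (sg u z) = (sg u y).norm := by omega
  have hne : ∀ x, sg u x ≠ 1 := by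
    intro x
    unfold sg; split_ifs <;> simp [h1]
  have hxy' : x.1 ≠ y.1 := by
    intro h
    have : x = y := Prod.ext h (hxy h)
    subst this
    have := gp_inv_self_lt (hne x)
    omega
  have hyz' : y.1 ≠ z.1 := by
    intro h
    have : y = z := Prod.ext h (hyz h)
    subst this
    have := gp_inv_self_lt (hne y)
    omega
  have m1 := hm y z hyz'
  have m2 := hm (y.1, !y.2) (x.1, !x.2) (fun h' => hxy' h'.symm)
  rw [sg_not, sg_not] at m2
  generalize sg u x = a at *
  generalize hb : sg u y = b at *
  generalize sg u z = c at *
  obtain ⟨h, hh⟩ := gp_even b⁻¹ c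
  have hbn : b.norm = 2 * h := by omega
  obtain ⟨-, -, f1⟩ := (gp_le_iff a⁻¹ b h).1 (by omega)
  obtain ⟨-, -, f2⟩ := (gp_le_iff b⁻¹ c h).1 (by omega)
  set p := b.toWord.take h with hp
  set q := b⁻¹.toWord.take h with hq
  have hlp : p.length = h := by
    rw [hp, List.length_take]; change min h b.norm = h; omega
  have hlq : q.length = h := by
    rw [hq, List.length_take]; change min h b⁻¹.norm = h; rw [norm_inv_eq]; omega
  have hbw : b.toWord = p ++ invRev q := by
    have : b.toWord = invRev b⁻¹.toWord := by rw [toWord_inv, invRev_invRev]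
    have h3 : invRev q = b.toWord.drop h := by
      have hd : (b.toWord.drop h).length = h := by
        rw [List.length_drop]; change b.norm - h = h; omega
      have h4 : b⁻¹.toWord = invRev (b.toWord.drop h) ++ invRev (b.toWord.take h) := by
        rw [toWord_inv, ← invRev_append, List.take_append_drop]
      rw [hq, h4, List.take_append_of_le_length (by simp [hd]),
        List.take_of_length_le (by simp [hd]), invRev_invRev]
    rw [h3, hp, List.take_append_drop]
  have hbiw : b⁻¹.toWord = q ++ invRev p := by
    rw [toWord_inv, hbw, invRev_append, invRev_invRev]
  have hcw : c.toWord = q ++ c.toWord.drop h := by rw [f2, List.take_append_drop]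
  have haw : a⁻¹.toWord = p ++ a⁻¹.toWord.drop h := by rw [← f1, List.take_append_drop]
  have hnc : (b * c).norm = c.norm := by
    rw [gp, norm_inv_eq, inv_inv] at hh; omega
  have hna : (b⁻¹ * a⁻¹).norm = a⁻¹.norm := by
    rw [gp, norm_inv_eq, inv_inv] at e1
    rw [← mul_inv_rev, norm_inv_eq, norm_inv_eq]; omega
  rcases lt_trichotomy (wt p) (wt q) with hlt | heq | hlt
  · exact m1 (ms_tie hbw (by omega) hcw (by omega) hnc hlt)
  · have := wt_inj (by omega) heq
    have hb1 : b = 1 := by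
      rw [← mk_toWord (x := b), hbw, this, ← mul_mk, ← inv_mk, mul_inv_cancel]
    exact hne y (hb.trans hb1)
  · refine m2 (ms_tie hbiw (by omega) haw ?_ hna hlt)
    rw [norm_inv_eq]; omega

lemma nielsen_prod {u : Fin n → FreeGroup (Fin n)} (h1 : ∀ i, u i ≠ 1)
    (hm : ∀ x y : Fin n × Bool, x.1 ≠ y.1 → ¬ ms (sg u x * sg u y) < ms (sg u y))
    (l : List (Fin n × Bool)) : ∀ x, FreeGroup.IsReduced (x :: l) →
    1 ≤ ((x :: l).map (sg u)).prod.norm ∧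
    ((∀ y, (y.1 = x.1 → y.2 = x.2) →
      gp (sg u y)⁻¹ (sg u x) < gp ((x :: l).map (sg u)).prod (sg u x))) ∧
    (((x :: l).map (sg u)).prod.norm = 1 → l = [] ∧ (sg u x).norm = 1) := by
  have hne : ∀ x, (sg u x).norm ≠ 0 := by
    intro x
    rw [ne_eq, FreeGroup.norm_eq_zero]
    unfold sg; split_ifs <;> simp [h1]
  induction l with
  | nil =>
    intro x _
    refine ⟨?_, ?_, ?_⟩
    · have := hne x; simp; omega
    · intro y hy
      have := nielsen_n1 h1 hm hy
      have hx := hne x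
      simp only [List.map_cons, List.map_nil, List.prod_cons, List.prod_nil, mul_one]
      have : gp (sg u x) (sg u x) = 2 * (sg u x).norm := by simp [gp]; ring
      omega
    · simp
  | cons z l ih =>
    intro x hx
    rw [FreeGroup.isReduced_cons_cons] at hx
    obtain ⟨i1, i2, i3⟩ := ih z hx.2
    have hxz := i2 x hx.1
    have n1 := nielsen_n1 h1 hm hx.1
    have hcons : ((x :: z :: l).map (sg u)).prod = sg u x * ((z :: l).map (sg u)).prod := by simp
    rw [hcons]
    generalize ((z :: l).map (sg u)).prod = v at *
    have u1 := gp_ultra (sg u x)⁻¹ v (sg u z)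
    have u2 := gp_ultra (sg u x)⁻¹ (sg u z) v
    have u3 := gp_comm v (sg u z)
    have hgv : gp (sg u x)⁻¹ v = gp (sg u x)⁻¹ (sg u z) := by omega
    have hgv2 := hgv
    rw [gp, norm_inv_eq, inv_inv] at hgv2
    have hgx : gp (sg u x * v) (sg u x) = (sg u x * v).norm + (sg u x).norm - v.norm := by
      rw [gp, mul_inv_rev]; simp [norm_inv_eq]
    refine ⟨by omega, ?_, ?_⟩
    · intro y hy
      have n2 := nielsen_n2 h1 hm hy hx.1
      omega
    · intro h
      exfalso
      have hv : v.norm = 1 := by omega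
      have hz := i3 hv
      have hx0 := hne x
      obtain ⟨k, hk⟩ := gp_even (sg u x)⁻¹ (sg u z)
      omega

end nielsen2

section fg
open FreeGroup hiding map_mul map_one map_inv
variable {n : ℕ}

/-- the homomorphism `x_j ↦ x_i^± x_j` -/
def nlHom (i j : Fin n) (b : Bool) : FreeGroup (Fin n) →* FreeGroup (Fin n) :=
  lift (fun k => if k = j then sg of (i, b) * of k else of k)

/-- the homomorphism `x_j ↦ x_j x_i^±` -/
def nrHom (i j : Fin n) (b : Bool) : FreeGroup (Fin n) →* FreeGroup (Fin n) :=
  lift (fun k => if k = j then of k * sg of (i, b) else of k)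

lemma nlHom_of (i j k : Fin n) (b : Bool) :
    nlHom i j b (of k) = if k = j then sg of (i, b) * of k else of k := by
  simp [nlHom]

lemma nrHom_of (i j k : Fin n) (b : Bool) :
    nrHom i j b (of k) = if k = j then of k * sg of (i, b) else of k := by
  simp [nrHom]

lemma map_sg (f : FreeGroup (Fin n) →* FreeGroup (Fin n)) (x : Fin n × Bool) :
    f (sg of x) = sg (fun k => f (of k)) x := by
  unfold sg; split_ifs <;> simp

lemma nlHom_comp {i j : Fin n} (h : i ≠ j) (b : Bool) :
    (nlHom i j b).comp (nlHom i j !b) = MonoidHom.id _ := by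
  ext k
  simp only [MonoidHom.comp_apply, nlHom_of, MonoidHom.id_apply]
  split_ifs with hk
  · rw [map_mul, map_sg, sg_not _ (i, b), nlHom_of, if_pos hk]
    have : sg (fun k => nlHom i j b (of k)) (i, b) = sg of (i, b) := by
      unfold sg; simp [nlHom_of, h]
    rw [this, inv_mul_cancel_left]
  · rw [nlHom_of, if_neg hk]

lemma nrHom_comp {i j : Fin n} (h : i ≠ j) (b : Bool) :
    (nrHom i j b).comp (nrHom i j !b) = MonoidHom.id _ := by
  ext k
  simp only [MonoidHom.comp_apply, nrHom_of, MonoidHom.id_apply]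
  split_ifs with hk
  · rw [map_mul, map_sg, sg_not _ (i, b), nrHom_of, if_pos hk]
    have : sg (fun k => nrHom i j b (of k)) (i, b) = sg of (i, b) := by
      unfold sg; simp [nrHom_of, h]
    rw [this, mul_inv_cancel_right]
  · rw [nrHom_of, if_neg hk]

/-- left Nielsen automorphism -/
def nl (x : Fin n × Bool) (j : Fin n) : MulAut (FreeGroup (Fin n)) :=
  if h : x.1 ≠ j then
    MonoidHom.toMulEquiv (nlHom x.1 j x.2) (nlHom x.1 j !x.2)
      (by simpa using nlHom_comp h (!x.2)) (nlHom_comp h x.2)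
  else 1

/-- right Nielsen automorphism -/
def nr (x : Fin n × Bool) (j : Fin n) : MulAut (FreeGroup (Fin n)) :=
  if h : x.1 ≠ j then
    MonoidHom.toMulEquiv (nrHom x.1 j x.2) (nrHom x.1 j !x.2)
      (by simpa using nrHom_comp h (!x.2)) (nrHom_comp h x.2)
  else 1

lemma nl_of {x : Fin n × Bool} {j : Fin n} (h : x.1 ≠ j) (k : Fin n) :
    nl x j (of k) = if k = j then sg of x * of k else of k := by
  rw [nl, dif_pos h]
  exact nlHom_of _ _ _ _

lemma nr_of {x : Fin n × Bool} {j : Fin n} (h : x.1 ≠ j) (k : Fin n) :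
    nr x j (of k) = if k = j then of k * sg of x else of k := by
  rw [nr, dif_pos h]
  exact nrHom_of _ _ _ _

/-- signed permutations -/
def sperm (n : ℕ) : Set (MulAut (FreeGroup (Fin n))) :=
  {φ | ∀ k, φ (of k) ∈ Set.range (sg (n := n) of)}

lemma mulAut_ext {φ ψ : MulAut (FreeGroup (Fin n))} (h : ∀ k, φ (of k) = ψ (of k)) : φ = ψ := by
  have : φ.toMonoidHom = ψ.toMonoidHom := by ext k; exact h k
  ext x
  exact DFunLike.congr_fun this x

lemma sperm_finite (n : ℕ) : (sperm n).Finite := by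
  have h1 : (Set.pi Set.univ (fun _ : Fin n => Set.range (sg (n := n) of))).Finite :=
    Set.Finite.pi' (fun _ => Set.finite_range _) |>.subset (fun f hf k => hf k (Set.mem_univ k))
  refine Set.Finite.of_injOn (f := fun φ : MulAut (FreeGroup (Fin n)) => fun k => φ (of k))
    (t := Set.pi Set.univ (fun _ : Fin n => Set.range (sg (n := n) of))) ?_ ?_ h1
  · intro φ hφ k _
    exact hφ k
  · intro φ _ ψ _ h
    exact mulAut_ext (fun k => congrFun h k)

/-- the generating set -/
def agen (n : ℕ) : Set (MulAut (FreeGroup (Fin n))) :=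
  Set.range (fun p : (Fin n × Bool) × Fin n => nl p.1 p.2) ∪
  Set.range (fun p : (Fin n × Bool) × Fin n => nr p.1 p.2) ∪ sperm n

lemma agen_finite (n : ℕ) : (agen n).Finite :=
  ((Set.finite_range _).union (Set.finite_range _)).union (sperm_finite n)

/-- total measure -/
def tms (φ : MulAut (FreeGroup (Fin n))) : ℕ ×ₗ ℕ := ∑ k, ms (φ (of k))

lemma tms_lt {φ ψ : MulAut (FreeGroup (Fin n))} {j : Fin n}
    (hj : ms (φ (of j)) < ms (ψ (of j))) (h : ∀ k, k ≠ j → φ (of k) = ψ (of k)) :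
    tms φ < tms ψ := by
  unfold tms
  apply Finset.sum_lt_sum
  · intro k _
    by_cases hk : k = j
    · subst hk; exact hj.le
    · rw [h k hk]
  · exact ⟨j, Finset.mem_univ _, hj⟩

lemma sg_map' (φ : MulAut (FreeGroup (Fin n))) (x : Fin n × Bool) :
    φ (sg of x) = sg (fun k => φ (of k)) x := map_sg φ.toMonoidHom x

lemma prod_map_sg (φ : MulAut (FreeGroup (Fin n))) (l : List (Fin n × Bool)) :
    (l.map (sg (fun k => φ (of k)))).prod = φ (mk l) := by
  induction l with
  | nil => simp [← one_eq_mk]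
  | cons x l ih =>
    have : mk (x :: l) = sg of x * mk l := by
      rw [show x :: l = [x] ++ l from rfl, ← mul_mk]
      congr 1
      rcases x with ⟨i, b⟩
      cases b <;> simp [sg, of, invRev]
    rw [this, map_mul, ← ih, List.map_cons, List.prod_cons, sg_map']

lemma agen_top (n : ℕ) (φ : MulAut (FreeGroup (Fin n))) : φ ∈ Subgroup.closure (agen n) := by
  induction hN : tms φ using WellFoundedLT.induction generalizing φ with
  | ind N ih =>
  subst hN
  by_cases hm : ∀ x y : Fin n × Bool, x.1 ≠ y.1 →
    ¬ ms (sg (fun k => φ (of k)) x * sg (fun k => φ (of k)) y) < ms (sg (fun k => φ (of k)) y)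
  · apply Subgroup.subset_closure
    right
    have h1 : ∀ k, φ (of k) ≠ 1 := by
      intro k hk
      rw [← map_one φ] at hk
      exact of_ne_one k (φ.injective hk)
    have key : ∀ k, ∃ y : Fin n × Bool, sg (fun k => φ (of k)) y = of k := by
      intro k
      have e : φ (mk (φ.symm (of k)).toWord) = of k := by rw [mk_toWord]; simp
      rw [← prod_map_sg] at e
      rcases hl : (φ.symm (of k)).toWord with _ | ⟨x, l⟩
      · rw [hl] at e; exact absurd (by simpa using e.symm) (of_ne_one k)
      · have hr : FreeGroup.IsReduced (x :: l) := by rw [← hl]; exact isReduced_toWord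
        have h3 := (nielsen_prod h1 hm l x hr).2.2
        rw [hl] at e
        rw [e] at h3
        obtain ⟨rfl, -⟩ := h3 (by simp)
        exact ⟨x, by simpa using e⟩
    choose y hy using key
    have hinj : Function.Injective (fun k => (y k).1) := by
      intro k l hkl
      simp only at hkl
      have a := hy k
      have b := hy l
      unfold sg at a b
      rw [hkl] at a
      have hab : of k = of l ∨ of k = (of l)⁻¹ := by
        rw [← a, ← b]; split_ifs <;> simp
      rcases hab with h | h
      · exact of_injective h
      · exfalso
        have := congrArg (fun g => (lift (fun _ : Fin n => Multiplicative.ofAdd (1:ℤ))) g) h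
        simp only [map_inv, lift_apply_of] at this
        have h2 : (1:ℤ) = -1 := this
        omega
    have hsurj := Finite.surjective_of_injective hinj
    intro k
    obtain ⟨m, rfl⟩ := hsurj k
    refine ⟨(m, (y m).2), ?_⟩
    have := hy m
    unfold sg at this ⊢
    simp only at this ⊢
    split_ifs with h
    · rw [if_pos h] at this; exact this.symm
    · rw [if_neg h] at this; rw [← this, inv_inv]
  · push Not at hm
    obtain ⟨x, ⟨j, c⟩, hxy, hlt⟩ := hm
    cases c with
    | true =>
      have hmem : nl x j ∈ Subgroup.closure (agen n) :=
        Subgroup.subset_closure (Or.inl (Or.inl ⟨(x, j), rfl⟩))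
      have := ih (tms (φ * nl x j)) (tms_lt (j := j) (by
        rw [MulAut.mul_apply, nl_of hxy, if_pos rfl, map_mul, sg_map']
        exact hlt) (fun k hk => by rw [MulAut.mul_apply, nl_of hxy, if_neg hk])) _ rfl
      exact (Subgroup.mul_mem_cancel_right _ hmem).1 this
    | false =>
      have hxy' : (x.1, !x.2).1 ≠ j := hxy
      have hmem : nr (x.1, !x.2) j ∈ Subgroup.closure (agen n) :=
        Subgroup.subset_closure (Or.inl (Or.inr ⟨((x.1, !x.2), j), rfl⟩))
      have := ih (tms (φ * nr (x.1, !x.2) j)) (tms_lt (j := j) (by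
        rw [MulAut.mul_apply, nr_of hxy', if_pos rfl, map_mul, sg_map', sg_not, ← ms_inv,
          mul_inv_rev, inv_inv]
        simpa [sg, ms_inv] using hlt)
        (fun k hk => by rw [MulAut.mul_apply, nr_of hxy', if_neg hk])) _ rfl
      exact (Subgroup.mul_mem_cancel_right _ hmem).1 this

lemma out_fg (n : ℕ) : Group.FG (MulAut (FreeGroup (Fin n)) ⧸
      (MulAut.conj : FreeGroup (Fin n) →* MulAut (FreeGroup (Fin n))).range) := by
  have : Group.FG (MulAut (FreeGroup (Fin n))) := by
    rw [Group.fg_iff]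
    exact ⟨agen n, (Subgroup.eq_top_iff' _).2 (agen_top n), agen_finite n⟩
  exact QuotientGroup.fg _

end fg

section rep
open Matrix
variable {n : ℕ}

/-- abelianization exponent vector -/
def expo (n : ℕ) : FreeGroup (Fin n) →* Multiplicative (Fin n → ℤ) :=
  FreeGroup.lift (fun k => Multiplicative.ofAdd (Pi.single k 1))

/-- matrix of an endomorphism -/
def autMat (f : FreeGroup (Fin n) →* FreeGroup (Fin n)) : Matrix (Fin n) (Fin n) ℤ :=
  Matrix.of (fun i j => (expo n (f (FreeGroup.of j))).toAdd i)

lemma expo_apply (f : FreeGroup (Fin n) →* FreeGroup (Fin n)) (w : FreeGroup (Fin n)) :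
    (expo n (f w)).toAdd = autMat f *ᵥ (expo n w).toAdd := by
  have : (expo n).comp f =
      (AddMonoidHom.toMultiplicative (Matrix.mulVecLin (autMat f)).toAddMonoidHom).comp
        (expo n) := by
    ext k
    simp [expo, autMat]
  have h := DFunLike.congr_fun this w
  exact congrArg Multiplicative.toAdd h

lemma autMat_comp (f g : FreeGroup (Fin n) →* FreeGroup (Fin n)) :
    autMat (f.comp g) = autMat f * autMat g := by
  ext i j
  have := congrFun (expo_apply f (g (FreeGroup.of j))) i
  simp only [autMat, Matrix.of_apply, MonoidHom.comp_apply]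
  rw [this]
  rfl

lemma autMat_id : autMat (MonoidHom.id (FreeGroup (Fin n))) = 1 := by
  ext i j
  simp [autMat, expo, Matrix.one_apply, Pi.single_apply]

/-- action of automorphisms on the abelianization -/
def autRep (n : ℕ) : MulAut (FreeGroup (Fin n)) →* Matrix (Fin n) (Fin n) ℤ where
  toFun φ := autMat φ.toMonoidHom
  map_one' := autMat_id
  map_mul' φ ψ := autMat_comp φ.toMonoidHom ψ.toMonoidHom

/-- outer automorphism group -/
abbrev OutF (n : ℕ) := MulAut (FreeGroup (Fin n)) ⧸
      (MulAut.conj : FreeGroup (Fin n) →* MulAut (FreeGroup (Fin n))).range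

/-- action of outer automorphisms on the abelianization -/
def outRep (n : ℕ) : OutF n →* Matrix (Fin n) (Fin n) ℤ :=
  QuotientGroup.lift _ (autRep n) (by
    rintro _ ⟨g, rfl⟩
    rw [MonoidHom.mem_ker, ← autMat_id]
    ext i j
    simp [autRep, autMat])

/-- reduction -/
def outRepMod (n p : ℕ) : OutF n →* Matrix (Fin n) (Fin n) (ZMod p) :=
  ((Int.castRingHom (ZMod p)).mapMatrix.toMonoidHom).comp (outRep n)

lemma exists_transvection {i j : Fin n} (h : i ≠ j) :
    ∃ g : OutF n, outRep n g = transvection i j 1 := by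
  refine ⟨QuotientGroup.mk (nl (i, true) j), ?_⟩
  change autMat (nl (i, true) j).toMonoidHom = _
  ext a b
  have : (nl (i, true) j).toMonoidHom (FreeGroup.of b) = nl (i, true) j (FreeGroup.of b) := rfl
  rw [autMat, Matrix.of_apply, this, nl_of h]
  split_ifs with hb
  · subst hb
    simp [sg, expo, transvection, Matrix.one_apply, Pi.single_apply, Matrix.single_apply, eq_comm,
      add_comm]
  · simp [expo, transvection, Matrix.one_apply, Pi.single_apply, Matrix.single_apply, Ne.symm hb]

lemma transvection_pow {R : Type*} [CommRing R] {i j : Fin n} (h : i ≠ j) (c : R) (k : ℕ) :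
    (transvection i j c) ^ k = transvection i j (k * c) := by
  induction k with
  | zero => simp
  | succ k ih =>
    rw [pow_succ, ih, transvection_mul_transvection_same _ _ h]; push_cast; ring_nf

lemma mem_transvection (p : ℕ) [Fact p.Prime] {i j : Fin n} (h : i ≠ j) (c : ZMod p) :
    transvection i j c ∈ MonoidHom.mrange (outRepMod n p) := by
  obtain ⟨g, hg⟩ := exists_transvection h
  have h1 : outRepMod n p g = transvection i j 1 := by
    change (Int.castRingHom (ZMod p)).mapMatrix (outRep n g) = _
    rw [hg, transvection, map_add, map_one, transvection]
    congr 1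
    ext a b
    simp [Matrix.single_apply]
  refine ⟨g ^ c.val, ?_⟩
  rw [map_pow, h1, transvection_pow h]
  simp

lemma diag2n_decomp {F : Type*} [Field F] {i j : Fin n} (h : i ≠ j) (a : F) (ha : a ≠ 0) :
    (diagonal (fun k ↦ if k = i then a else if k = j then a⁻¹ else 1) : Matrix _ _ F) =
    transvection i j a * transvection j i (-a⁻¹) * transvection i j a *
      transvection i j (-1) * transvection j i 1 * transvection i j (-1) := by
  have h1 : (diagonal (fun k ↦ if k = i then a else if k = j then a⁻¹ else 1) : Matrix _ _ F) =
      1 + single i i (a - 1) + single j j (a⁻¹ - 1) := by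
    ext x y
    simp only [diagonal_apply, Matrix.add_apply, one_apply, single_apply]
    have h' := h.symm
    by_cases hxy : x = y
    · subst hxy
      by_cases hx : x = i
      · subst hx; simp [h']
      · by_cases hx' : x = j
        · subst hx'; simp [h, h']
        · simp [hx, hx', Ne.symm hx, Ne.symm hx']
    · have e1 : ¬ (i = x ∧ i = y) := fun e => hxy (e.1.symm.trans e.2)
      have e2 : ¬ (j = x ∧ j = y) := fun e => hxy (e.1.symm.trans e.2)
      simp [hxy, e1, e2]
  rw [h1]
  have hs : ∀ (x y : Fin n) (c : F), single x y c = c • single x y (1:F) := by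
    intro x y c; simp
  have m1 : single i j (1:F) * single j i (1:F) = single i i (1:F) := by simp
  have m2 : single j i (1:F) * single i j (1:F) = single j j (1:F) := by simp
  have m3 : single i i (1:F) * single i j (1:F) = single i j (1:F) := by simp
  have m4 : single j j (1:F) * single j i (1:F) = single j i (1:F) := by simp
  have m5 : single i j (1:F) * single i j (1:F) = 0 := by
    rw [single_mul_single_of_ne]; exact h.symm
  have m6 : single j i (1:F) * single j i (1:F) = 0 := by
    rw [single_mul_single_of_ne]; exact h
  have m7 : single i i (1:F) * single j i (1:F) = 0 := by
    rw [single_mul_single_of_ne]; exact h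
  have m8 : single j j (1:F) * single i j (1:F) = 0 := by
    rw [single_mul_single_of_ne]; exact h.symm
  simp only [transvection, hs _ _ (a - 1), hs _ _ (a⁻¹ - 1), hs _ _ a, hs _ _ (-a⁻¹), hs _ _ (-1)]
  simp only [mul_add, add_mul, one_mul, mul_one, smul_mul_assoc, mul_smul_comm, m1, m2, m3, m4, m5,
    m6, m7, m8, zero_mul, smul_add, smul_zero, smul_smul, add_zero, zero_add, neg_smul, mul_neg, neg_mul,
    mul_inv_cancel₀ ha, inv_mul_cancel₀ ha, sub_smul, one_smul, smul_neg]
  abel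

lemma mem_SL (hn : 2 ≤ n) (p : ℕ) [Fact p.Prime] (M : Matrix (Fin n) (Fin n) (ZMod p))
    (hM : M.det = 1) : M ∈ MonoidHom.mrange (outRepMod n p) := by
  have : Nontrivial (Fin n) := Fin.nontrivial_iff_two_le.2 hn
  refine SpecialLinearGroup.diagonal_transvection_induction'
    (fun A => A.1 ∈ MonoidHom.mrange (outRepMod n p)) ⟨M, hM⟩ ?_ ?_ ?_
  · intro i j hij c hc
    rw [SpecialLinearGroup.diag2n_coe, diag2n_decomp hij c hc]
    exact mul_mem (mul_mem (mul_mem (mul_mem (mul_mem (mem_transvection p hij _)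
      (mem_transvection p hij.symm _)) (mem_transvection p hij _)) (mem_transvection p hij _))
      (mem_transvection p hij.symm _)) (mem_transvection p hij _)
  · intro i j hij a
    exact mem_transvection p hij a
  · intro A B hA hB
    exact mul_mem hA hB

lemma outRep_det (g : OutF n) : (outRep n g).det = 1 ∨ (outRep n g).det = -1 := by
  have h : outRep n g * outRep n g⁻¹ = 1 := by rw [← map_mul]; simp
  have h2 := congrArg Matrix.det h
  rw [det_mul, det_one] at h2
  exact Int.isUnit_iff.1 (IsUnit.of_mul_eq_one _ h2)

end rep

section pb
open Matrix
variable {Ω : Type*}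

/-- polynomially bounded families -/
def PB (Λ : Ω → ℝ) {E : Type*} [Norm E] (f : Ω → E) : Prop := ∃ c : ℕ, ∀ ω, ‖f ω‖ ≤ Λ ω ^ c

variable {Λ : Ω → ℝ}

lemma PB.mono {E E' : Type*} [Norm E] [Norm E'] {f : Ω → E} {g : Ω → E'} (hg : PB Λ g)
    (h : ∀ ω, ‖f ω‖ ≤ ‖g ω‖) : PB Λ f := by
  obtain ⟨c, hc⟩ := hg
  exact ⟨c, fun ω => (h ω).trans (hc ω)⟩

lemma PB.of_le {E : Type*} [Norm E] {f : Ω → E} {g : Ω → ℝ} (hg : PB Λ g)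
    (h : ∀ ω, ‖f ω‖ ≤ g ω) : PB Λ f :=
  hg.mono (fun ω => (h ω).trans (le_abs_self _))

lemma PB.norm {E : Type*} [SeminormedAddCommGroup E] {f : Ω → E} (hf : PB Λ f) :
    PB Λ (fun ω => ‖f ω‖) :=
  hf.mono (fun ω => by simp)

lemma PB.self (hΛ : ∀ ω, 2 ≤ Λ ω) : PB Λ Λ :=
  ⟨1, fun ω => by rw [pow_one, Real.norm_of_nonneg (by linarith [hΛ ω])]⟩

lemma PB.const (hΛ : ∀ ω, 2 ≤ Λ ω) {E : Type*} [Norm E] (x : E) : PB Λ (fun _ => x) := by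
  obtain ⟨c, hc⟩ := pow_unbounded_of_one_lt ‖x‖ (one_lt_two)
  exact ⟨c, fun ω => hc.le.trans (by gcongr; exact hΛ ω)⟩

lemma PB.add (hΛ : ∀ ω, 2 ≤ Λ ω) {E : Type*} [SeminormedAddCommGroup E] {f g : Ω → E} (hf : PB Λ f)
    (hg : PB Λ g) : PB Λ (fun ω => f ω + g ω) := by
  obtain ⟨c, hc⟩ := hf
  obtain ⟨d, hd⟩ := hg
  refine ⟨c + d + 1, fun ω => (norm_add_le _ _).trans ?_⟩
  have h := hΛ ω
  have h1 : Λ ω ^ c ≤ Λ ω ^ (c + d) := pow_le_pow_right₀ (by linarith) (by omega)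
  have h2 : Λ ω ^ d ≤ Λ ω ^ (c + d) := pow_le_pow_right₀ (by linarith) (by omega)
  have h3 : 0 ≤ Λ ω ^ (c + d) := by positivity
  calc _ ≤ Λ ω ^ c + Λ ω ^ d := add_le_add (hc ω) (hd ω)
    _ ≤ Λ ω ^ (c + d) * 2 := by linarith
    _ ≤ Λ ω ^ (c + d + 1) := by rw [pow_succ]; gcongr

lemma PB.mul (hΛ : ∀ ω, 2 ≤ Λ ω) {E : Type*} [SeminormedRing E] {f g : Ω → E} (hf : PB Λ f)
    (hg : PB Λ g) : PB Λ (fun ω => f ω * g ω) := by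
  obtain ⟨c, hc⟩ := hf
  obtain ⟨d, hd⟩ := hg
  refine ⟨c + d, fun ω => (norm_mul_le _ _).trans ?_⟩
  have h := hΛ ω
  rw [pow_add]
  exact mul_le_mul (hc ω) (hd ω) (norm_nonneg _) (by positivity)

lemma PB.neg {E : Type*} [SeminormedAddCommGroup E] {f : Ω → E} (hf : PB Λ f) :
    PB Λ (fun ω => - f ω) := hf.mono (fun ω => by simp)

lemma PB.sub (hΛ : ∀ ω, 2 ≤ Λ ω) {E : Type*} [SeminormedAddCommGroup E] {f g : Ω → E} (hf : PB Λ f)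
    (hg : PB Λ g) : PB Λ (fun ω => f ω - g ω) := by
  simp only [sub_eq_add_neg]
  exact hf.add hΛ hg.neg

lemma PB.smul (hΛ : ∀ ω, 2 ≤ Λ ω) {E : Type*} [SeminormedAddCommGroup E] {𝕜 : Type*} [NormedField 𝕜]
    [NormedSpace 𝕜 E] {f : Ω → 𝕜} {g : Ω → E} (hf : PB Λ f)
    (hg : PB Λ g) : PB Λ (fun ω => f ω • g ω) := by
  refine (hf.norm.mul hΛ hg.norm).of_le (fun ω => ?_)
  rw [norm_smul]

lemma PB.sum (hΛ : ∀ ω, 2 ≤ Λ ω) {E : Type*} [SeminormedAddCommGroup E] {κ : Type*} (s : Finset κ)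
    {f : κ → Ω → E} (hf : ∀ k ∈ s, PB Λ (f k)) : PB Λ (fun ω => ∑ k ∈ s, f k ω) := by
  classical
  induction s using Finset.induction_on with
  | empty => simpa using PB.const hΛ (0 : E)
  | insert a s ha ih =>
    simp only [Finset.sum_insert ha]
    exact (hf a (by simp)).add hΛ (ih (fun k hk => hf k (by simp [hk])))

lemma PB.prod (hΛ : ∀ ω, 2 ≤ Λ ω) {E : Type*} [NormedCommRing E] {κ : Type*} (s : Finset κ)
    {f : κ → Ω → E} (hf : ∀ k ∈ s, PB Λ (f k)) : PB Λ (fun ω => ∏ k ∈ s, f k ω) := by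
  classical
  induction s using Finset.induction_on with
  | empty => simpa using PB.const hΛ (1 : E)
  | insert a s ha ih =>
    simp only [Finset.prod_insert ha]
    exact (hf a (by simp)).mul hΛ (ih (fun k hk => hf k (by simp [hk])))

lemma PB.pow (hΛ : ∀ ω, 2 ≤ Λ ω) {E : Type*} [NormedRing E]
    {f : Ω → E} (hf : PB Λ f) (k : ℕ) : PB Λ (fun ω => f ω ^ k) := by
  induction k with
  | zero => simpa using PB.const hΛ (1 : E)
  | succ k ih => simp only [pow_succ]; exact ih.mul hΛ hf

lemma PB.inv_of_ge (hΛ : ∀ ω, 2 ≤ Λ ω) {f : Ω → ℂ} (hf : ∀ ω, 1 ≤ ‖f ω‖) :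
    PB Λ (fun ω => (f ω)⁻¹) := by
  refine (PB.const hΛ (1:ℝ)).of_le (fun ω => ?_)
  rw [norm_inv]
  exact inv_le_one_of_one_le₀ (hf ω)

lemma PB.inv_left (hΛ : ∀ ω, 2 ≤ Λ ω) {f g : Ω → ℂ} (hg : PB Λ g)
    (h : PB Λ (fun ω => (f ω * g ω)⁻¹)) (h0 : ∀ ω, g ω ≠ 0) : PB Λ (fun ω => (f ω)⁻¹) := by
  refine (hg.mul hΛ h).mono (fun ω => le_of_eq ?_)
  congr 1
  rw [mul_inv, mul_left_comm, mul_inv_cancel₀ (h0 ω), mul_one]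

lemma PB.inv_factor (hΛ : ∀ ω, 2 ≤ Λ ω) {κ : Type*} (s : Finset κ)
    {f : κ → Ω → ℂ} (hf : ∀ k ∈ s, PB Λ (f k)) (h : PB Λ (fun ω => (∏ k ∈ s, f k ω)⁻¹))
    (h0 : ∀ k ∈ s, ∀ ω, f k ω ≠ 0) (k : κ) (hk : k ∈ s) : PB Λ (fun ω => (f k ω)⁻¹) := by
  classical
  refine PB.inv_left hΛ (g := fun ω => ∏ j ∈ s.erase k, f j ω)
    (PB.prod hΛ _ fun j hj => hf j (Finset.mem_of_mem_erase hj)) ?_ ?_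
  · refine h.mono (fun ω => le_of_eq ?_)
    rw [Finset.mul_prod_erase s (fun j => f j ω) hk]
  · intro ω
    exact Finset.prod_ne_zero_iff.2 (fun j hj => h0 j (Finset.mem_of_mem_erase hj) ω)

attribute [local instance] Matrix.linftyOpNormedRing Matrix.linftyOpNormedAlgebra
  Matrix.linftyOpNormedAddCommGroup Matrix.linftyOpNormedSpace

lemma entry_le {m : Type*} [Fintype m] [DecidableEq m] (M : Matrix m m ℂ) (i j : m) :
    ‖M i j‖ ≤ ‖M‖ := by
  rw [Matrix.linfty_opNorm_def]
  have h1 : ‖M i j‖₊ ≤ ∑ j, ‖M i j‖₊ :=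
    Finset.single_le_sum (f := fun j => ‖M i j‖₊) (fun _ _ => zero_le) (Finset.mem_univ j)
  have h2 : ∑ j, ‖M i j‖₊ ≤ Finset.univ.sup fun i => ∑ j, ‖M i j‖₊ :=
    Finset.le_sup (f := fun i => ∑ j, ‖M i j‖₊) (Finset.mem_univ i)
  exact_mod_cast h1.trans h2

lemma norm_le_entries {m : Type*} [Fintype m] [DecidableEq m] (M : Matrix m m ℂ) :
    ‖M‖ ≤ ∑ i, ∑ j, ‖M i j‖ := by
  rw [Matrix.linfty_opNorm_def]
  have : (Finset.univ.sup fun i => ∑ j, ‖M i j‖₊) ≤ ∑ i, ∑ j, ‖M i j‖₊ := by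
    apply Finset.sup_le
    intro i _
    exact Finset.single_le_sum (f := fun i => ∑ j, ‖M i j‖₊) (fun _ _ => zero_le)
      (Finset.mem_univ i)
  have h2 := NNReal.coe_le_coe.2 this
  simpa using h2

lemma PB.entry {m : Type*} [Fintype m] [DecidableEq m] {M : Ω → Matrix m m ℂ} (h : PB Λ M)
    (i j : m) : PB Λ (fun ω => M ω i j) := h.mono (fun _ => entry_le _ i j)

lemma PB.of_entry (hΛ : ∀ ω, 2 ≤ Λ ω) {m : Type*} [Fintype m] [DecidableEq m]
    {M : Ω → Matrix m m ℂ} (h : ∀ i j, PB Λ (fun ω => M ω i j)) : PB Λ M :=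
  (PB.sum hΛ _ fun i _ => PB.sum hΛ _ fun j _ => (h i j).norm).of_le
    (fun ω => norm_le_entries (M ω))

lemma PB.det_entry (hΛ : ∀ ω, 2 ≤ Λ ω) {m : Type*} [Fintype m] [DecidableEq m]
    {M : Ω → Matrix m m ℂ} (h : ∀ i j, PB Λ (fun ω => M ω i j)) : PB Λ (fun ω => (M ω).det) := by
  simp only [det_apply']
  refine PB.sum hΛ _ fun σ _ => ?_
  exact (PB.const hΛ _).mul hΛ (PB.prod hΛ _ fun i _ => h _ _)

lemma PB.det (hΛ : ∀ ω, 2 ≤ Λ ω) {m : Type*} [Fintype m] [DecidableEq m]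
    {M : Ω → Matrix m m ℂ} (h : PB Λ M) : PB Λ (fun ω => (M ω).det) :=
  PB.det_entry hΛ (fun i j => h.entry i j)

lemma PB.trace (hΛ : ∀ ω, 2 ≤ Λ ω) {m : Type*} [Fintype m] [DecidableEq m]
    {M : Ω → Matrix m m ℂ} (h : PB Λ M) : PB Λ (fun ω => (M ω).trace) :=
  PB.sum hΛ _ (fun i _ => h.entry i i)

lemma PB.matinv (hΛ : ∀ ω, 2 ≤ Λ ω) {m : Type*} [Fintype m] [DecidableEq m]
    {M : Ω → Matrix m m ℂ} (h : ∀ i j, PB Λ (fun ω => M ω i j))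
    (hd : PB Λ (fun ω => ((M ω).det)⁻¹)) :
    PB Λ (fun ω => (M ω)⁻¹) := by
  simp only [Matrix.inv_def, Ring.inverse_eq_inv']
  refine hd.smul hΛ ?_
  refine PB.of_entry hΛ (fun i j => ?_)
  simp only [adjugate_apply]
  refine PB.det_entry hΛ (fun a b => ?_)
  by_cases haj : a = j
  · subst haj
    simp only [updateRow_self]
    exact PB.const hΛ _
  · simp only [updateRow_ne haj]
    exact h a b

end pb

section hankel
open Matrix

/-- Hankel determinant -/
def hank {R : Type*} [CommRing R] (N : ℕ) (c : ℕ → R) : R :=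
  (Matrix.of fun k l : Fin N => c (k + l)).det

lemma hank_map {R S : Type*} [CommRing R] [CommRing S] (f : R →+* S) (N : ℕ) (c : ℕ → R) :
    f (hank N c) = hank N (fun k => f (c k)) := by
  rw [hank, hank, RingHom.map_det]
  rfl

lemma hank_eq {R κ : Type*} [CommRing R] [Fintype κ] (μ m : κ → R) (c : ℕ → R)
    (hc : ∀ k, c k = ∑ x, μ x ^ k * m x) :
    hank (Fintype.card κ) c =
      (vandermonde (fun i => μ ((Fintype.equivFin κ).symm i))).det ^ 2 * ∏ x, m x := by
  have : (Matrix.of fun k l : Fin (Fintype.card κ) => c (k + l)) =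
      (vandermonde (fun i => μ ((Fintype.equivFin κ).symm i)))ᵀ *
      diagonal (fun i => m ((Fintype.equivFin κ).symm i)) *
      vandermonde (fun i => μ ((Fintype.equivFin κ).symm i)) := by
    ext k l
    rw [Matrix.mul_apply]
    simp only [mul_diagonal, transpose_apply, vandermonde_apply, of_apply, hc]
    rw [← Equiv.sum_comp (Fintype.equivFin κ).symm]
    refine Finset.sum_congr rfl fun i _ => ?_
    ring
  rw [hank, this, det_mul, det_mul, det_transpose, det_diagonal,
    Equiv.prod_comp (Fintype.equivFin κ).symm m]
  ring

lemma hank_ne_zero_iff {R κ : Type*} [Field R] [Fintype κ] (μ m : κ → R) (c : ℕ → R)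
    (hc : ∀ k, c k = ∑ x, μ x ^ k * m x) :
    hank (Fintype.card κ) c ≠ 0 ↔ Function.Injective μ ∧ ∀ x, m x ≠ 0 := by
  rw [hank_eq μ m c hc, mul_ne_zero_iff, pow_ne_zero_iff (by norm_num), det_vandermonde_ne_zero_iff,
    Finset.prod_ne_zero_iff]
  constructor
  · rintro ⟨h1, h2⟩
    refine ⟨?_, fun x => h2 x (Finset.mem_univ x)⟩
    have := h1.comp (Fintype.equivFin κ).injective
    simpa [Function.comp_def] using this
  · rintro ⟨h1, h2⟩
    exact ⟨h1.comp (Fintype.equivFin κ).symm.injective, fun x _ => h2 x⟩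

variable {Ω : Type*} {Λ : Ω → ℝ}

lemma hank_PB (hΛ : ∀ ω, 2 ≤ Λ ω) {κ : Type*} [Fintype κ] (μ m : κ → Ω → ℂ) (c : Ω → ℕ → ℂ)
    (hc : ∀ ω k, c ω k = ∑ x, μ x ω ^ k * m x ω) (hμ : ∀ x, PB Λ (μ x)) (hm : ∀ x, PB Λ (m x))
    (h1 : ∀ ω, 1 ≤ ‖hank (Fintype.card κ) (c ω)‖) :
    (∀ x, PB Λ (fun ω => (m x ω)⁻¹)) ∧ (∀ x y, x ≠ y → PB Λ (fun ω => (μ x ω - μ y ω)⁻¹)) := by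
  set e := Fintype.equivFin κ
  set V : Ω → ℂ := fun ω => (vandermonde (fun i => μ (e.symm i) ω)).det with hV
  have hne : ∀ ω, hank (Fintype.card κ) (c ω) ≠ 0 := fun ω h => by
    have := h1 ω; rw [h] at this; norm_num at this
  have heq : ∀ ω, hank (Fintype.card κ) (c ω) = V ω ^ 2 * ∏ x, m x ω := fun ω =>
    hank_eq (fun x => μ x ω) (fun x => m x ω) (c ω) (hc ω)
  have hVP : PB Λ V := by
    refine PB.det_entry hΛ (fun i j => ?_)
    simp only [vandermonde_apply]
    exact (hμ _).pow hΛ _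
  have hinv := PB.inv_of_ge hΛ h1
  simp only [heq] at hinv
  have hV0 : ∀ ω, V ω ≠ 0 := fun ω h => hne ω (by rw [heq, h]; simp)
  have hm0 : ∀ ω, ∏ x, m x ω ≠ 0 := fun ω h => hne ω (by rw [heq, h]; simp)
  have hP : PB Λ (fun ω => ∏ x, m x ω) := PB.prod hΛ _ fun x _ => hm x
  constructor
  · have h2 : PB Λ (fun ω => (∏ x, m x ω)⁻¹) := by
      refine PB.inv_left hΛ (hVP.pow hΛ 2) ?_ (fun ω => pow_ne_zero _ (hV0 ω))
      simpa only [mul_comm] using hinv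
    intro x
    exact PB.inv_factor hΛ Finset.univ (fun k _ => hm k) h2
      (fun k _ ω => (Finset.prod_ne_zero_iff.1 (hm0 ω)) k (Finset.mem_univ k)) x (Finset.mem_univ x)
  · have h2 : PB Λ (fun ω => (V ω)⁻¹) := by
      refine PB.inv_left hΛ (hVP.mul hΛ hP) ?_ (fun ω => mul_ne_zero (hV0 ω) (hm0 ω))
      refine hinv.mono (fun ω => le_of_eq ?_)
      congr 2; ring
    have hV' : ∀ ω, V ω = ∏ q ∈ (Finset.univ : Finset (Fin (Fintype.card κ))).sigma
        (fun i => Finset.Ioi i), (μ (e.symm q.2) ω - μ (e.symm q.1) ω) := by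
      intro ω
      rw [hV]
      simp only [det_vandermonde]
      rw [Finset.prod_sigma]
    simp only [hV'] at h2 hV0
    have h3 : ∀ i j : Fin (Fintype.card κ), i < j →
        PB Λ (fun ω => (μ (e.symm j) ω - μ (e.symm i) ω)⁻¹) := by
      intro i j hij
      exact PB.inv_factor hΛ (f := fun (q : (_ : Fin (Fintype.card κ)) × Fin (Fintype.card κ)) ω =>
        (μ (e.symm q.2) ω - μ (e.symm q.1) ω)) _ (fun k _ => (hμ _).sub hΛ (hμ _)) h2
        (fun k hk ω => (Finset.prod_ne_zero_iff.1 (hV0 ω)) k hk) ⟨i, j⟩ (by simp [hij])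
    intro x y hxy
    rcases lt_trichotomy (e x) (e y) with h | h | h
    · have := h3 _ _ h
      simp only [Equiv.symm_apply_apply] at this
      refine this.mono (fun ω => le_of_eq ?_)
      rw [norm_inv, norm_inv, norm_sub_rev]
    · exact absurd (e.injective h) hxy
    · simpa using h3 _ _ h

end hankel

section invs
open Matrix
variable {n : ℕ} {K : Type*} [CommRing K]

/-- first sequence -/
def c1 (A : Matrix (Fin n) (Fin n) K) (k : ℕ) : K := (A ^ k).trace
/-- second sequence -/
def c2 (x : ℕ) (A s : Matrix (Fin n) (Fin n) K) (k : ℕ) : K := (1 + ((x : K) • A) ^ k * s).det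
/-- third sequence -/
def c3 (q : ℕ) (A s : Matrix (Fin n) (Fin n) K) (k : ℕ) : K := (A ^ k * s * A ^ (q * k) * s).trace

lemma c1_map {K' : Type*} [CommRing K'] (f : K →+* K') (A : Matrix (Fin n) (Fin n) K) (k : ℕ) :
    f (c1 A k) = c1 (f.mapMatrix A) k := by
  simp only [c1, ← map_pow]
  exact AddMonoidHom.map_trace f.toAddMonoidHom _

lemma c2_map {K' : Type*} [CommRing K'] (f : K →+* K') (x : ℕ) (A s : Matrix (Fin n) (Fin n) K)
    (k : ℕ) : f (c2 x A s k) = c2 x (f.mapMatrix A) (f.mapMatrix s) k := by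
  have : (x : K') • f.mapMatrix A = f.mapMatrix ((x : K) • A) := by
    ext i j; simp
  rw [c2, c2, this, ← map_pow, ← map_mul, ← map_one f.mapMatrix, ← map_add, RingHom.map_det]

lemma c3_map {K' : Type*} [CommRing K'] (f : K →+* K') (q : ℕ) (A s : Matrix (Fin n) (Fin n) K)
    (k : ℕ) : f (c3 q A s k) = c3 q (f.mapMatrix A) (f.mapMatrix s) k := by
  simp only [c3, ← map_pow, ← map_mul]
  exact AddMonoidHom.map_trace f.toAddMonoidHom _

variable {g g' : Matrix (Fin n) (Fin n) K}

lemma conj_pow' (h : g' * g = 1) (A : Matrix (Fin n) (Fin n) K) (k : ℕ) :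
    (g * A * g') ^ k = g * A ^ k * g' := by
  induction k with
  | zero => simp [mul_eq_one_comm.1 h]
  | succ k ih =>
    rw [pow_succ, ih, pow_succ]
    calc g * A ^ k * g' * (g * A * g') = g * A ^ k * (g' * g) * A * g' := by
          simp only [Matrix.mul_assoc]
      _ = _ := by rw [h, Matrix.mul_one]; simp only [Matrix.mul_assoc]

lemma conj_mul' (h : g' * g = 1) (A B : Matrix (Fin n) (Fin n) K) :
    (g * A * g') * (g * B * g') = g * (A * B) * g' := by
  calc g * A * g' * (g * B * g') = g * A * (g' * g) * B * g' := by
          simp only [Matrix.mul_assoc]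
      _ = _ := by rw [h, Matrix.mul_one]; simp only [Matrix.mul_assoc]

lemma conj_trace' (h : g' * g = 1) (A : Matrix (Fin n) (Fin n) K) :
    (g * A * g').trace = A.trace := by
  rw [trace_mul_comm, ← Matrix.mul_assoc, h, Matrix.one_mul]

lemma conj_det' (h : g' * g = 1) (A : Matrix (Fin n) (Fin n) K) :
    (g * A * g').det = A.det := by
  have := congrArg det h
  rw [det_mul, det_one] at this
  rw [det_mul, det_mul]
  linear_combination A.det * this

lemma c1_conj (h : g' * g = 1) (A : Matrix (Fin n) (Fin n) K) (k : ℕ) :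
    c1 (g * A * g') k = c1 A k := by
  rw [c1, conj_pow' h, conj_trace' h, c1]

lemma c2_conj (h : g' * g = 1) (x : ℕ) (A s : Matrix (Fin n) (Fin n) K) (k : ℕ) :
    c2 x (g * A * g') (g * s * g') k = c2 x A s k := by
  have h1 : (x : K) • (g * A * g') = g * ((x : K) • A) * g' := by simp
  have h2 : (1 : Matrix (Fin n) (Fin n) K) = g * 1 * g' := by simp [mul_eq_one_comm.1 h]
  rw [c2, c2, h1, conj_pow' h, conj_mul' h]
  nth_rewrite 1 [h2]
  rw [← Matrix.add_mul, ← Matrix.mul_add, conj_det' h]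

lemma c3_conj (h : g' * g = 1) (q : ℕ) (A s : Matrix (Fin n) (Fin n) K) (k : ℕ) :
    c3 q (g * A * g') (g * s * g') k = c3 q A s k := by
  rw [c3, c3, conj_pow' h, conj_pow' h, conj_mul' h, conj_mul' h, conj_mul' h, conj_trace' h]

/-- coordinate projections -/
def prI (I : Finset (Fin n)) : Matrix (Fin n) (Fin n) K := diagonal (fun i => if i ∈ I then 1 else 0)

lemma c1_diag (l : Fin n → K) (k : ℕ) : c1 (diagonal l) k = ∑ j, l j ^ k * 1 := by
  simp [c1, diagonal_pow, trace_diagonal]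

lemma c2_diag (x : ℕ) (l : Fin n → K) (s : Matrix (Fin n) (Fin n) K) (k : ℕ) :
    c2 x (diagonal l) s k =
      ∑ I : Finset (Fin n), (∏ j ∈ I, ((x : K) * l j)) ^ k * (prI I * s + (1 - prI I)).det := by
  have h1 : (1 + ((x : K) • diagonal l) ^ k * s) =
      (Matrix.of ((fun i => ((x : K) * l i) ^ k • s i) + (fun i => (1 : Matrix _ _ K) i))) := by
    ext i j
    rw [← diagonal_smul, diagonal_pow]
    simp [add_comm]
  rw [c2, h1]
  change detRowAlternating _ = _
  change detRowAlternating.toMultilinearMap ((fun i => ((x : K) * l i) ^ k • s i) +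
    (fun i => (1 : Matrix _ _ K) i)) = _
  rw [MultilinearMap.map_add_univ]
  refine Finset.sum_congr rfl fun I _ => ?_
  set m : Fin n → Fin n → K := fun i => (prI I * s + (1 - prI I) : Matrix (Fin n) (Fin n) K) i with hm
  have hmI : ∀ i ∈ I, m i = s i := by
    intro i hi; ext j; simp [hm, prI, hi, sub_eq_add_neg, one_apply, diagonal_apply]
    try (split_ifs <;> simp)
  have hmI' : ∀ i ∉ I, m i = (1 : Matrix _ _ K) i := by
    intro i hi; ext j; simp [hm, prI, hi, sub_eq_add_neg, one_apply, diagonal_apply]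
  have : I.piecewise (fun i => ((x : K) * l i) ^ k • s i) (fun i => (1 : Matrix _ _ K) i) =
      I.piecewise (fun i => ((x : K) * l i) ^ k • m i) m := by
    ext i j
    by_cases hi : i ∈ I
    · simp [hi, hmI i hi]
    · simp [hi, hmI' i hi]
  rw [this, MultilinearMap.map_piecewise_smul, smul_eq_mul, Finset.prod_pow]
  rfl

lemma prI_idem (I : Finset (Fin n)) : prI I * prI I = (prI I : Matrix (Fin n) (Fin n) K) := by
  rw [prI, diagonal_mul_diagonal]
  congr 1; ext i; split_ifs <;> simp

lemma det_corner {P s : Matrix (Fin n) (Fin n) K} (hP : P * P = P) :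
    (P * s + (1 - P)).det = (P * s * P + (1 - P)).det := by
  have hPQ : (1 - P) * P = 0 := by rw [Matrix.sub_mul, hP, Matrix.one_mul, sub_self]
  have hQQ : (1 - P) * (1 - P) = 1 - P := by
    rw [Matrix.mul_sub, hPQ, Matrix.mul_one, sub_zero]
  have h1 : P * s + (1 - P) = (1 + P * s * (1 - P)) * (P * s * P + (1 - P)) := by
    have : (1 + P * s * (1 - P)) * (P * s * P + (1 - P)) = P * s * P + (1 - P) +
        P * s * ((1 - P) * P) * s * P + P * s * ((1 - P) * (1 - P)) := by noncomm_ring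
    rw [this, hPQ, hQQ]
    noncomm_ring
  have h2 : (1 + P * s * (1 - P)).det = 1 := by
    rw [det_one_add_mul_comm, ← Matrix.mul_assoc, hPQ]; simp
  rw [h1, det_mul, h2, one_mul]

lemma c2_diag' (x : ℕ) (l : Fin n → K) (s : Matrix (Fin n) (Fin n) K) (k : ℕ) :
    c2 x (diagonal l) s k =
      ∑ I : Finset (Fin n), (∏ j ∈ I, ((x : K) * l j)) ^ k *
        (prI I * s * prI I + (1 - prI I)).det := by
  simp only [c2_diag, det_corner (prI_idem _)]

lemma c3_diag (q : ℕ) (l : Fin n → K) (s : Matrix (Fin n) (Fin n) K) (k : ℕ) :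
    c3 q (diagonal l) s k =
      ∑ t : Fin n × Fin n, (l t.1 * l t.2 ^ q) ^ k * (s t.1 t.2 * s t.2 t.1) := by
  rw [c3, diagonal_pow, diagonal_pow, trace, Fintype.sum_prod_type]
  refine Finset.sum_congr rfl fun i _ => ?_
  rw [diag_apply, Matrix.mul_apply]
  refine Finset.sum_congr rfl fun j _ => ?_
  rw [mul_diagonal, diagonal_mul]
  simp only [Pi.pow_apply]
  rw [mul_pow, ← pow_mul]
  ring

end invs

section modp
open Matrix
variable {n : ℕ}

/-- Gram determinant of the trace form -/
def gramd {K : Type*} [CommRing K] {κ : Type*} [Fintype κ] [DecidableEq κ]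
    (u : κ → Matrix (Fin n) (Fin n) K) : K :=
  (Matrix.of fun i j => (u i * u j).trace).det

lemma gramd_map {K K' : Type*} [CommRing K] [CommRing K'] (f : K →+* K') {κ : Type*} [Fintype κ]
    [DecidableEq κ] (u : κ → Matrix (Fin n) (Fin n) K) :
    f (gramd u) = gramd (fun i => f.mapMatrix (u i)) := by
  rw [gramd, gramd, RingHom.map_det]
  congr 1
  ext i j
  simp only [RingHom.mapMatrix_apply, map_apply, of_apply]
  rw [← Matrix.map_mul]
  exact AddMonoidHom.map_trace f.toAddMonoidHom _

lemma gramd_ne_zero {K : Type*} [Field K] {κ : Type*} [Fintype κ] [DecidableEq κ]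
    (u : κ → Matrix (Fin n) (Fin n) K) (hli : LinearIndependent K u)
    (hsp : ⊤ ≤ Submodule.span K (Set.range u)) : gramd u ≠ 0 := by
  intro h
  rw [gramd] at h
  obtain ⟨v, hv0, hv⟩ := Matrix.exists_mulVec_eq_zero_iff.2 h
  set x := ∑ j, v j • u j with hx
  have h1 : ∀ i, (u i * x).trace = 0 := by
    intro i
    have := congrFun hv i
    simp only [mulVec, dotProduct, of_apply, Pi.zero_apply] at this
    rw [hx, Finset.mul_sum, trace_sum, ← this]
    refine Finset.sum_congr rfl fun j _ => ?_
    rw [Matrix.mul_smul, trace_smul, smul_eq_mul, mul_comm]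
  have h2 : ∀ y : Matrix (Fin n) (Fin n) K, (y * x).trace = 0 := by
    intro y
    have hy : y ∈ Submodule.span K (Set.range u) := hsp trivial
    induction hy using Submodule.span_induction with
    | mem y hy => obtain ⟨i, rfl⟩ := hy; exact h1 i
    | zero => simp
    | add a b _ _ ha hb => rw [Matrix.add_mul, trace_add, ha, hb, add_zero]
    | smul c a _ ha => rw [Matrix.smul_mul, trace_smul, ha, smul_zero]
  have h3 : x = 0 := by
    ext i j
    have := h2 (single j i 1)
    rw [Matrix.trace_single_mul] at this
    simpa using this
  have h4 := Fintype.linearIndependent_iff.1 hli v h3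
  exact hv0 (funext h4)

/-- conjugates of a matrix under SL -/
def conjs {K : Type*} [Field K] (a : Matrix (Fin n) (Fin n) K) : Set (Matrix (Fin n) (Fin n) K) :=
  {M | ∃ h h' : Matrix (Fin n) (Fin n) K, h' * h = 1 ∧ M = h * a * h'}

lemma conj_mem_span {K : Type*} [Field K] (a : Matrix (Fin n) (Fin n) K)
    {h h' : Matrix (Fin n) (Fin n) K} (hh : h' * h = 1) {M : Matrix (Fin n) (Fin n) K}
    (hM : M ∈ Submodule.span K (conjs a)) : h * M * h' ∈ Submodule.span K (conjs a) := by
  induction hM using Submodule.span_induction with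
  | mem y hy =>
    obtain ⟨k, k', hk, rfl⟩ := hy
    refine Submodule.subset_span ⟨h * k, k' * h', ?_, ?_⟩
    · calc k' * h' * (h * k) = k' * (h' * h) * k := by simp only [Matrix.mul_assoc]
        _ = 1 := by rw [hh, Matrix.mul_one, hk]
    · simp only [Matrix.mul_assoc]
  | zero => simp
  | add x y _ _ hx hy => rw [Matrix.mul_add, Matrix.add_mul]; exact add_mem hx hy
  | smul c x _ hx =>
    rw [Matrix.mul_smul, Matrix.smul_mul]; exact Submodule.smul_mem _ _ hx

lemma span_conjs {K : Type*} [Field K] (d : Fin n → K) (hd : Function.Injective d)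
    (ht : ∑ i, d i ≠ 0) : Submodule.span K (conjs (diagonal d)) = ⊤ := by
  set W := Submodule.span K (conjs (diagonal d)) with hW
  have ha : diagonal d ∈ W := Submodule.subset_span ⟨1, 1, by simp, by simp⟩
  have htr : ∀ i j : Fin n, i ≠ j → transvection i j (-1 : K) * transvection i j 1 = 1 := by
    intro i j hij
    rw [transvection_mul_transvection_same _ _ hij]; simp
  have h1 : ∀ i j : Fin n, i ≠ j → single i j (1:K) ∈ W := by
    intro i j hij
    have h2 := conj_mem_span _ (htr i j hij) ha
    have h3 : transvection i j (1:K) * diagonal d * transvection i j (-1) =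
        diagonal d + (d j - d i) • single i j 1 := by
      have e1 : single i j (1:K) * diagonal d = d j • single i j 1 := by
        ext x y; simp [single_apply, mul_diagonal]
        aesop
      have e2 : diagonal d * single i j (1:K) = d i • single i j 1 := by
        ext x y; simp [single_apply, diagonal_mul]
        aesop
      have e3 : single i j (1:K) * single i j 1 = 0 := by
        rw [single_mul_single_of_ne]; exact hij.symm
      have e4 : single i j (-1:K) = - single i j 1 := by ext x y; simp [single_apply]; aesop
      rw [transvection, transvection, e4]
      simp only [Matrix.add_mul, Matrix.mul_add, Matrix.one_mul, Matrix.mul_one, e1, Matrix.mul_neg,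
        Matrix.smul_mul, e2, e3]
      rw [sub_smul]
      simp
      abel
    rw [← hW, h3] at h2
    have h4 := (Submodule.add_mem_iff_right _ ha).1 h2
    exact (Submodule.smul_mem_iff _ (sub_ne_zero.2 (fun e => hij (hd e).symm))).1 h4
  have h2 : ∀ i j : Fin n, single j j (1:K) - single i i 1 ∈ W := by
    intro i j
    by_cases hij : i = j
    · subst hij; simp
    have h2 := conj_mem_span _ (htr j i (Ne.symm hij)) (h1 i j hij)
    have h3 : transvection j i (1:K) * single i j 1 * transvection j i (-1) =
        single i j 1 + (single j j (1:K) - single i i 1) - single j i 1 := by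
      have e4 : single j i (-1:K) = - single j i 1 := by ext x y; simp [single_apply]; aesop
      rw [transvection, transvection, e4]
      simp only [Matrix.add_mul, Matrix.mul_add, Matrix.one_mul, Matrix.mul_one, Matrix.mul_neg,
        single_mul_single_same, _root_.mul_one]
      abel
    rw [← hW, h3] at h2
    have h5 := (Submodule.sub_mem_iff_left _ (h1 j i (Ne.symm hij))).1 h2
    exact (Submodule.add_mem_iff_right _ (h1 i j hij)).1 h5
  have h3 : ∀ i : Fin n, single i i (1:K) ∈ W := by
    intro i
    have e : diagonal d = ∑ j, d j • (single j j (1:K) - single i i 1) +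
        (∑ j, d j) • single i i (1:K) := by
      simp only [smul_sub, Finset.sum_sub_distrib, Finset.sum_smul]
      rw [sub_add_cancel]
      ext x y
      simp [Matrix.sum_apply, single_apply, diagonal_apply]
      by_cases hxy : x = y
      · subst hxy; simp
      · simp only [hxy, if_false]
        symm
        apply Finset.sum_eq_zero
        intro j _
        rw [if_neg]; rintro ⟨rfl, rfl⟩; exact hxy rfl
    rw [e] at ha
    have := (Submodule.add_mem_iff_right _
      (Submodule.sum_mem _ fun j _ => Submodule.smul_mem _ _ (h2 i j))).1 ha
    exact (Submodule.smul_mem_iff _ ht).1 this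
  rw [eq_top_iff]
  intro M _
  rw [matrix_eq_sum_single M]
  refine Submodule.sum_mem _ fun i _ => Submodule.sum_mem _ fun j _ => ?_
  have : single i j (M i j) = M i j • single i j (1:K) := by simp
  rw [this]
  refine Submodule.smul_mem _ _ ?_
  by_cases hij : i = j
  · subst hij; exact h3 i
  · exact h1 i j hij

lemma exists_basis_conjs {K : Type*} [Field K] (d : Fin n → K) (hd : Function.Injective d)
    (ht : ∑ i, d i ≠ 0) : ∃ h h' : Fin (n * n) → Matrix (Fin n) (Fin n) K,
      (∀ i, h' i * h i = 1) ∧ gramd (fun i => h i * diagonal d * h' i) ≠ 0 := by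
  obtain ⟨f, hf, hsp, hli⟩ := Submodule.exists_fun_fin_finrank_span_eq K (conjs (diagonal d))
  have hsp' := hsp.trans (span_conjs d hd ht)
  have hr : Module.finrank K (Submodule.span K (conjs (diagonal d))) = n * n := by
    rw [span_conjs d hd ht, finrank_top, Module.finrank_matrix]; simp
  set e := finCongr hr.symm
  choose h h' hh hh' using hf
  refine ⟨h ∘ e, h' ∘ e, fun i => hh _, ?_⟩
  have : (fun i => (h ∘ e) i * diagonal d * (h' ∘ e) i) = f ∘ e := by
    ext1 i; exact (hh' (e i)).symm
  rw [this]
  refine gramd_ne_zero _ (hli.comp _ e.injective) ?_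
  rw [e.surjective.range_comp, hsp']

end modp

section modp2
open Matrix
variable {n : ℕ}

/-- the lower unitriangular all-ones matrix -/
def Lmat (n : ℕ) : Matrix (Fin n) (Fin n) ℤ := Matrix.of fun i j => if j ≤ i then 1 else 0

lemma Lmat_det : (Lmat n).det = 1 := by
  rw [Matrix.det_of_isLowerTriangular]
  · simp [Lmat]
  · intro i j hij
    have : i < j := by simpa using hij
    simp [Lmat, this]

/-- symmetric base matrix -/
def smat (n : ℕ) : Matrix (Fin n) (Fin n) ℤ := Lmat n * (Lmat n)ᵀ

lemma smat_det : (smat n).det = 1 := by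
  rw [smat, det_mul, det_transpose, Lmat_det, one_mul]

lemma smat_pos (i j : Fin n) : 0 < smat n i j ∧ smat n i j ≤ n := by
  rw [smat, Matrix.mul_apply]
  have h : ∀ k, 0 ≤ Lmat n i k * (Lmat n)ᵀ k j ∧ Lmat n i k * (Lmat n)ᵀ k j ≤ 1 := by
    intro k
    simp only [Lmat, transpose_apply, of_apply]
    split_ifs <;> simp
  constructor
  · have hn : 0 < n := i.pos
    refine lt_of_lt_of_le ?_ (Finset.single_le_sum (f := fun k => Lmat n i k * (Lmat n)ᵀ k j)
      (fun k _ => (h k).1) (Finset.mem_univ (⟨0, hn⟩ : Fin n)))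
    have hz : ∀ a : Fin n, (⟨0, hn⟩ : Fin n) ≤ a := fun a => Nat.zero_le _
    simp only [Lmat, transpose_apply, of_apply, hz, if_true]
    norm_num
  · calc _ ≤ ∑ k : Fin n, (1:ℤ) := Finset.sum_le_sum fun k _ => (h k).2
      _ = n := by simp

lemma prI_transpose {K : Type*} [CommRing K] (I : Finset (Fin n)) :
    (prI I : Matrix (Fin n) (Fin n) K)ᵀ = prI I := by rw [prI, diagonal_transpose]

lemma minor_ne_zero (I : Finset (Fin n)) :
    (prI I * smat n * prI I + (1 - prI I)).det ≠ 0 := by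
  intro h
  obtain ⟨v, hv0, hv⟩ := Matrix.exists_mulVec_eq_zero_iff.2 h
  have e1 : prI I * smat n * prI I + (1 - prI I) =
      (prI I * Lmat n) * (prI I * Lmat n)ᵀ + (1 - prI I) * (1 - prI I)ᵀ := by
    rw [transpose_mul, transpose_sub, prI_transpose, transpose_one, smat]
    have : (1 - prI I) * (1 - prI I : Matrix (Fin n) (Fin n) ℤ) = 1 - prI I := by
      rw [Matrix.mul_sub, Matrix.sub_mul _ _ (prI I), prI_idem]; simp
    rw [this]
    simp only [Matrix.mul_assoc]
  rw [e1] at hv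
  have h2 := congrArg (fun w => v ⬝ᵥ w) hv
  simp only [dotProduct_zero, add_mulVec, dotProduct_add] at h2
  have hM : ∀ M : Matrix (Fin n) (Fin n) ℤ, v ⬝ᵥ (M * Mᵀ) *ᵥ v = (Mᵀ *ᵥ v) ⬝ᵥ (Mᵀ *ᵥ v) := by
    intro M
    rw [← mulVec_mulVec, dotProduct_mulVec, ← mulVec_transpose]
  rw [hM, hM] at h2
  have p1 : ∀ w : Fin n → ℤ, 0 ≤ w ⬝ᵥ w := fun w => Finset.sum_nonneg fun i _ => mul_self_nonneg _
  have h3 := dotProduct_self_eq_zero.1 (le_antisymm (by linarith [p1 ((1 - prI I)ᵀ *ᵥ v)]) (p1 ((prI I * Lmat n)ᵀ *ᵥ v)))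
  have h4 := dotProduct_self_eq_zero.1 (le_antisymm (by linarith [p1 ((prI I * Lmat n)ᵀ *ᵥ v)]) (p1 ((1 - prI I)ᵀ *ᵥ v)))
  rw [transpose_mul, ← mulVec_mulVec, prI_transpose] at h3
  rw [transpose_sub, prI_transpose, transpose_one, sub_mulVec, one_mulVec, sub_eq_zero] at h4
  rw [← h4] at h3
  have := Matrix.exists_mulVec_eq_zero_iff.1 ⟨v, hv0, h3⟩
  rw [det_transpose, Lmat_det] at this
  exact one_ne_zero this

lemma natcast_pow_inj {p E : ℕ} (hp : 2 ^ E < p) {a b : ℕ} (ha : a ≤ E) (hb : b ≤ E)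
    (h : (2 : ZMod p) ^ a = 2 ^ b) : a = b := by
  have h1 : ((2 ^ a : ℕ) : ZMod p) = ((2 ^ b : ℕ) : ZMod p) := by push_cast; exact h
  rw [ZMod.natCast_eq_natCast_iff', Nat.mod_eq_of_lt, Nat.mod_eq_of_lt] at h1
  · exact Nat.pow_right_injective le_rfl h1
  · exact lt_of_le_of_lt (Nat.pow_le_pow_right (by norm_num) hb) hp
  · exact lt_of_le_of_lt (Nat.pow_le_pow_right (by norm_num) ha) hp

lemma sum_two_pow_inj {I J : Finset (Fin n)} (h : ∑ j ∈ I, 2 ^ (j:ℕ) = ∑ j ∈ J, 2 ^ (j:ℕ)) :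
    I = J := by
  apply Finset.map_injective Fin.valEmbedding
  apply Finset.geomSum_injective le_rfl
  simpa using h

lemma sum_two_pow_le (I : Finset (Fin n)) : ∑ j ∈ I, 2 ^ (j:ℕ) ≤ 2 ^ n - 1 := by
  calc _ ≤ ∑ j : Fin n, 2 ^ (j:ℕ) := Finset.sum_le_sum_of_subset (Finset.subset_univ _)
    _ = 2 ^ n - 1 := by
      rw [Fin.sum_univ_eq_sum_range (fun j => 2 ^ j), Nat.geomSum_eq le_rfl]; simp

lemma sum_two_pow : ∑ j : Fin n, 2 ^ (j:ℕ) = 2 ^ n - 1 := by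
  rw [Fin.sum_univ_eq_sum_range (fun j => 2 ^ j), Nat.geomSum_eq le_rfl]; simp

lemma modp_exists (hn : 2 ≤ n) : ∃ p : ℕ, p.Prime ∧ 2 * (n * n + n) < p ∧
    ∃ g s : Fin (n * n) → Matrix (Fin n) (Fin n) (ZMod p),
      gramd g ≠ 0 ∧ ∀ i, (g i).det = 1 ∧ (s i).det = 1 ∧
        hank (Fintype.card (Fin n)) (c1 (g i)) ≠ 0 ∧
        hank (Fintype.card (Finset (Fin n))) (c2 (2 ^ (2 ^ n - 1)) (g i) (s i)) ≠ 0 ∧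
        hank (Fintype.card (Fin n × Fin n)) (c3 (2 ^ n) (g i) (s i)) ≠ 0 := by
  set E := n * (2 ^ n + 2 ^ n * 2 ^ n) with hE
  set mI : Finset (Fin n) → ℤ := fun I => (prI I * smat n * prI I + (1 - prI I)).det with hmI
  obtain ⟨p, hp, hpp⟩ := Nat.exists_infinite_primes
    (2 * (n * n + n) + 2 ^ E + n * 2 ^ E + ∑ I, (mI I).natAbs + 1)
  have : Fact p.Prime := ⟨hpp⟩
  have hE0 : 0 < 2 ^ E := by positivity
  have hnn : 0 ≤ n * n := Nat.zero_le _
  have hpE : 2 ^ E < p := by omega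
  have hpS : n * 2 ^ E < p := by omega
  have hpn : n < p := by omega
  have hpm : ∀ I, (mI I).natAbs < p := by
    intro I
    have := Finset.single_le_sum (f := fun I => (mI I).natAbs) (fun _ _ => Nat.zero_le _)
      (Finset.mem_univ I)
    omega
  have hcast : ∀ z : ℤ, z ≠ 0 → z.natAbs < p → (z : ZMod p) ≠ 0 := by
    intro z hz hzp h
    rw [ZMod.intCast_zmod_eq_zero_iff_dvd] at h
    exact hz (Int.eq_zero_of_abs_lt_dvd h (by rw [Int.abs_eq_natAbs]; omega))
  have two_ne : (2 : ZMod p) ≠ 0 := by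
    have := hcast 2 (by norm_num) (by simp; omega)
    simpa using this
  have h2n : 0 < 2 ^ n := by positivity
  have hqq : 2 ^ n ≤ 2 ^ n * 2 ^ n := by nlinarith
  set X : ZMod p := 2 ^ (2 ^ n - 1) with hX
  have hX0 : X ≠ 0 := pow_ne_zero _ two_ne
  set d : Fin n → ZMod p := fun j => 2 ^ (n * 2 ^ (j:ℕ)) * X⁻¹ with hd
  have hjn : ∀ j : Fin n, 2 ^ (j:ℕ) ≤ 2 ^ n := fun j => Nat.pow_le_pow_right (by norm_num) j.2.le
  have hjE : ∀ j : Fin n, n * 2 ^ (j:ℕ) ≤ E := fun j => Nat.mul_le_mul_left _ (by have := hjn j; omega)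
  have hn0 : 0 < n := by omega
  have hdinj : Function.Injective d := by
    intro i j h
    have h1 := mul_right_cancel₀ (inv_ne_zero hX0) h
    have h2 := natcast_pow_inj hpE (hjE i) (hjE j) h1
    have h3 := Nat.pow_right_injective le_rfl (Nat.eq_of_mul_eq_mul_left hn0 h2)
    exact Fin.ext h3
  have hdsum : ∑ j, d j ≠ 0 := by
    rw [hd, ← Finset.sum_mul]
    refine mul_ne_zero ?_ (inv_ne_zero hX0)
    have e : ∑ j : Fin n, (2 : ZMod p) ^ (n * 2 ^ (j:ℕ)) =
        ((∑ j : Fin n, (2:ℤ) ^ (n * 2 ^ (j:ℕ)) : ℤ) : ZMod p) := by push_cast; rfl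
    rw [e]
    have hpos : 0 < ∑ j : Fin n, (2:ℤ) ^ (n * 2 ^ (j:ℕ)) :=
      Finset.sum_pos (fun _ _ => by positivity) ⟨⟨0, hn0⟩, Finset.mem_univ _⟩
    refine hcast _ hpos.ne' ?_
    have hle : ∑ j : Fin n, (2:ℤ) ^ (n * 2 ^ (j:ℕ)) ≤ n * 2 ^ E := by
      calc _ ≤ ∑ j : Fin n, (2:ℤ) ^ E :=
            Finset.sum_le_sum fun j _ => pow_le_pow_right₀ (by norm_num) (hjE j)
        _ = _ := by simp
    have : ((n * 2 ^ E : ℕ) : ℤ) < p := by exact_mod_cast hpS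
    push_cast at this
    omega
  have hdprod : ∏ j, d j = 1 := by
    rw [hd, Finset.prod_mul_distrib, Finset.prod_pow_eq_pow_sum, ← Finset.mul_sum, sum_two_pow]
    simp only [Finset.prod_const, Finset.card_univ, Fintype.card_fin]
    rw [hX, inv_pow, ← pow_mul, mul_comm n]
    exact mul_inv_cancel₀ (pow_ne_zero _ two_ne)
  obtain ⟨h, h', hh, hg⟩ := exists_basis_conjs d hdinj hdsum
  set s0 : Matrix (Fin n) (Fin n) (ZMod p) := (Int.castRingHom (ZMod p)).mapMatrix (smat n) with hs0
  refine ⟨p, hpp, by omega, fun i => h i * diagonal d * h' i, fun i => h i * s0 * h' i, hg, ?_⟩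
  intro i
  have e1 : c1 (h i * diagonal d * h' i) = c1 (diagonal d) := funext fun k => c1_conj (hh i) _ k
  have e2 : c2 (2 ^ (2 ^ n - 1)) (h i * diagonal d * h' i) (h i * s0 * h' i) =
    c2 (2 ^ (2 ^ n - 1)) (diagonal d) s0 := funext fun k => c2_conj (hh i) _ _ _ k
  have e3 : c3 (2 ^ n) (h i * diagonal d * h' i) (h i * s0 * h' i) =
    c3 (2 ^ n) (diagonal d) s0 := funext fun k => c3_conj (hh i) _ _ _ k
  refine ⟨?_, ?_, ?_, ?_, ?_⟩
  · rw [conj_det' (hh i), det_diagonal, hdprod]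
  · rw [conj_det' (hh i), hs0, ← RingHom.map_det, smat_det, map_one]
  · rw [e1]
    exact (hank_ne_zero_iff d (fun _ => 1) _ (c1_diag d)).2 ⟨hdinj, fun _ => one_ne_zero⟩
  · rw [e2]
    refine (hank_ne_zero_iff (fun I : Finset (Fin n) => ∏ j ∈ I, (((2 ^ (2 ^ n - 1) : ℕ) : ZMod p) * d j))
      (fun I => (prI I * s0 * prI I + (1 - prI I)).det) _ (c2_diag' _ d s0)).2 ⟨?_, ?_⟩
    · have e : ∀ j, ((2 ^ (2 ^ n - 1) : ℕ) : ZMod p) * d j = 2 ^ (n * 2 ^ (j:ℕ)) := by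
        intro j
        rw [hd]; push_cast; rw [← hX]; field_simp
      intro I J hIJ
      simp only [e, Finset.prod_pow_eq_pow_sum, ← Finset.mul_sum] at hIJ
      have hb : ∀ I : Finset (Fin n), n * ∑ j ∈ I, 2 ^ (j:ℕ) ≤ E := fun I =>
        Nat.mul_le_mul_left _ (by have := sum_two_pow_le I; omega)
      exact sum_two_pow_inj (Nat.eq_of_mul_eq_mul_left hn0 (natcast_pow_inj hpE (hb I) (hb J) hIJ))
    · intro I
      have : (prI I * s0 * prI I + (1 - prI I)).det = ((mI I : ℤ) : ZMod p) := by
        have e := RingHom.map_det (Int.castRingHom (ZMod p)) (prI I * smat n * prI I + (1 - prI I))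
        have e4 : (Int.castRingHom (ZMod p)).mapMatrix (prI I) = prI I := by
          ext a b; simp only [prI, RingHom.mapMatrix_apply, map_apply, diagonal_apply]
          split_ifs <;> simp
        rw [map_add, map_mul, map_mul, map_sub, map_one, e4] at e
        exact e.symm
      rw [this]
      exact hcast _ (minor_ne_zero I) (hpm I)
  · rw [e3]
    refine (hank_ne_zero_iff (fun t : Fin n × Fin n => d t.1 * d t.2 ^ (2 ^ n))
      (fun t => s0 t.1 t.2 * s0 t.2 t.1) _ (c3_diag _ d s0)).2 ⟨?_, ?_⟩
    · have e : ∀ t : Fin n × Fin n, d t.1 * d t.2 ^ (2 ^ n) =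
          2 ^ (n * (2 ^ (t.1:ℕ) + 2 ^ n * 2 ^ (t.2:ℕ))) * (X⁻¹) ^ (1 + 2 ^ n) := by
        intro t
        simp only [hd, mul_pow, ← pow_mul]
        rw [show n * (2 ^ (t.1:ℕ) + 2 ^ n * 2 ^ (t.2:ℕ)) = n * 2 ^ (t.1:ℕ) + n * 2 ^ (t.2:ℕ) * 2 ^ n by ring]
        rw [pow_add, pow_add]; ring
      intro t t' htt
      simp only [e] at htt
      have h1 := mul_right_cancel₀ (pow_ne_zero _ (inv_ne_zero hX0)) htt
      have hb : ∀ t : Fin n × Fin n, n * (2 ^ (t.1:ℕ) + 2 ^ n * 2 ^ (t.2:ℕ)) ≤ E := fun t =>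
        Nat.mul_le_mul_left _ (Nat.add_le_add (hjn _) (Nat.mul_le_mul_left _ (hjn _)))
      have h2 := Nat.eq_of_mul_eq_mul_left hn0 (natcast_pow_inj hpE (hb t) (hb t') h1)
      have hlt : ∀ j : Fin n, 2 ^ (j:ℕ) < 2 ^ n := fun j => Nat.pow_lt_pow_right (by norm_num) j.2
      have h3 : 2 ^ (t.1:ℕ) = 2 ^ (t'.1:ℕ) := by
        have := congrArg (· % 2 ^ n) h2
        simpa [Nat.add_mul_mod_self_left, Nat.mod_eq_of_lt, hlt] using this
      have h4 : 2 ^ (t.2:ℕ) = 2 ^ (t'.2:ℕ) := by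
        rw [h3] at h2
        exact Nat.eq_of_mul_eq_mul_left h2n (by omega)
      exact Prod.ext (Fin.ext (Nat.pow_right_injective le_rfl h3))
        (Fin.ext (Nat.pow_right_injective le_rfl h4))
    · intro t
      have : ∀ a b : Fin n, s0 a b ≠ 0 := by
        intro a b
        have h5 := smat_pos a b
        exact hcast _ h5.1.ne' (by omega)
      exact mul_ne_zero (this _ _) (this _ _)

end modp2

section finquot
open Matrix

lemma exists_inBall_card {G M : Type*} [Group G] [Monoid M] [Finite M] (f : G →* M)
    {S : Set G} (hS : Subgroup.closure S = ⊤) (g : G) :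
    ∃ g', InBall S (Nat.card M) g' ∧ f g' = f g := by
  classical
  set T : ℕ → Set M := fun k => {m | ∃ x, InBall S k x ∧ f x = m} with hT
  have hmono : ∀ k, T k ⊆ T (k + 1) := by
    rintro k _ ⟨x, hx, rfl⟩; exact ⟨x, hx.mono (Nat.le_succ k), rfl⟩
  have hstep : ∀ k, T (k + 1) = T k → T (k + 1 + 1) = T (k + 1) := by
    intro k hk
    refine le_antisymm ?_ (hmono _)
    rintro _ ⟨x, ⟨w, h1, h2, h3⟩, rfl⟩
    cases w with
    | nil => exact ⟨x, ⟨[], by simp, by simp, h3⟩, rfl⟩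
    | cons a w =>
      simp only [List.length_cons, List.prod_cons, List.mem_cons, forall_eq_or_imp] at h1 h2 h3
      have : f w.prod ∈ T (k + 1) := ⟨w.prod, ⟨w, by omega, h2.2, rfl⟩, rfl⟩
      rw [hk] at this
      obtain ⟨y, hy, hyw⟩ := this
      refine ⟨a * y, ?_, ?_⟩
      · have ha : InBall S 1 a := ⟨[a], by simp, by simpa using h2.1, by simp⟩
        rw [add_comm]; exact ha.mul hy
      · rw [map_mul, hyw, ← map_mul, h3]
  have hstab : ∀ k, T (k + 1) = T k → ∀ j, T (k + j) = T k := by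
    intro k hk j
    have : ∀ j, T (k + j + 1) = T (k + j) := by
      intro j; induction j with
      | zero => exact hk
      | succ j ih => exact hstep _ ih
    induction j with
    | zero => rfl
    | succ j ih => rw [← ih, ← this j]; rfl
  have hex : ∃ k ≤ Nat.card M, T (k + 1) = T k := by
    by_contra! hcon
    have hc : ∀ k ≤ Nat.card M + 1, k ≤ (T k).ncard := by
      intro k
      induction k with
      | zero => intro _; exact Nat.zero_le _
      | succ k ih =>
        intro hk
        have h1 := ih (by omega)
        have h2 : T k ⊂ T (k + 1) := (hmono k).ssubset_of_ne (hcon k (by omega)).symm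
        have := Set.ncard_lt_ncard h2 (Set.toFinite _)
        omega
    have h1 := hc _ le_rfl
    have h2 := Set.ncard_le_card (T (Nat.card M + 1))
    omega
  obtain ⟨k, hk, hTk⟩ := hex
  obtain ⟨j, hj⟩ := exists_inBall hS g
  have : f g ∈ T (k + j) := ⟨g, hj.mono (by omega), rfl⟩
  rw [hstab k hTk j] at this
  obtain ⟨x, hx, hxg⟩ := this
  exact ⟨x, hx.mono hk, hxg⟩

lemma exists_pow_one {G M : Type*} [Group G] [Monoid M] [Finite M] (f : G →* M) :
    ∃ e : ℕ, 0 < e ∧ ∀ g, f (g ^ e) = 1 := by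
  refine ⟨Nat.card Mˣ, Nat.card_pos, fun g => ?_⟩
  have := pow_card_eq_one' (x := f.toHomUnits g)
  have h2 := congrArg Units.val this
  rw [Units.val_pow_eq_pow_val, MonoidHom.coe_toHomUnits, Units.val_one] at h2
  rw [map_pow, h2]

variable {n : ℕ}

lemma config0 (hn : 2 ≤ n) : ∃ R e : ℕ, 0 < e ∧ ∀ S : Finset (OutF n),
    Subgroup.closure (S : Set (OutF n)) = ⊤ →
    ∃ u t : Fin (n * n) → OutF n, ∃ z : OutF n,
      (∀ i, InBall (S : Set (OutF n)) R (u i)) ∧ (∀ i, InBall (S : Set (OutF n)) R (t i)) ∧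
      InBall (S : Set (OutF n)) R z ∧
      gramd (fun i => outRep n (u i)) ≠ 0 ∧
      ((n * n : ℕ) : ℤ) ≤ |(outRep n z).trace| ∧
      ∀ i (w : OutF n),
        hank (Fintype.card (Fin n)) (c1 (outRep n (w ^ e * u i))) ≠ 0 ∧
        hank (Fintype.card (Finset (Fin n)))
          (c2 (2 ^ (2 ^ n - 1)) (outRep n (w ^ e * u i)) (outRep n (t i))) ≠ 0 ∧
        hank (Fintype.card (Fin n × Fin n))
          (c3 (2 ^ n) (outRep n (w ^ e * u i)) (outRep n (t i))) ≠ 0 := by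
  obtain ⟨p, hpp, hp, g, s, hg, hgs⟩ := modp_exists hn
  have : Fact p.Prime := ⟨hpp⟩
  obtain ⟨e, he, hw⟩ := exists_pow_one (outRepMod n p)
  refine ⟨Nat.card (Matrix (Fin n) (Fin n) (ZMod p)), e, he, fun S hS => ?_⟩
  have key : ∀ M : Matrix (Fin n) (Fin n) (ZMod p), M.det = 1 → ∃ x,
      InBall (S : Set (OutF n)) (Nat.card (Matrix (Fin n) (Fin n) (ZMod p))) x ∧
      outRepMod n p x = M := by
    intro M hM
    obtain ⟨x, hx⟩ := mem_SL hn p M hM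
    obtain ⟨x', h1, h2⟩ := exists_inBall_card (outRepMod n p) hS x
    exact ⟨x', h1, h2.trans hx⟩
  choose u hu1 hu2 using fun i => key (g i) (hgs i).1
  choose t ht1 ht2 using fun i => key (s i) (hgs i).2.1
  have h01 : (⟨0, by omega⟩ : Fin n) ≠ ⟨1, by omega⟩ := by simp
  obtain ⟨z, hz1, hz2⟩ := key (transvection ⟨0, by omega⟩ ⟨1, by omega⟩ ((n * n : ℕ) : ZMod p) *
    transvection ⟨1, by omega⟩ ⟨0, by omega⟩ 1) (by
      rw [det_mul, det_transvection_of_ne _ _ h01, det_transvection_of_ne _ _ h01.symm, one_mul])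
  have hmod : ∀ x, (Int.castRingHom (ZMod p)).mapMatrix (outRep n x) = outRepMod n p x := fun x => rfl
  have hA : ∀ i w, (Int.castRingHom (ZMod p)).mapMatrix (outRep n (w ^ e * u i)) = g i := by
    intro i w
    rw [hmod, map_mul, hw, one_mul, hu2]
  have ht : ∀ i, (Int.castRingHom (ZMod p)).mapMatrix (outRep n (t i)) = s i := by
    intro i; rw [hmod, ht2]
  refine ⟨u, t, z, hu1, ht1, hz1, ?_, ?_, ?_⟩
  · intro h
    have h2 := congrArg (Int.castRingHom (ZMod p)) h
    rw [gramd_map, map_zero] at h2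
    apply hg
    convert h2 using 3 with i
    rw [hmod, hu2]
  · have h2 : (((outRep n z).trace : ℤ) : ZMod p) = ((n * n + n : ℕ) : ZMod p) := by
      have h3 := congrArg trace ((hmod z).trans hz2)
      have h4 : ((Int.castRingHom (ZMod p)).mapMatrix (outRep n z)).trace =
        (((outRep n z).trace : ℤ) : ZMod p) :=
        (AddMonoidHom.map_trace (Int.castRingHom (ZMod p)).toAddMonoidHom _).symm
      rw [h4] at h3
      rw [h3, transvection, transvection, Matrix.add_mul, Matrix.mul_add, Matrix.mul_add,
        Matrix.one_mul, Matrix.one_mul, Matrix.mul_one, single_mul_single_same, trace_add, trace_add,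
        trace_add, trace_single_eq_of_ne _ _ _ h01.symm, trace_single_eq_of_ne _ _ _ h01,
        trace_single_eq_same, trace_one]
      simp
      ring
    have h3 : (((outRep n z).trace - (n * n + n : ℕ) : ℤ) : ZMod p) = 0 := by
      push_cast at h2 ⊢; rw [h2]; ring
    rw [ZMod.intCast_zmod_eq_zero_iff_dvd] at h3
    obtain ⟨c, hc⟩ := h3
    have hp' : 2 * ((n * n + n : ℕ) : ℤ) < p := by exact_mod_cast hp
    rw [le_abs]
    have hnn : ((n * n + n : ℕ) : ℤ) = (n * n : ℕ) + (n : ℤ) := by push_cast; ring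
    rcases le_or_gt 0 c with h | h
    · left
      have : 0 ≤ (p : ℤ) * c := by positivity
      omega
    · right
      have : (p : ℤ) * c ≤ - p := by nlinarith
      omega
  · intro i w
    obtain ⟨-, -, h1, h2, h3⟩ := hgs i
    refine ⟨fun h => h1 ?_, fun h => h2 ?_, fun h => h3 ?_⟩
    · have := congrArg (Int.castRingHom (ZMod p)) h
      rw [hank_map, map_zero] at this
      simpa only [c1_map, hA] using this
    · have := congrArg (Int.castRingHom (ZMod p)) h
      rw [hank_map, map_zero] at this
      simpa only [c2_map, hA, ht] using this
    · have := congrArg (Int.castRingHom (ZMod p)) h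
      rw [hank_map, map_zero] at this
      simpa only [c3_map, hA, ht] using this

end finquot

section phi
open Matrix
open scoped Kronecker
variable {n : ℕ}

/-- the Gram matrix of the trace form -/
def gramM (u : Fin (n * n) → Matrix (Fin n) (Fin n) ℂ) : Matrix (Fin (n * n)) (Fin (n * n)) ℂ :=
  Matrix.of fun i j => (u i * u j).trace

/-- properties of the left regular representation in the basis `u` -/
structure IsPhi (u : Fin (n * n) → Matrix (Fin n) (Fin n) ℂ)
    (Φ : Matrix (Fin n) (Fin n) ℂ →ₐ[ℂ] Matrix (Fin (n * n)) (Fin (n * n)) ℂ) : Prop where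
  inj : Function.Injective Φ
  formula : ∀ x, Φ x = (gramM u)⁻¹ * Matrix.of fun i j => (u i * x * u j).trace
  det_eq : ∀ x, (Φ x).det = x.det ^ n
  trace_eq : ∀ x, (Φ x).trace = n * x.trace
  expand : ∀ x, x = ∑ k, ((gramM u)⁻¹ *ᵥ fun i => (u i * x).trace) k • u k

lemma exists_Phi (u : Fin (n * n) → Matrix (Fin n) (Fin n) ℂ) (hu : gramd u ≠ 0) :
    ∃ Φ : Matrix (Fin n) (Fin n) ℂ →ₐ[ℂ] Matrix (Fin (n * n)) (Fin (n * n)) ℂ, IsPhi u Φ := by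
  set V : Matrix (Fin n × Fin n) (Fin (n * n)) ℂ := Matrix.of fun a j => u j a.1 a.2 with hV
  set W : Matrix (Fin (n * n)) (Fin n × Fin n) ℂ := Matrix.of fun k a => u k a.2 a.1 with hW
  have hWxV : ∀ x : Matrix (Fin n) (Fin n) ℂ,
      W * (x ⊗ₖ (1 : Matrix (Fin n) (Fin n) ℂ)) * V = Matrix.of fun i j => (u i * x * u j).trace := by
    intro x
    ext i j
    simp only [Matrix.mul_apply, of_apply, trace, diag_apply, hW, hV, Fintype.sum_prod_type,
      kroneckerMap_apply, Matrix.one_apply, mul_ite, mul_one, mul_zero, Finset.sum_ite_eq',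
      Finset.mem_univ, if_true]
    rw [Finset.sum_comm]
  have hWV : W * V = gramM u := by
    have := hWxV 1
    rw [one_kronecker_one, Matrix.mul_one] at this
    rw [this, gramM]; simp
  have hdet : IsUnit (gramM u).det := isUnit_iff_ne_zero.2 hu
  have h1 : ((gramM u)⁻¹ * W) * V = 1 := by
    rw [Matrix.mul_assoc, hWV, nonsing_inv_mul _ hdet]
  have h2 : V * ((gramM u)⁻¹ * W) = 1 :=
    (mul_eq_one_comm_of_card_eq _ _ _ (by simp)).1 h1
  set V' := (gramM u)⁻¹ * W with hV'
  have hmul : ∀ x y : Matrix (Fin n) (Fin n) ℂ, V' * ((x * y) ⊗ₖ (1 : Matrix (Fin n) (Fin n) ℂ)) * V =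
      (V' * (x ⊗ₖ (1 : Matrix (Fin n) (Fin n) ℂ)) * V) * (V' * (y ⊗ₖ (1 : Matrix (Fin n) (Fin n) ℂ)) * V) := by
    intro x y
    calc _ = V' * (x ⊗ₖ (1 : Matrix (Fin n) (Fin n) ℂ)) * (y ⊗ₖ (1 : Matrix (Fin n) (Fin n) ℂ)) * V := by
            rw [Matrix.mul_assoc V' (x ⊗ₖ (1 : Matrix (Fin n) (Fin n) ℂ)), ← mul_kronecker_mul, Matrix.one_mul]
      _ = V' * (x ⊗ₖ (1 : Matrix (Fin n) (Fin n) ℂ)) * (V * V') * (y ⊗ₖ (1 : Matrix (Fin n) (Fin n) ℂ)) * V := by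
            rw [h2, Matrix.mul_one]
      _ = _ := by simp only [Matrix.mul_assoc]
  let L : Matrix (Fin n) (Fin n) ℂ →ₗ[ℂ] Matrix (Fin (n * n)) (Fin (n * n)) ℂ :=
    { toFun := fun x => V' * (x ⊗ₖ (1 : Matrix (Fin n) (Fin n) ℂ)) * V
      map_add' := fun x y => by rw [add_kronecker, Matrix.mul_add, Matrix.add_mul]
      map_smul' := fun c x => by rw [smul_kronecker, Matrix.mul_smul, Matrix.smul_mul]; rfl }
  have hone : V' * ((1 : Matrix (Fin n) (Fin n) ℂ) ⊗ₖ (1 : Matrix (Fin n) (Fin n) ℂ)) * V = 1 := by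
    rw [one_kronecker_one, Matrix.mul_one, h1]
  let Φ := AlgHom.ofLinearMap L hone hmul
  have hΦ : ∀ x, Φ x = V' * (x ⊗ₖ (1 : Matrix (Fin n) (Fin n) ℂ)) * V := fun x => rfl
  refine ⟨Φ, ?_, ?_, ?_, ?_, ?_⟩
  · intro x y hxy
    rw [hΦ, hΦ] at hxy
    have h3 : ∀ M : Matrix (Fin n × Fin n) (Fin n × Fin n) ℂ, V * (V' * M * V) * V' = M := by
      intro M
      calc _ = (V * V') * M * (V * V') := by simp only [Matrix.mul_assoc]
        _ = M := by rw [h2, Matrix.one_mul, Matrix.mul_one]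
    have h4 := congrArg (fun M => V * M * V') hxy
    simp only [h3] at h4
    ext i j
    have := congrFun (congrFun h4 (i, i)) (j, i)
    simpa using this
  · intro x
    rw [hΦ, hV', ← hWxV, Matrix.mul_assoc, Matrix.mul_assoc, Matrix.mul_assoc]
  · intro x
    rw [hΦ, det_conj_of_mul_eq_one h1 h2, det_kronecker]; simp
  · intro x
    rw [hΦ, trace_mul_comm, ← Matrix.mul_assoc, h2, Matrix.one_mul, trace_kronecker, trace_one]
    simp [mul_comm]
  · intro x
    have e1 : (V *ᵥ (V' *ᵥ fun a => x a.1 a.2)) = fun a => x a.1 a.2 := by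
      rw [mulVec_mulVec, h2, one_mulVec]
    have e2 : (W *ᵥ fun a => x a.1 a.2) = fun i => (u i * x).trace := by
      ext i
      simp only [mulVec, dotProduct, hW, of_apply, trace, diag_apply, Matrix.mul_apply,
        Fintype.sum_prod_type]
      rw [Finset.sum_comm]
    rw [hV', ← mulVec_mulVec, e2] at e1
    ext a b
    have := congrFun e1 (a, b)
    simp only [mulVec, dotProduct, hV, of_apply] at this
    simp only [mulVec, dotProduct, Matrix.sum_apply, Matrix.smul_apply, smul_eq_mul]
    rw [← this]
    exact Finset.sum_congr rfl fun _ _ => mul_comm _ _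

attribute [local instance] Matrix.linftyOpNormedRing Matrix.linftyOpNormedAlgebra
  Matrix.linftyOpNormedAddCommGroup Matrix.linftyOpNormedSpace

variable {Ω : Type*} {Λ : Ω → ℝ}
  {u : Ω → Fin (n * n) → Matrix (Fin n) (Fin n) ℂ}
  {Φ : Ω → Matrix (Fin n) (Fin n) ℂ →ₐ[ℂ] Matrix (Fin (n * n)) (Fin (n * n)) ℂ}

lemma gram_inv_PB (hΛ : ∀ ω, 2 ≤ Λ ω) (hu : ∀ i j, PB Λ (fun ω => (u ω i * u ω j).trace))
    (hg : ∀ ω, 1 ≤ ‖gramd (u ω)‖) : PB Λ (fun ω => (gramM (u ω))⁻¹) :=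
  PB.matinv hΛ hu (PB.inv_of_ge hΛ hg)

lemma phi_PB (hΛ : ∀ ω, 2 ≤ Λ ω) (hu : ∀ i j, PB Λ (fun ω => (u ω i * u ω j).trace))
    (hg : ∀ ω, 1 ≤ ‖gramd (u ω)‖) (hΦ : ∀ ω, IsPhi (u ω) (Φ ω)) (x : Ω → Matrix (Fin n) (Fin n) ℂ)
    (hx : ∀ i j, PB Λ (fun ω => (u ω i * x ω * u ω j).trace)) : PB Λ (fun ω => Φ ω (x ω)) := by
  simp only [(hΦ _).formula]
  exact (gram_inv_PB hΛ hu hg).mul hΛ (PB.of_entry hΛ hx)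

lemma phi_PB' (hΛ : ∀ ω, 2 ≤ Λ ω) (hu : ∀ i j, PB Λ (fun ω => (u ω i * u ω j).trace))
    (hg : ∀ ω, 1 ≤ ‖gramd (u ω)‖) (hΦ : ∀ ω, IsPhi (u ω) (Φ ω)) (x : Ω → Matrix (Fin n) (Fin n) ℂ)
    (hΦu : ∀ i, PB Λ (fun ω => Φ ω (u ω i)))
    (hx : ∀ i, PB Λ (fun ω => (u ω i * x ω).trace)) : PB Λ (fun ω => Φ ω (x ω)) := by
  have h : ∀ ω, Φ ω (x ω) =
      ∑ k, ((gramM (u ω))⁻¹ *ᵥ fun i => (u ω i * x ω).trace) k • Φ ω (u ω k) := by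
    intro ω
    conv_lhs => rw [(hΦ ω).expand (x ω)]
    simp only [map_sum, map_smul]
  simp only [h]
  refine PB.sum hΛ _ fun k _ => PB.smul hΛ ?_ (hΦu k)
  simp only [mulVec, dotProduct]
  exact PB.sum hΛ _ fun j _ => ((gram_inv_PB hΛ hu hg).entry k j).mul hΛ (hx j)

lemma phi_trace_PB (hn : n ≠ 0) (hΛ : ∀ ω, 2 ≤ Λ ω) (hΦ : ∀ ω, IsPhi (u ω) (Φ ω))
    (x : Ω → Matrix (Fin n) (Fin n) ℂ) (hx : PB Λ (fun ω => Φ ω (x ω))) :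
    PB Λ (fun ω => (x ω).trace) := by
  refine ((PB.const hΛ (n : ℂ)⁻¹).mul hΛ (hx.trace hΛ)).mono fun ω => le_of_eq ?_
  rw [(hΦ ω).trace_eq, ← mul_assoc, inv_mul_cancel₀ (by exact_mod_cast hn), one_mul]

lemma PB.of_pow (hΛ : ∀ ω, 2 ≤ Λ ω) (hn : n ≠ 0) {f : Ω → ℂ} (h : PB Λ (fun ω => f ω ^ n)) :
    PB Λ f := by
  obtain ⟨c, hc⟩ := h
  refine ⟨c, fun ω => ?_⟩
  have h1 := hc ω
  rw [norm_pow] at h1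
  have hL := hΛ ω
  have h2 : Λ ω ^ c ≤ (Λ ω ^ c) ^ n := le_self_pow₀ (one_le_pow₀ (by linarith)) hn
  exact le_of_pow_le_pow_left₀ hn (by positivity) (h1.trans h2)

lemma phi_det_PB (hn : n ≠ 0) (hΛ : ∀ ω, 2 ≤ Λ ω) (hΦ : ∀ ω, IsPhi (u ω) (Φ ω))
    (x : Ω → Matrix (Fin n) (Fin n) ℂ) (hx : PB Λ (fun ω => Φ ω (x ω))) :
    PB Λ (fun ω => (x ω).det) := by
  refine PB.of_pow hΛ hn ((hx.det hΛ).mono fun ω => le_of_eq ?_)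
  rw [(hΦ ω).det_eq]

lemma phi_inv_PB (hΛ : ∀ ω, 2 ≤ Λ ω) (hΦ : ∀ ω, IsPhi (u ω) (Φ ω))
    (x : Ω → Matrix (Fin n) (Fin n) ℂ) (hx : PB Λ (fun ω => Φ ω (x ω)))
    (hd : PB Λ (fun ω => ((x ω).det)⁻¹)) : PB Λ (fun ω => (Φ ω (x ω))⁻¹) := by
  refine PB.matinv hΛ (fun i j => hx.entry i j) ((hd.pow hΛ n).mono fun ω => le_of_eq ?_)
  rw [(hΦ ω).det_eq, inv_pow]

/-- eigenvalues are bounded by the norm -/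
lemma phi_eig {u : Fin (n * n) → Matrix (Fin n) (Fin n) ℂ}
    {Φ : Matrix (Fin n) (Fin n) ℂ →ₐ[ℂ] Matrix (Fin (n * n)) (Fin (n * n)) ℂ} (hΦ : IsPhi u Φ)
    {x y : Matrix (Fin n) (Fin n) ℂ} {μ : ℂ} (h : x * y = μ • y) (hy : y ≠ 0) : ‖μ‖ ≤ ‖Φ x‖ := by
  have h1 : Φ x * Φ y = μ • Φ y := by rw [← map_mul, h, map_smul]
  have h2 : Φ y ≠ 0 := fun h0 => hy (hΦ.inj (by rw [h0, map_zero]))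
  have h3 : 0 < ‖Φ y‖ := norm_pos_iff.2 h2
  have h4 : ‖μ‖ * ‖Φ y‖ ≤ ‖Φ x‖ * ‖Φ y‖ := by
    rw [← norm_smul, ← h1]; exact norm_mul_le _ _
  exact le_of_mul_le_mul_right h4 h3

end phi

section diagz
open Matrix Polynomial
variable {n : ℕ}

lemma card_roots_of_hank (A : Matrix (Fin n) (Fin n) ℂ)
    (h : hank (Fintype.card (Fin n)) (c1 A) ≠ 0) : n ≤ A.charpoly.roots.toFinset.card := by
  by_contra! hlt
  set rt := A.charpoly.roots.toFinset with hrt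
  set f : ℂ[X] := ∏ a ∈ rt, (X - C a) with hf
  have hmon : f.Monic := monic_prod_of_monic _ _ fun a _ => monic_X_sub_C a
  have hdeg : f.natDegree = rt.card := by
    rw [hf, natDegree_prod_of_monic _ _ fun a _ => monic_X_sub_C a]; simp
  have hcm : A.charpoly.Monic := charpoly_monic A
  have hdvd : A.charpoly ∣ f ^ n := by
    have e1 : A.charpoly = (A.charpoly.roots.map fun a => X - C a).prod :=
      (IsAlgClosed.splits A.charpoly).eq_prod_roots_of_monic hcm
    have e2 : f ^ n = ((n • rt.val).map fun a => X - C a).prod := by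
      rw [Multiset.map_nsmul, Multiset.prod_nsmul]; rfl
    rw [e1, e2]
    refine Multiset.prod_dvd_prod_of_le (Multiset.map_le_map ?_)
    rw [Multiset.le_iff_count]
    intro a
    rw [Multiset.count_nsmul]
    by_cases ha : a ∈ A.charpoly.roots
    · have h1 : rt.val.count a = 1 := Multiset.count_eq_one_of_mem rt.nodup (by simpa [hrt] using ha)
      rw [h1]
      have h2 := Multiset.count_le_card a A.charpoly.roots
      have h3 := A.charpoly.card_roots'
      rw [charpoly_natDegree_eq_dim, Fintype.card_fin] at h3
      omega
    · rw [Multiset.count_eq_zero_of_notMem ha]; exact Nat.zero_le _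
  have hnil : IsNilpotent (aeval A f) := by
    refine ⟨n, ?_⟩
    obtain ⟨q, hq⟩ := hdvd
    rw [← map_pow, hq, map_mul, aeval_self_charpoly, zero_mul]
  have htr : ∀ l : ℕ, (A ^ l * aeval A f).trace = 0 := by
    intro l
    have hc : Commute (A ^ l) (aeval A f) := by
      have : A ^ l = aeval A (X ^ l : ℂ[X]) := by simp
      rw [this]
      exact Commute.map (Commute.all _ _) (aeval A)
    have := Matrix.isNilpotent_trace_of_isNilpotent (hc.isNilpotent_mul_left hnil)
    exact this.eq_zero
  apply h
  rw [hank]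
  refine Matrix.exists_mulVec_eq_zero_iff.1 ⟨fun k => f.coeff k, ?_, ?_⟩
  · intro h0
    have := congrFun h0 ⟨f.natDegree, by rw [Fintype.card_fin, hdeg]; exact hlt⟩
    simp only [Pi.zero_apply] at this
    rw [hmon.coeff_natDegree] at this
    exact one_ne_zero this
  · ext l
    have h1 := htr l
    rw [aeval_eq_sum_range' (n := Fintype.card (Fin n)) (by rw [Fintype.card_fin, hdeg]; exact hlt),
      Finset.mul_sum, trace_sum, ← Fin.sum_univ_eq_sum_range
        (fun k => (A ^ (l : ℕ) * f.coeff k • A ^ k).trace)] at h1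
    simp only [mulVec, dotProduct, of_apply, Pi.zero_apply, c1]
    rw [← h1]
    refine Finset.sum_congr rfl fun k _ => ?_
    rw [Matrix.mul_smul, trace_smul, ← pow_add, smul_eq_mul, mul_comm]

lemma diag_of_hank (A : Matrix (Fin n) (Fin n) ℂ)
    (h : hank (Fintype.card (Fin n)) (c1 A) ≠ 0) :
    ∃ (l : Fin n → ℂ) (g g' : Matrix (Fin n) (Fin n) ℂ), g' * g = 1 ∧ A = g * diagonal l * g' := by
  have hc := card_roots_of_hank A h
  obtain ⟨l, hl⟩ : Nonempty (Fin n ↪ A.charpoly.roots.toFinset) :=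
    Function.Embedding.nonempty_of_card_le (by simpa using hc)
  have hev : ∀ j : Fin n, Module.End.HasEigenvalue (Matrix.toLin' A) (l j : ℂ) := by
    intro j
    have := (l j).2
    rw [Multiset.mem_toFinset, mem_roots (charpoly_monic A).ne_zero] at this
    rw [Module.End.hasEigenvalue_iff_isRoot_charpoly]
    simpa using this
  choose v hv using fun j => (hev j).exists_hasEigenvector
  have hli : LinearIndependent ℂ v := Module.End.eigenvectors_linearIndependent' (Matrix.toLin' A)
    (fun j => (l j : ℂ)) (fun i j hij => hl (Subtype.ext hij)) v hv
  set g : Matrix (Fin n) (Fin n) ℂ := Matrix.of fun i j => v j i with hg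
  have hdet : IsUnit g := by
    rw [← Matrix.linearIndependent_cols_iff_isUnit]
    exact hli
  have hgd : IsUnit g.det := (Matrix.isUnit_iff_isUnit_det g).1 hdet
  have hAg : A * g = g * diagonal (fun j => (l j : ℂ)) := by
    ext i j
    have h1 := congrFun (hv j).apply_eq_smul i
    rw [toLin'_apply, Pi.smul_apply, smul_eq_mul, mulVec, dotProduct] at h1
    rw [mul_diagonal, Matrix.mul_apply]
    simp only [hg, of_apply]
    rw [h1, mul_comm]
  refine ⟨fun j => l j, g, g⁻¹, nonsing_inv_mul _ hgd, ?_⟩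
  rw [← hAg, Matrix.mul_assoc, mul_nonsing_inv _ hgd, Matrix.mul_one]

end diagz

section pingpong
variable {R : Type*} [NormedRing R]

/-- `x` maps the range of `P` to the graph of `T` -/
def IsSlope (P x T : R) : Prop :=
  T * P = T ∧ P * T = 0 ∧ (∃ V', P * x * P * V' = P) ∧ (1 - P) * x * P = T * (P * x * P)

lemma IsSlope.unique {P x T T' : R} (h : IsSlope P x T) (h' : IsSlope P x T') : T = T' := by
  obtain ⟨h1, h2, ⟨V, hV⟩, h4⟩ := h
  obtain ⟨k1, k2, -, k4⟩ := h'
  calc T = T * (P * x * P * V) := by rw [hV, h1]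
    _ = (1 - P) * x * P * V := by rw [h4]; simp only [mul_assoc]
    _ = T' * (P * x * P * V) := by rw [k4]; simp only [mul_assoc]
    _ = T' := by rw [hV, k1]

lemma IsSlope.one {P : R} (hP : P * P = P) : IsSlope P 1 0 := by
  refine ⟨by simp, by simp, ⟨P, by simp [hP]⟩, ?_⟩
  simp [sub_mul, hP]

lemma IsSlope.step_D {P x T D D' : R} (h : IsSlope P x T) (hDP : D * P = P * D)
    (hDD : D * D' = 1) (hDD' : D' * D = 1) : IsSlope P (D * x) (D * T * D') := by
  obtain ⟨h1, h2, ⟨V, hV⟩, h4⟩ := h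
  have hD'P : P * D' = D' * P := by
    calc P * D' = (D' * D) * P * D' := by rw [hDD', one_mul]
      _ = D' * (D * P) * D' := by simp only [mul_assoc]
      _ = D' * P * (D * D') := by rw [hDP]; simp only [mul_assoc]
      _ = D' * P := by rw [hDD, mul_one]
  have hx : P * (D * x) * P = D * (P * x * P) := by
    rw [← mul_assoc P D, ← hDP]; simp only [mul_assoc]
  refine ⟨?_, ?_, ⟨V * D', ?_⟩, ?_⟩
  · calc D * T * D' * P = D * (T * P) * D' := by simp only [mul_assoc, hD'P]
      _ = _ := by rw [h1]
  · calc P * (D * T * D') = (P * D) * T * D' := by simp only [mul_assoc]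
      _ = D * (P * T) * D' := by rw [← hDP]; simp only [mul_assoc]
      _ = 0 := by rw [h2]; simp
  · calc P * (D * x) * P * (V * D') = D * (P * x * P * V) * D' := by
          rw [hx]; simp only [mul_assoc]
      _ = P * (D * D') := by rw [hV, hDP, mul_assoc]
      _ = P := by rw [hDD, mul_one]
  · have hQ : (1 - P) * D = D * (1 - P) := by rw [sub_mul, mul_sub, hDP, one_mul, mul_one]
    calc (1 - P) * (D * x) * P = (1 - P) * D * x * P := by simp only [mul_assoc]
      _ = D * ((1 - P) * x * P) := by rw [hQ]; simp only [mul_assoc]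
      _ = D * T * (D' * D) * (P * x * P) := by rw [h4, hDD', mul_one]; simp only [mul_assoc]
      _ = _ := by rw [hx]; simp only [mul_assoc]

lemma IsSlope.step_s {P x T s U U' : R} (hP : P * P = P) (h : IsSlope P x T)
    (hU : U = P * s * P + P * s * T + (1 - P)) (hUU : U * U' = 1) (hUU' : U' * U = 1) :
    IsSlope P (s * x) (((1 - P) * s * P + (1 - P) * s * T) * U') := by
  obtain ⟨h1, h2, ⟨V, hV⟩, h4⟩ := h
  have hQP : (1 - P) * P = 0 := by rw [sub_mul, one_mul, hP, sub_self]
  have hPQ : P * (1 - P) = 0 := by rw [mul_sub, mul_one, hP, sub_self]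
  have hUP : U * P = P * s * P + P * s * T := by
    rw [hU, add_mul, add_mul, hQP, add_zero, mul_assoc _ T P, h1, mul_assoc _ P P, hP]
  have hPU : P * U = P * s * P + P * s * T := by
    rw [hU, mul_add, mul_add, hPQ, add_zero, mul_assoc P s, mul_assoc P s, ← mul_assoc P P,
      ← mul_assoc P P, hP]
  have hU'P : U' * P = P * U' := by
    calc U' * P = U' * P * (U * U') := by rw [hUU, mul_one]
      _ = U' * (P * U) * U' := by simp only [mul_assoc]
      _ = (U' * U) * P * U' := by rw [hPU, ← hUP]; simp only [mul_assoc]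
      _ = P * U' := by rw [hUU', one_mul]
  have hxP : x * P = (P + T) * (P * x * P) := by
    calc x * P = P * x * P + (1 - P) * x * P := by
          rw [← add_mul, ← add_mul]; simp
      _ = (P * P) * x * P + T * (P * x * P) := by rw [h4, hP]
      _ = _ := by rw [add_mul]; simp only [mul_assoc]
  have hx : P * (s * x) * P = U * P * (P * x * P) := by
    calc P * (s * x) * P = P * s * (x * P) := by simp only [mul_assoc]
      _ = (P * s * P + P * s * T) * (P * x * P) := by
        rw [hxP, ← mul_assoc (P * s), mul_add]
      _ = _ := by rw [hUP]
  refine ⟨?_, ?_, ⟨V * U', ?_⟩, ?_⟩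
  · rw [mul_assoc, hU'P, ← mul_assoc, add_mul, mul_assoc _ T P, h1, mul_assoc _ P P, hP]
  · calc P * (((1 - P) * s * P + (1 - P) * s * T) * U')
        = (P * (1 - P)) * (s * P + s * T) * U' := by
          simp only [mul_assoc, mul_add, add_mul]
      _ = 0 := by rw [hPQ]; simp
  · calc P * (s * x) * P * (V * U') = U * P * (P * x * P * V) * U' := by
          rw [hx]; simp only [mul_assoc]
      _ = U * (P * P) * U' := by rw [hV]; simp only [mul_assoc]
      _ = P * (U * U') := by rw [hP, hUP, ← hPU, mul_assoc]
      _ = P := by rw [hUU, mul_one]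
  · calc (1 - P) * (s * x) * P = (1 - P) * s * (x * P) := by simp only [mul_assoc]
      _ = ((1 - P) * s * P + (1 - P) * s * T) * (P * x * P) := by
        rw [hxP, ← mul_assoc ((1 - P) * s), mul_add]
      _ = ((1 - P) * s * P + (1 - P) * s * T) * (U' * U) * (P * (P * x * P)) := by
        rw [hUU', mul_one, ← mul_assoc P, ← mul_assoc P, hP]
      _ = _ := by rw [hx]; simp only [mul_assoc]

variable [CompleteSpace R]

lemma pingpong {P s s' D D' C' : R} {K ε : ℝ} (hK : 1 ≤ K) (hP : P * P = P)
    (hDP : D * P = P * D) (hDD : D * D' = 1) (hDD' : D' * D = 1) (hss' : s' * s = 1)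
    (hCC : (P * s * P + (1 - P)) * C' = 1) (hCC' : C' * (P * s * P + (1 - P)) = 1)
    (nP : ‖P‖ ≤ K) (nQ : ‖1 - P‖ ≤ K) (ns : ‖s‖ ≤ K) (nC : ‖C'‖ ≤ K)
    (nlow : 1 ≤ K * ‖(1 - P) * s * P‖) (nε : ‖D * (1 - P)‖ * ‖P * D'‖ ≤ ε)
    (hε : 48 * K ^ 8 * ε ≤ 1) (l l' : List Bool) (hl : l.length = l'.length)
    (h : bword D (s * D) l = bword D (s * D) l') : l = l' := by
  have hK0 : 0 < K := by linarith
  have hbc : ∀ (c : Bool) (l : List Bool),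
      bword D (s * D) (c :: l) = (if c then s * D else D) * bword D (s * D) l := by
    intro c l; simp [bword]
  have hε0 : 0 ≤ ε := le_trans (by positivity) nε
  have hε4 : ε * (4 * K ^ 4) * (12 * K ^ 4) ≤ 1 := by
    calc ε * (4 * K ^ 4) * (12 * K ^ 4) = 48 * K ^ 8 * ε := by ring
      _ ≤ 1 := hε
  -- contraction step
  have hD : ∀ x T, IsSlope P x T → ‖T‖ ≤ 4 * K ^ 4 →
      ∃ T', IsSlope P (D * x) T' ∧ ‖T'‖ * (12 * K ^ 4) ≤ 1 := by
    intro x T hT hn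
    refine ⟨_, hT.step_D hDP hDD hDD', ?_⟩
    have e : D * T * D' = (D * (1 - P)) * T * (P * D') := by
      have e1 : (1 - P) * T = T := by rw [sub_mul, hT.2.1, one_mul, sub_zero]
      calc D * T * D' = D * ((1 - P) * T * P) * D' := by rw [e1, hT.1]
        _ = _ := by simp only [mul_assoc]
    have h1 : ‖D * T * D'‖ ≤ ε * (4 * K ^ 4) := by
      rw [e]
      calc _ ≤ ‖D * (1 - P)‖ * ‖T‖ * ‖P * D'‖ :=
            (norm_mul_le _ _).trans (mul_le_mul_of_nonneg_right (norm_mul_le _ _) (norm_nonneg _))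
        _ = (‖D * (1 - P)‖ * ‖P * D'‖) * ‖T‖ := by ring
        _ ≤ ε * (4 * K ^ 4) := mul_le_mul nε hn (norm_nonneg _) hε0
    exact le_trans (mul_le_mul_of_nonneg_right h1 (by positivity)) hε4
  have hs : ∀ x T, IsSlope P x T → ‖T‖ * (12 * K ^ 4) ≤ 1 →
      ∃ T', IsSlope P (s * x) T' ∧ 1 < ‖T'‖ * (12 * K ^ 4) ∧ ‖T'‖ ≤ 4 * K ^ 4 := by
    intro x T hT hn
    have hK3 : 1 ≤ K ^ 3 := one_le_pow₀ hK
    have hK2 : 1 ≤ K ^ 2 := one_le_pow₀ hK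
    have nT0 := norm_nonneg T
    have nT3 : ‖T‖ * K ^ 3 ≤ 1 / 12 := by
      have : ‖T‖ * K ^ 3 ≤ ‖T‖ * K ^ 4 :=
        mul_le_mul_of_nonneg_left (pow_le_pow_right₀ hK (by norm_num)) nT0
      linarith
    have nT1 : ‖T‖ ≤ 1 := by nlinarith
    set E := P * s * T with hE
    set F := (1 - P) * s * T with hF
    have nmul3 : ∀ {a b c : R} {α β γ : ℝ}, ‖a‖ ≤ α → ‖b‖ ≤ β → ‖c‖ ≤ γ → 0 ≤ α → 0 ≤ β →
        ‖a * b * c‖ ≤ α * β * γ := by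
      intro a b c α β γ ha hb hc h0 h0'
      refine (norm_mul_le _ _).trans (mul_le_mul ?_ hc (norm_nonneg _) (by positivity))
      exact (norm_mul_le _ _).trans (mul_le_mul ha hb (norm_nonneg _) h0)
    have nE : ‖E‖ ≤ K * K * ‖T‖ := nmul3 nP ns le_rfl hK0.le hK0.le
    have nF : ‖F‖ ≤ K * K * ‖T‖ := nmul3 nQ ns le_rfl hK0.le hK0.le
    have nCE : ‖C' * E‖ ≤ 1 / 12 := by
      calc _ ≤ ‖C'‖ * ‖E‖ := norm_mul_le _ _
        _ ≤ K * (K * K * ‖T‖) := mul_le_mul nC nE (norm_nonneg _) hK0.le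
        _ = ‖T‖ * K ^ 3 := by ring
        _ ≤ _ := nT3
    have nEC : ‖E‖ * ‖C'‖ ≤ 1 / 12 := by
      calc _ ≤ (K * K * ‖T‖) * K := mul_le_mul nE nC (norm_nonneg _) (by positivity)
        _ = ‖T‖ * K ^ 3 := by ring
        _ ≤ _ := nT3
    set C := P * s * P + (1 - P) with hC
    obtain ⟨w, hw⟩ := isUnit_one_sub_of_norm_lt_one (x := - (C' * E)) (by rw [norm_neg]; linarith)
    have hU1 : P * s * P + P * s * T + (1 - P) = C * w := by
      rw [hw, sub_neg_eq_add, mul_add, mul_one, ← mul_assoc, hCC, one_mul]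
      simp only [hC]; abel
    set U := P * s * P + P * s * T + (1 - P) with hU
    set U' : R := ↑w⁻¹ * C' with hU'
    have hUU : U * U' = 1 := by
      calc U * U' = C * (w * ↑w⁻¹) * C' := by rw [hU1, hU']; simp only [mul_assoc]
        _ = 1 := by rw [Units.mul_inv, mul_one, hCC]
    have hUU' : U' * U = 1 := by
      calc U' * U = ↑w⁻¹ * (C' * C) * w := by rw [hU1, hU']; simp only [mul_assoc]
        _ = 1 := by rw [hCC', mul_one, Units.inv_mul]
    have nU' : ‖U'‖ ≤ 2 * K := by
      have e : U' = C' - U' * E * C' := by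
        have e1 : U' * C = 1 - U' * E := by
          rw [← hUU', eq_sub_iff_add_eq, ← mul_add]; congr 1; simp only [hC, hU, hE]; abel
        calc U' = U' * C * C' := by rw [mul_assoc, hCC, mul_one]
          _ = _ := by rw [e1, sub_mul, one_mul]
      have h1 : ‖U'‖ ≤ ‖C'‖ + ‖U'‖ * (‖E‖ * ‖C'‖) := by
        calc ‖U'‖ = ‖C' - U' * E * C'‖ := by rw [← e]
          _ ≤ ‖C'‖ + ‖U' * E * C'‖ := norm_sub_le _ _
          _ ≤ _ := by
            gcongr
            rw [mul_assoc]
            exact (norm_mul_le _ _).trans (mul_le_mul_of_nonneg_left (norm_mul_le _ _) (norm_nonneg _))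
      have h2 := mul_le_mul_of_nonneg_left nEC (norm_nonneg U')
      linarith
    have nQsP : ‖(1 - P) * s * P‖ ≤ K * K * K := nmul3 nQ ns nP hK0.le hK0.le
    have nPsP : ‖P * s * P‖ ≤ K * K * K := nmul3 nP ns nP hK0.le hK0.le
    refine ⟨_, hT.step_s hP hU hUU hUU', ?_, ?_⟩
    · set T' := ((1 - P) * s * P + F) * U' with hT'
      have e : (1 - P) * s * P = T' * U - F := by
        rw [hT', mul_assoc _ U' U, hUU', mul_one, add_sub_cancel_right]
      have nU : ‖U‖ ≤ 3 * K ^ 3 := by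
        calc ‖U‖ ≤ ‖P * s * P + E‖ + ‖1 - P‖ := norm_add_le _ _
          _ ≤ ‖P * s * P‖ + ‖E‖ + ‖1 - P‖ := by gcongr; exact norm_add_le _ _
          _ ≤ K * K * K + K * K * ‖T‖ + K := by gcongr
          _ ≤ K * K * K + K * K * 1 + K := by gcongr
          _ ≤ 3 * K ^ 3 := by nlinarith [mul_nonneg hK0.le (sub_nonneg.2 hK)]
      have h1 : ‖(1 - P) * s * P‖ ≤ ‖T'‖ * (3 * K ^ 3) + K * K * ‖T‖ := by
        rw [e]
        refine (norm_sub_le _ _).trans (add_le_add ?_ nF)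
        exact (norm_mul_le _ _).trans (mul_le_mul_of_nonneg_left nU (norm_nonneg _))
      have h2 : 1 ≤ K * (‖T'‖ * (3 * K ^ 3) + K * K * ‖T‖) :=
        nlow.trans (mul_le_mul_of_nonneg_left h1 hK0.le)
      have h3 : K * (‖T'‖ * (3 * K ^ 3) + K * K * ‖T‖) =
        3 * (‖T'‖ * K ^ 4) + ‖T‖ * K ^ 3 := by ring
      rw [h3] at h2
      nlinarith
    · calc _ ≤ ‖(1 - P) * s * P + F‖ * ‖U'‖ := norm_mul_le _ _
        _ ≤ (K * K * K + K * K * 1) * (2 * K) := by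
          refine mul_le_mul ((norm_add_le _ _).trans (add_le_add nQsP (nF.trans ?_))) nU'
            (norm_nonneg _) (by positivity)
          gcongr
        _ ≤ 4 * K ^ 4 := by nlinarith [pow_pos hK0 3]
  -- all words have bounded slope
  have hall : ∀ l : List Bool, ∃ T, IsSlope P (bword D (s * D) l) T ∧ ‖T‖ ≤ 4 * K ^ 4 := by
    intro l
    induction l with
    | nil => exact ⟨0, by simpa [bword] using IsSlope.one hP, by rw [norm_zero]; positivity⟩
    | cons c l ih =>
      obtain ⟨T, hT, hn⟩ := ih
      obtain ⟨T1, hT1, hn1⟩ := hD _ _ hT hn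
      rw [hbc]
      cases c with
      | false =>
        refine ⟨T1, by simpa using hT1, ?_⟩
        have hK4 : 1 ≤ K ^ 4 := one_le_pow₀ hK
        nlinarith [norm_nonneg T1]
      | true =>
        obtain ⟨T2, hT2, -, hn2⟩ := hs _ _ hT1 hn1
        exact ⟨T2, by simpa [mul_assoc] using hT2, hn2⟩
  have hdist : ∀ l l' : List Bool,
      bword D (s * D) (false :: l) ≠ bword D (s * D) (true :: l') := by
    intro l l' he
    obtain ⟨T, hT, hn⟩ := hall l
    obtain ⟨T', hT', hn'⟩ := hall l'
    obtain ⟨T1, hT1, hn1⟩ := hD _ _ hT hn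
    obtain ⟨T1', hT1', hn1'⟩ := hD _ _ hT' hn'
    obtain ⟨T2, hT2, hn2, -⟩ := hs _ _ hT1' hn1'
    rw [hbc, hbc] at he
    simp only [if_true, Bool.false_eq_true, if_false, mul_assoc] at he
    rw [he] at hT1
    have := hT1.unique hT2
    rw [this] at hn1
    linarith
  induction l generalizing l' with
  | nil => cases l' with
    | nil => rfl
    | cons => simp at hl
  | cons c l ih =>
    cases l' with
    | nil => simp at hl
    | cons c' l' =>
      have hl2 : l.length = l'.length := by simpa using hl
      have hcancel : ∀ c : Bool, ∀ l l' : List Bool,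
          bword D (s * D) (c :: l) = bword D (s * D) (c :: l') →
          bword D (s * D) l = bword D (s * D) l' := by
        intro c l l' he
        rw [hbc, hbc] at he
        have hDc : ∀ x y : R, D * x = D * y → x = y := by
          intro x y hxy
          rw [← one_mul x, ← hDD', mul_assoc, hxy, ← mul_assoc, hDD', one_mul]
        cases c with
        | false => exact hDc _ _ (by simpa using he)
        | true =>
          simp only [if_true, mul_assoc] at he
          apply hDc
          rw [← one_mul (D * _), ← hss', mul_assoc, he, ← mul_assoc, hss', one_mul]
      cases c <;> cases c'
      · rw [ih l' hl2 (hcancel _ _ _ h)]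
      · exact absurd h (hdist _ _)
      · exact absurd h.symm (hdist _ _)
      · rw [ih l' hl2 (hcancel _ _ _ h)]

end pingpong

section proj
open Matrix
variable {n : ℕ}

lemma gap_exists {r : Fin n → ℝ} (hr : ∀ j, 0 < r j) {Λ : ℝ} (hΛ : 1 < Λ) {a b : Fin n}
    (hab : r b ^ 2 * Λ ≤ r a ^ 2) :
    ∃ I : Finset (Fin n), a ∈ I ∧ b ∉ I ∧ ∀ k ∈ I, ∀ j ∉ I, r j ^ (2 * n) * Λ ≤ r k ^ (2 * n) := by
  have hn : 0 < n := a.pos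
  have hn' : (0:ℝ) < n := by exact_mod_cast hn
  have hL : 0 < Real.log Λ := Real.log_pos hΛ
  have hΛ0 : 0 < Λ := by linarith
  set d := Real.log Λ / (2 * n) with hd
  have hd0 : 0 < d := by positivity
  set f : Fin n → ℝ := fun j => Real.log (r j) with hf
  have hfab : f b + n * d ≤ f a := by
    have h1 := Real.log_le_log (by have := hr b; positivity) hab
    rw [Real.log_mul (pow_ne_zero _ (hr b).ne') hΛ0.ne', Real.log_pow, Real.log_pow] at h1
    have h2 : n * d = Real.log Λ / 2 := by rw [hd]; field_simp
    rw [h2]; simp only [hf]; push_cast at h1; linarith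
  have hgap : ∀ j k, f j + d ≤ f k → r j ^ (2 * n) * Λ ≤ r k ^ (2 * n) := by
    intro j k h
    have hj := hr j
    have hk := hr k
    rw [← Real.log_le_log_iff (by positivity) (by positivity),
      Real.log_mul (by positivity) hΛ0.ne', Real.log_pow, Real.log_pow]
    have h2 : Real.log Λ = (2 * n) * d := by rw [hd]; field_simp
    rw [h2]
    push_cast
    have : (2 * (n:ℝ)) * (f j + d) ≤ (2 * (n:ℝ)) * f k := by gcongr
    simp only [hf] at this
    linarith
  by_contra! hcon
  have key : ∀ i : Fin n, ∃ k, f b + (i:ℕ) * d < f k ∧ f k ≤ f b + ((i:ℕ) + 1) * d := by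
    intro i
    classical
    have hi : ((i:ℕ):ℝ) * d < n * d := by
      have : ((i:ℕ):ℝ) < n := by exact_mod_cast i.2
      gcongr
    obtain ⟨k, hk, j, hj, hlt⟩ := hcon (Finset.univ.filter fun k => f b + (i:ℕ) * d < f k)
      (by simp only [Finset.mem_filter, Finset.mem_univ, true_and]; linarith)
      (by simp only [Finset.mem_filter, Finset.mem_univ, true_and, not_lt]
          have : 0 ≤ ((i:ℕ):ℝ) * d := by positivity
          linarith)
    simp only [Finset.mem_filter, Finset.mem_univ, true_and, not_lt] at hk hj
    refine ⟨k, hk, ?_⟩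
    by_contra! h
    exact absurd (hgap j k (by linarith)) (not_le.2 hlt)
  choose k hk1 hk2 using key
  have hinj : Function.Injective k := by
    have hlt : ∀ i i' : Fin n, i < i' → k i ≠ k i' := by
      intro i i' h he
      have h1 := hk2 i
      have h2 := hk1 i'
      rw [he] at h1
      have : ((i:ℕ):ℝ) + 1 ≤ (i':ℕ) := by exact_mod_cast h
      have : (((i:ℕ):ℝ) + 1) * d ≤ (i':ℕ) * d := by gcongr
      linarith
    intro i i' he
    rcases lt_trichotomy i i' with h | h | h
    · exact absurd he (hlt _ _ h)
    · exact h
    · exact absurd he.symm (hlt _ _ h)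
  obtain ⟨i, hi⟩ := (Finite.injective_iff_surjective.1 hinj) b
  have h1 := hk1 i
  rw [hi] at h1
  have : 0 ≤ ((i:ℕ):ℝ) * d := by positivity
  linarith

/-- rank one spectral projection -/
def PJ (g g' : Matrix (Fin n) (Fin n) ℂ) (j : Fin n) : Matrix (Fin n) (Fin n) ℂ :=
  g * single j j 1 * g'

/-- spectral projection -/
def PI (g g' : Matrix (Fin n) (Fin n) ℂ) (I : Finset (Fin n)) : Matrix (Fin n) (Fin n) ℂ :=
  g * prI I * g'

variable {g g' : Matrix (Fin n) (Fin n) ℂ}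

lemma conj_diag_eq (l : Fin n → ℂ) : g * diagonal l * g' = ∑ j, l j • PJ g g' j := by
  have : diagonal l = ∑ j, l j • single j j (1:ℂ) := by
    ext a b
    simp only [Matrix.sum_apply, Matrix.smul_apply, diagonal_apply, single_apply, smul_eq_mul,
      mul_ite, mul_one, mul_zero]
    by_cases h : a = b
    · subst h; simp
    · rw [if_neg h]
      symm
      apply Finset.sum_eq_zero
      intro j _
      rw [if_neg]; rintro ⟨rfl, rfl⟩; exact h rfl
  rw [this, Matrix.mul_sum, Matrix.sum_mul]
  refine Finset.sum_congr rfl fun j _ => ?_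
  rw [PJ, Matrix.mul_smul, Matrix.smul_mul]

lemma PI_eq (I : Finset (Fin n)) : PI g g' I = ∑ j ∈ I, PJ g g' j := by
  rw [PI, prI, conj_diag_eq, ← Finset.sum_filter_add_sum_filter_not _ (fun j => j ∈ I)]
  have h1 : ∑ j with j ∉ I, (if j ∈ I then (1:ℂ) else 0) • PJ g g' j = 0 := by
    apply Finset.sum_eq_zero; intro j hj
    rw [if_neg (by simpa using hj), zero_smul]
  rw [h1, add_zero]
  refine Finset.sum_congr (by ext; simp) fun j hj => ?_
  rw [if_pos hj, one_smul]

lemma one_eq (h : g' * g = 1) : (1 : Matrix (Fin n) (Fin n) ℂ) = g * 1 * g' := by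
  rw [Matrix.mul_one, mul_eq_one_comm.1 h]

lemma one_sub_PI (h : g' * g = 1) (I : Finset (Fin n)) : 1 - PI g g' I = PI g g' Iᶜ := by
  have e : (1 - prI I : Matrix (Fin n) (Fin n) ℂ) = prI Iᶜ := by
    rw [prI, prI, ← diagonal_one, diagonal_sub]
    congr 1; ext i
    by_cases hi : i ∈ I <;> simp [hi]
  conv_lhs => rw [one_eq h, PI, ← Matrix.sub_mul, ← Matrix.mul_sub, e]
  rfl

lemma PI_idem (h : g' * g = 1) (I : Finset (Fin n)) : PI g g' I * PI g g' I = PI g g' I := by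
  rw [PI, conj_mul' h, prI_idem]

lemma PJ_ne_zero (h : g' * g = 1) (j : Fin n) : PJ g g' j ≠ 0 := by
  intro h0
  have h1 := conj_trace' h (single j j (1:ℂ))
  rw [show g * single j j (1:ℂ) * g' = PJ g g' j from rfl, h0] at h1
  simp at h1

lemma diag_mul_PJ (h : g' * g = 1) (l : Fin n → ℂ) (j : Fin n) :
    (g * diagonal l * g') * PJ g g' j = l j • PJ g g' j := by
  rw [PJ, conj_mul' h, ← Matrix.smul_mul, ← Matrix.mul_smul]
  congr 2
  ext a b
  simp only [diagonal_mul, single_apply, Matrix.smul_apply, smul_eq_mul]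
  split_ifs with hab
  · rw [hab.1]
  · simp

lemma diag_mul_PI (h : g' * g = 1) (l : Fin n → ℂ) (I : Finset (Fin n)) :
    (g * diagonal l * g') * PI g g' I = ∑ j ∈ I, l j • PJ g g' j := by
  rw [PI_eq, Matrix.mul_sum]
  exact Finset.sum_congr rfl fun j _ => diag_mul_PJ h l j

lemma PI_mul_diag (h : g' * g = 1) (l : Fin n → ℂ) (I : Finset (Fin n)) :
    PI g g' I * (g * diagonal l * g') = (g * diagonal l * g') * PI g g' I := by
  rw [PI, conj_mul' h, conj_mul' h, prI, diagonal_mul_diagonal, diagonal_mul_diagonal]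
  simp only [mul_comm]

lemma PJ_mul_PI (h : g' * g = 1) {I : Finset (Fin n)} {j : Fin n} (hj : j ∈ I) :
    PJ g g' j * PI g g' I = PJ g g' j := by
  rw [PJ, PI, conj_mul' h]
  congr 2
  ext a b
  simp only [prI, mul_diagonal, single_apply]
  by_cases h1 : j = a ∧ j = b
  · obtain ⟨rfl, rfl⟩ := h1
    simp [hj]
  · simp [h1]

lemma PI_mul_PJ (h : g' * g = 1) {I : Finset (Fin n)} {j : Fin n} (hj : j ∈ I) :
    PI g g' I * PJ g g' j = PJ g g' j := by
  rw [PJ, PI, conj_mul' h]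
  congr 2
  ext a b
  simp only [prI, diagonal_mul, single_apply]
  by_cases h1 : j = a ∧ j = b
  · obtain ⟨rfl, rfl⟩ := h1
    simp [hj]
  · simp [h1]

lemma conj_back (h : g' * g = 1) (s : Matrix (Fin n) (Fin n) ℂ) : g * (g' * s * g) * g' = s := by
  have h2 := mul_eq_one_comm.1 h
  calc g * (g' * s * g) * g' = (g * g') * s * (g * g') := by simp only [Matrix.mul_assoc]
    _ = s := by rw [h2, Matrix.one_mul, Matrix.mul_one]

lemma trace_PJ (h : g' * g = 1) (s : Matrix (Fin n) (Fin n) ℂ) (j k : Fin n) :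
    (PJ g g' j * s * PJ g g' k * s).trace = (g' * s * g) j k * (g' * s * g) k j := by
  conv_lhs => rw [← conj_back h s]
  rw [PJ, PJ, conj_mul' h, conj_mul' h, conj_mul' h, conj_trace' h]
  set t := g' * s * g
  rw [Matrix.mul_assoc (single j j 1), Matrix.mul_assoc (single j j 1), trace_single_mul,
    Matrix.mul_assoc, Matrix.mul_apply, Finset.sum_eq_single k]
  · simp
  · intro b _ hb
    rw [single_mul_apply_of_ne _ _ _ _ _ hb, mul_zero]
  · simp

lemma det_PI (h : g' * g = 1) (s : Matrix (Fin n) (Fin n) ℂ) (I : Finset (Fin n)) :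
    (PI g g' I * s * PI g g' I + (1 - PI g g' I)).det =
      (prI I * (g' * s * g) * prI I + (1 - prI I)).det := by
  have e : PI g g' I * s * PI g g' I + (1 - PI g g' I) =
      g * (prI I * (g' * s * g) * prI I + (1 - prI I)) * g' := by
    conv_lhs => rw [← conj_back h s, PI, conj_mul' h, conj_mul' h, one_eq h, ← Matrix.sub_mul,
      ← Matrix.mul_sub, ← Matrix.add_mul, ← Matrix.mul_add]
  rw [e, conj_det' h]

/-- Vandermonde inversion -/
lemma PJ_vander (h : g' * g = 1) (l : Fin n → ℂ) (hd : IsUnit (vandermonde l).det) (j : Fin n) :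
    PJ g g' j = ∑ k, ((vandermonde l)⁻¹ k j) • (g * diagonal l * g') ^ (k : ℕ) := by
  have h1 : ∀ k : Fin n, (g * diagonal l * g') ^ (k:ℕ) = ∑ i, (vandermonde l i k) • PJ g g' i := by
    intro k
    rw [conj_pow' h, diagonal_pow, conj_diag_eq]
    simp [vandermonde_apply]
  simp only [h1, Finset.smul_sum, smul_smul]
  rw [Finset.sum_comm]
  simp only [← Finset.sum_smul]
  have h2 : ∀ i, ∑ k, (vandermonde l)⁻¹ k j * vandermonde l i k = if i = j then 1 else 0 := by
    intro i
    have := congrFun (congrFun (mul_nonsing_inv _ hd) i) j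
    rw [Matrix.mul_apply, Matrix.one_apply] at this
    rw [← this]
    exact Finset.sum_congr rfl fun _ _ => mul_comm _ _
  simp only [h2, ite_smul, one_smul, zero_smul, Finset.sum_ite_eq', Finset.mem_univ, if_true]

end proj

section core
open Matrix
variable {n : ℕ}

attribute [local instance] Matrix.linftyOpNormedRing Matrix.linftyOpNormedAlgebra
  Matrix.linftyOpNormedAddCommGroup Matrix.linftyOpNormedSpace

lemma PB.unif {Ω κ : Type*} [Finite κ] {Λ : Ω → ℝ} (hΛ : ∀ ω, 2 ≤ Λ ω) {E : Type*} [Norm E]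
    {f : κ → Ω → E} (h : ∀ k, PB Λ (f k)) : ∃ c : ℕ, ∀ k ω, ‖f k ω‖ ≤ Λ ω ^ c := by
  cases nonempty_fintype κ
  choose c hc using h
  refine ⟨∑ k, c k, fun k ω => (hc k ω).trans ?_⟩
  exact pow_le_pow_right₀ (by linarith [hΛ ω])
    (Finset.single_le_sum (f := c) (fun _ _ => Nat.zero_le _) (Finset.mem_univ k))

lemma trace_le {m : ℕ} (M : Matrix (Fin m) (Fin m) ℂ) : ‖M.trace‖ ≤ m * ‖M‖ := by
  refine (norm_sum_le _ _).trans ?_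
  calc ∑ i, ‖M.diag i‖ ≤ ∑ _i : Fin m, ‖M‖ := Finset.sum_le_sum fun i _ => entry_le M i i
    _ = m * ‖M‖ := by simp

variable {Ω : Type*} {Λ : Ω → ℝ}
  {u : Ω → Fin (n * n) → Matrix (Fin n) (Fin n) ℂ}
  {Φ : Ω → Matrix (Fin n) (Fin n) ℂ →ₐ[ℂ] Matrix (Fin (n * n)) (Fin (n * n)) ℂ}

set_option maxHeartbeats 1600000 in
lemma core_bounds (hn : 2 ≤ n) (hΛ : ∀ ω, 2 ≤ Λ ω) (hΦ : ∀ ω, IsPhi (u ω) (Φ ω))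
    (s : Ω → Matrix (Fin n) (Fin n) ℂ) (l : Ω → Fin n → ℂ) (g g' : Ω → Matrix (Fin n) (Fin n) ℂ)
    (hg : ∀ ω, g' ω * g ω = 1)
    (hA : PB Λ (fun ω => Φ ω (g ω * diagonal (l ω) * g' ω))) (hs : PB Λ (fun ω => Φ ω (s ω)))
    (h1 : ∀ ω, 1 ≤ ‖hank (Fintype.card (Fin n)) (c1 (g ω * diagonal (l ω) * g' ω))‖)
    (h2 : ∀ ω, 1 ≤ ‖hank (Fintype.card (Finset (Fin n)))
      (c2 (2 ^ (2 ^ n - 1)) (g ω * diagonal (l ω) * g' ω) (s ω))‖)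
    (h3 : ∀ ω, 1 ≤ ‖hank (Fintype.card (Fin n × Fin n))
      (c3 (2 ^ n) (g ω * diagonal (l ω) * g' ω) (s ω))‖) :
    ∃ c : ℕ, ∀ ω, (∀ j, ‖Φ ω (PJ (g ω) (g' ω) j)‖ ≤ Λ ω ^ c) ∧
      (∀ I, ‖Φ ω (PI (g ω) (g' ω) I)‖ ≤ Λ ω ^ c) ∧ ‖Φ ω (s ω)‖ ≤ Λ ω ^ c ∧
      (∀ I, ‖(Φ ω (PI (g ω) (g' ω) I * s ω * PI (g ω) (g' ω) I + (1 - PI (g ω) (g' ω) I)))⁻¹‖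
        ≤ Λ ω ^ c) ∧
      (∀ I, (PI (g ω) (g' ω) I * s ω * PI (g ω) (g' ω) I + (1 - PI (g ω) (g' ω) I)).det ≠ 0) ∧
      (∀ I, ∀ j ∉ I, ∀ k ∈ I, 1 ≤ Λ ω ^ c * ‖(1 - Φ ω (PI (g ω) (g' ω) I)) * Φ ω (s ω) *
        Φ ω (PI (g ω) (g' ω) I)‖) := by
  have hn0 : n ≠ 0 := by omega
  have hnz : ∀ x : ℂ, 1 ≤ ‖x‖ → x ≠ 0 := by
    rintro x hx rfl; norm_num at hx
  -- eigenvalues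
  have hl : ∀ j, PB Λ (fun ω => l ω j) := fun j =>
    hA.mono fun ω => phi_eig (hΦ ω) (diag_mul_PJ (hg ω) (l ω) j) (PJ_ne_zero (hg ω) j)
  have hc1 : ∀ ω k, c1 (g ω * diagonal (l ω) * g' ω) k = ∑ j, l ω j ^ k * 1 := fun ω k => by
    rw [c1_conj (hg ω), c1_diag]
  obtain ⟨-, hdiff⟩ := hank_PB hΛ (fun j ω => l ω j) (fun _ _ => 1) _ hc1 hl
    (fun _ => PB.const hΛ 1) h1
  have hinj : ∀ ω, Function.Injective (l ω) := fun ω =>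
    ((hank_ne_zero_iff (l ω) (fun _ => 1) _ (hc1 ω)).1 (hnz _ (h1 ω))).1
  have hV : PB Λ (fun ω => (vandermonde (l ω))⁻¹) := by
    refine PB.matinv hΛ (fun i j => ?_) ?_
    · simp only [vandermonde_apply]; exact (hl i).pow hΛ _
    · simp only [det_vandermonde, ← Finset.prod_inv_distrib]
      refine PB.prod hΛ _ fun i _ => PB.prod hΛ _ fun j hj => ?_
      exact hdiff j i (Finset.mem_Ioi.1 hj).ne'
  have hPJ : ∀ j, PB Λ (fun ω => Φ ω (PJ (g ω) (g' ω) j)) := by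
    intro j
    have : ∀ ω, Φ ω (PJ (g ω) (g' ω) j) = ∑ k : Fin n, ((vandermonde (l ω))⁻¹ k j) •
        Φ ω (g ω * diagonal (l ω) * g' ω) ^ (k : ℕ) := by
      intro ω
      rw [PJ_vander (hg ω) (l ω) (det_vandermonde_ne_zero_iff.2 (hinj ω)).isUnit j]
      simp only [map_sum, map_smul, map_pow]
    simp only [this]
    exact PB.sum hΛ _ fun k _ => (hV.entry k j).smul hΛ (hA.pow hΛ _)
  have hPI : ∀ I, PB Λ (fun ω => Φ ω (PI (g ω) (g' ω) I)) := by
    intro I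
    simp only [PI_eq, map_sum]
    exact PB.sum hΛ _ fun j _ => hPJ j
  -- corners
  set X : Finset (Fin n) → Ω → Matrix (Fin n) (Fin n) ℂ := fun I ω =>
    PI (g ω) (g' ω) I * s ω * PI (g ω) (g' ω) I + (1 - PI (g ω) (g' ω) I) with hX
  have hXPB : ∀ I, PB Λ (fun ω => Φ ω (X I ω)) := by
    intro I
    simp only [hX, one_sub_PI (hg _), map_add, map_mul]
    exact (((hPI I).mul hΛ hs).mul hΛ (hPI I)).add hΛ (hPI _)
  have hXd : ∀ I, PB Λ (fun ω => (X I ω).det) := fun I => phi_det_PB hn0 hΛ hΦ _ (hXPB I)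
  have hc2 : ∀ ω k, c2 (2 ^ (2 ^ n - 1)) (g ω * diagonal (l ω) * g' ω) (s ω) k =
      ∑ I : Finset (Fin n), (∏ j ∈ I, (((2 ^ (2 ^ n - 1) : ℕ) : ℂ) * l ω j)) ^ k * (X I ω).det := by
    intro ω k
    conv_lhs => rw [← conj_back (hg ω) (s ω)]
    rw [c2_conj (hg ω), c2_diag']
    simp only [hX, det_PI (hg ω)]
  obtain ⟨hXi, -⟩ := hank_PB hΛ
    (fun (I : Finset (Fin n)) ω => ∏ j ∈ I, (((2 ^ (2 ^ n - 1) : ℕ) : ℂ) * l ω j))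
    (fun I ω => (X I ω).det) _ hc2
    (fun I => PB.prod hΛ _ fun j _ => (PB.const hΛ _).mul hΛ (hl j)) hXd h2
  have hX0 : ∀ ω I, (X I ω).det ≠ 0 := fun ω =>
    ((hank_ne_zero_iff (fun I : Finset (Fin n) => ∏ j ∈ I, (((2 ^ (2 ^ n - 1) : ℕ) : ℂ) * l ω j))
      (fun I => (X I ω).det) _ (hc2 ω)).1 (hnz _ (h2 ω))).2
  have hXinv : ∀ I, PB Λ (fun ω => (Φ ω (X I ω))⁻¹) := fun I =>
    phi_inv_PB hΛ hΦ _ (hXPB I) (hXi I)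
  -- off-diagonal
  set Y : Fin n × Fin n → Ω → Matrix (Fin n) (Fin n) ℂ := fun t ω =>
    PJ (g ω) (g' ω) t.1 * s ω * PJ (g ω) (g' ω) t.2 * s ω with hY
  have hYPB : ∀ t, PB Λ (fun ω => (Y t ω).trace) := by
    intro t
    refine phi_trace_PB hn0 hΛ hΦ _ ?_
    simp only [hY, map_mul]
    exact (((hPJ _).mul hΛ hs).mul hΛ (hPJ _)).mul hΛ hs
  have hc3 : ∀ ω k, c3 (2 ^ n) (g ω * diagonal (l ω) * g' ω) (s ω) k =
      ∑ t : Fin n × Fin n, (l ω t.1 * l ω t.2 ^ (2 ^ n)) ^ k * (Y t ω).trace := by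
    intro ω k
    conv_lhs => rw [← conj_back (hg ω) (s ω)]
    rw [c3_conj (hg ω), c3_diag]
    simp only [hY, trace_PJ (hg ω)]
  obtain ⟨hYi, -⟩ := hank_PB hΛ
    (fun (t : Fin n × Fin n) ω => l ω t.1 * l ω t.2 ^ (2 ^ n))
    (fun t ω => (Y t ω).trace) _ hc3
    (fun t => (hl _).mul hΛ ((hl _).pow hΛ _)) hYPB h3
  have hY0 : ∀ ω t, (Y t ω).trace ≠ 0 := fun ω =>
    ((hank_ne_zero_iff (fun t : Fin n × Fin n => l ω t.1 * l ω t.2 ^ (2 ^ n))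
      (fun t => (Y t ω).trace) _ (hc3 ω)).1 (hnz _ (h3 ω))).2
  have hZ : ∀ t : Fin n × Fin n, PB Λ (fun ω => ‖((Y t ω).trace)⁻¹‖ * ((n : ℝ) *
      (‖Φ ω (PJ (g ω) (g' ω) t.1)‖ * (‖Φ ω (PJ (g ω) (g' ω) t.2)‖ * ‖Φ ω (s ω)‖)))) := fun t =>
    (hYi t).norm.mul hΛ ((PB.const hΛ _).mul hΛ ((hPJ _).norm.mul hΛ ((hPJ _).norm.mul hΛ hs.norm)))
  obtain ⟨k1, hk1⟩ := PB.unif hΛ hPJ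
  obtain ⟨k2, hk2⟩ := PB.unif hΛ hPI
  obtain ⟨k3, hk3⟩ := hs
  obtain ⟨k4, hk4⟩ := PB.unif hΛ hXinv
  obtain ⟨k5, hk5⟩ := PB.unif hΛ hZ
  refine ⟨k1 + k2 + k3 + k4 + k5, fun ω => ?_⟩
  have hup : ∀ {k x}, k ≤ k1 + k2 + k3 + k4 + k5 → x ≤ Λ ω ^ k →
      x ≤ Λ ω ^ (k1 + k2 + k3 + k4 + k5) := fun hk hx =>
    hx.trans (pow_le_pow_right₀ (by linarith [hΛ ω]) hk)
  refine ⟨fun j => hup (by omega) (hk1 j ω), fun I => hup (by omega) (hk2 I ω),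
    hup (by omega) (hk3 ω), fun I => hup (by omega) (hk4 I ω), hX0 ω, ?_⟩
  intro I j hj k hk
  set W := (1 - Φ ω (PI (g ω) (g' ω) I)) * Φ ω (s ω) * Φ ω (PI (g ω) (g' ω) I) with hW
  have h4 := hup (by omega : k5 ≤ _) ((le_abs_self _).trans (hk5 (j, k) ω))
  have e1 : Φ ω (Y (j, k) ω) = Φ ω (PJ (g ω) (g' ω) j) * W * (Φ ω (PJ (g ω) (g' ω) k) * Φ ω (s ω)) := by
    have : W = Φ ω (PI (g ω) (g' ω) Iᶜ * s ω * PI (g ω) (g' ω) I) := by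
      rw [hW, map_mul, map_mul, ← one_sub_PI (hg ω), map_sub, map_one]
    rw [this, ← map_mul, ← map_mul, ← map_mul]
    congr 1
    simp only [hY]
    conv_lhs => rw [← PJ_mul_PI (hg ω) (Finset.mem_compl.2 hj), ← PI_mul_PJ (hg ω) hk]
    simp only [Matrix.mul_assoc]
  have e2 : ‖(Y (j, k) ω).trace‖ ≤ (n : ℝ) * (‖Φ ω (PJ (g ω) (g' ω) j)‖ *
      (‖Φ ω (PJ (g ω) (g' ω) k)‖ * ‖Φ ω (s ω)‖)) * ‖W‖ := by
    have e3 := trace_le (Φ ω (Y (j, k) ω))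
    rw [(hΦ ω).trace_eq, norm_mul, Complex.norm_natCast] at e3
    push_cast at e3
    have hnp : (0 : ℝ) < n := by exact_mod_cast Nat.pos_of_ne_zero hn0
    have e4 : ‖(Y (j, k) ω).trace‖ ≤ n * ‖Φ ω (Y (j, k) ω)‖ := by
      rw [mul_assoc] at e3
      exact le_of_mul_le_mul_left e3 hnp
    refine e4.trans ?_
    rw [e1]
    have e5 : ‖Φ ω (PJ (g ω) (g' ω) j) * W * (Φ ω (PJ (g ω) (g' ω) k) * Φ ω (s ω))‖ ≤
        (‖Φ ω (PJ (g ω) (g' ω) j)‖ * ‖W‖) * (‖Φ ω (PJ (g ω) (g' ω) k)‖ * ‖Φ ω (s ω)‖) := by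
      refine (norm_mul_le _ _).trans ?_
      gcongr
      · exact norm_mul_le _ _
      · exact norm_mul_le _ _
    calc _ ≤ (n : ℝ) * ((‖Φ ω (PJ (g ω) (g' ω) j)‖ * ‖W‖) *
          (‖Φ ω (PJ (g ω) (g' ω) k)‖ * ‖Φ ω (s ω)‖)) := by gcongr
      _ = _ := by ring
  have hpos : 0 < ‖(Y (j, k) ω).trace‖ := norm_pos_iff.2 (hY0 ω _)
  calc (1 : ℝ) = ‖((Y (j, k) ω).trace)⁻¹‖ * ‖(Y (j, k) ω).trace‖ := by
        rw [norm_inv, inv_mul_cancel₀ hpos.ne']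
    _ ≤ ‖((Y (j, k) ω).trace)⁻¹‖ * ((n : ℝ) * (‖Φ ω (PJ (g ω) (g' ω) j)‖ *
      (‖Φ ω (PJ (g ω) (g' ω) k)‖ * ‖Φ ω (s ω)‖)) * ‖W‖) := by gcongr
    _ = (‖((Y (j, k) ω).trace)⁻¹‖ * ((n : ℝ) * (‖Φ ω (PJ (g ω) (g' ω) j)‖ *
      (‖Φ ω (PJ (g ω) (g' ω) k)‖ * ‖Φ ω (s ω)‖)))) * ‖W‖ := by ring
    _ ≤ _ := by gcongr

end core

section core2
open Matrix
variable {n : ℕ}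

attribute [local instance] Matrix.linftyOpNormedRing Matrix.linftyOpNormedAlgebra
  Matrix.linftyOpNormedAddCommGroup Matrix.linftyOpNormedSpace

lemma bword_map {M M' F : Type*} [Monoid M] [Monoid M'] [FunLike F M M'] [MonoidHomClass F M M']
    (f : F) (a b : M) (l : List Bool) : f (bword a b l) = bword (f a) (f b) l := by
  simp only [bword, map_list_prod, List.map_map]
  congr 2
  ext c
  cases c <;> simp

lemma exists_ab (hn : 2 ≤ n) {Λ : ℝ} (hΛ : 2 ≤ Λ) (hΛn : (n : ℝ) ^ 2 ≤ Λ) (l : Fin n → ℂ)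
    (ht : Λ ≤ ‖∑ j, l j‖) (hd : ‖∏ j, l j‖ = 1) :
    ∃ a b, ‖l b‖ ^ 2 * Λ ≤ ‖l a‖ ^ 2 := by
  have : Nonempty (Fin n) := ⟨⟨0, by omega⟩⟩
  obtain ⟨a, ha⟩ := Finite.exists_max (fun j => ‖l j‖)
  obtain ⟨b, hb⟩ := Finite.exists_min (fun j => ‖l j‖)
  refine ⟨a, b, ?_⟩
  have h1 : Λ ≤ n * ‖l a‖ := by
    refine ht.trans ((norm_sum_le _ _).trans ?_)
    calc ∑ i, ‖l i‖ ≤ ∑ _i : Fin n, ‖l a‖ := Finset.sum_le_sum fun i _ => ha i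
      _ = _ := by simp
  have h2 : Λ ≤ ‖l a‖ ^ 2 := by
    have h3 : Λ ^ 2 ≤ (n * ‖l a‖) ^ 2 := by gcongr
    have h4 : (n * ‖l a‖) ^ 2 ≤ Λ * ‖l a‖ ^ 2 := by rw [mul_pow]; gcongr
    have h5 : Λ * Λ ≤ Λ * ‖l a‖ ^ 2 := by rw [← sq]; exact h3.trans h4
    exact le_of_mul_le_mul_left h5 (by linarith)
  have h6 : ‖l b‖ ≤ 1 := by
    by_contra! h
    rw [norm_prod] at hd
    have : ∏ _j : Fin n, ‖l b‖ ≤ ∏ j, ‖l j‖ :=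
      Finset.prod_le_prod (fun _ _ => norm_nonneg _) fun j _ => hb j
    rw [hd] at this
    simp only [Finset.prod_const, Finset.card_univ, Fintype.card_fin] at this
    exact absurd this (not_le.2 (one_lt_pow₀ h (by omega)))
  calc ‖l b‖ ^ 2 * Λ ≤ 1 ^ 2 * Λ := by gcongr
    _ = Λ := by ring
    _ ≤ _ := h2

variable {Ω : Type*} {Λ : Ω → ℝ}
  {u : Ω → Fin (n * n) → Matrix (Fin n) (Fin n) ℂ}
  {Φ : Ω → Matrix (Fin n) (Fin n) ℂ →ₐ[ℂ] Matrix (Fin (n * n)) (Fin (n * n)) ℂ}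

set_option maxHeartbeats 1600000 in
lemma core (hn : 2 ≤ n) (hΛ : ∀ ω, 2 ≤ Λ ω) (hΛn : ∀ ω, (n : ℝ) ^ 2 ≤ Λ ω)
    (hΦ : ∀ ω, IsPhi (u ω) (Φ ω))
    (A s s' : Ω → Matrix (Fin n) (Fin n) ℂ) (hss : ∀ ω, s' ω * s ω = 1)
    (hA : PB Λ (fun ω => Φ ω (A ω))) (hs : PB Λ (fun ω => Φ ω (s ω)))
    (htr : ∀ ω, Λ ω ≤ ‖(A ω).trace‖) (hdet : ∀ ω, ‖(A ω).det‖ = 1)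
    (h1 : ∀ ω, 1 ≤ ‖hank (Fintype.card (Fin n)) (c1 (A ω))‖)
    (h2 : ∀ ω, 1 ≤ ‖hank (Fintype.card (Finset (Fin n))) (c2 (2 ^ (2 ^ n - 1)) (A ω) (s ω))‖)
    (h3 : ∀ ω, 1 ≤ ‖hank (Fintype.card (Fin n × Fin n)) (c3 (2 ^ n) (A ω) (s ω))‖) :
    ∃ N : ℕ, ∀ ω (l l' : List Bool), l.length = l'.length →
      bword (A ω ^ N) (s ω * A ω ^ N) l = bword (A ω ^ N) (s ω * A ω ^ N) l' → l = l' := by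
  have hex : ∀ ω, ∃ (l : Fin n → ℂ) (g g' : Matrix (Fin n) (Fin n) ℂ), g' * g = 1 ∧
      A ω = g * diagonal l * g' := fun ω => diag_of_hank (A ω) (by
    intro h; have := h1 ω; rw [h] at this; norm_num at this)
  choose l g g' hg hAe using hex
  obtain rfl : A = fun ω => g ω * diagonal (l ω) * g' ω := funext hAe
  obtain ⟨c, hc⟩ := core_bounds hn hΛ hΦ s l g g' hg hA hs h1 h2 h3
  obtain ⟨c', hc'⟩ := pow_unbounded_of_one_lt (48 * (n:ℝ) ^ 2) (one_lt_two)
  set M := 10 * c + c' with hM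
  set N := 2 * n * M with hN
  refine ⟨N, fun ω w w' hlen hw => ?_⟩
  obtain ⟨b1, b2, b3, b4, b5, b6⟩ := hc ω
  have hL := hΛ ω
  have htr' := htr ω
  have hdet' := hdet ω
  simp only [conj_trace' (hg ω), conj_det' (hg ω), trace_diagonal, det_diagonal] at htr' hdet'
  obtain ⟨a, b, hab⟩ := exists_ab hn hL (hΛn ω) (l ω) htr' hdet'
  have hl0 : ∀ j, l ω j ≠ 0 := by
    have : ∏ j, l ω j ≠ 0 := by intro h; rw [h] at hdet'; norm_num at hdet'
    exact fun j => Finset.prod_ne_zero_iff.1 this j (Finset.mem_univ j)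
  have hr : ∀ j, 0 < ‖l ω j‖ := fun j => norm_pos_iff.2 (hl0 j)
  obtain ⟨I, haI, hbI, hgap⟩ := gap_exists (r := fun j => ‖l ω j‖) hr (by linarith : 1 < Λ ω) hab
  set K := Λ ω ^ c with hK
  have hK1 : 1 ≤ K := one_le_pow₀ (by linarith)
  set F := Φ ω with hF
  set P := PI (g ω) (g' ω) I with hP
  set D := g ω * diagonal (l ω ^ N) * g' ω with hD
  set D' := g ω * diagonal (fun j => ((l ω j) ^ N)⁻¹) * g' ω with hD'
  have eD : (g ω * diagonal (l ω) * g' ω) ^ N = D := by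
    rw [conj_pow' (hg ω), diagonal_pow]
  have eDD : D * D' = 1 := by
    rw [hD, hD', conj_mul' (hg ω), diagonal_mul_diagonal, one_eq (hg ω), ← diagonal_one]
    congr 3
    ext j
    simp [hl0 j]
  have eQ : 1 - F P = F (PI (g ω) (g' ω) Iᶜ) := by
    rw [← one_sub_PI (hg ω), map_sub, map_one]
  have hunit : IsUnit (F (P * s ω * P + (1 - P))) := by
    have : IsUnit (P * s ω * P + (1 - P)) := by
      rw [Matrix.isUnit_iff_isUnit_det]; exact (b5 I).isUnit
    exact this.map F
  have hud := (Matrix.isUnit_iff_isUnit_det _).1 hunit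
  have eX : F P * F (s ω) * F P + (1 - F P) = F (P * s ω * P + (1 - P)) := by
    simp only [map_add, map_mul, map_sub, map_one]
  have hε : ‖F D * (1 - F P)‖ * ‖F P * F D'‖ ≤ n ^ 2 * K ^ 2 * (Λ ω ^ M)⁻¹ := by
    have e1 : F D * (1 - F P) = ∑ j ∈ Iᶜ, (l ω j ^ N) • F (PJ (g ω) (g' ω) j) := by
      rw [eQ, ← map_mul, hD, diag_mul_PI (hg ω), map_sum]
      simp only [map_smul, Pi.pow_apply]
    have e2 : F P * F D' = ∑ j ∈ I, ((l ω j ^ N)⁻¹) • F (PJ (g ω) (g' ω) j) := by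
      rw [← map_mul, hD', hP, PI_mul_diag (hg ω), diag_mul_PI (hg ω), map_sum]
      simp only [map_smul]
    have e3 : ‖F D * (1 - F P)‖ ≤ ∑ j ∈ Iᶜ, ‖l ω j‖ ^ N * K := by
      rw [e1]
      refine (norm_sum_le _ _).trans (Finset.sum_le_sum fun j _ => ?_)
      rw [norm_smul, norm_pow]
      gcongr
      exact b1 j
    have e4 : ‖F P * F D'‖ ≤ ∑ j ∈ I, (‖l ω j‖ ^ N)⁻¹ * K := by
      rw [e2]
      refine (norm_sum_le _ _).trans (Finset.sum_le_sum fun j _ => ?_)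
      rw [norm_smul, norm_inv, norm_pow]
      gcongr
      exact b1 j
    calc _ ≤ (∑ j ∈ Iᶜ, ‖l ω j‖ ^ N * K) * ∑ k ∈ I, (‖l ω k‖ ^ N)⁻¹ * K := by gcongr
      _ = ∑ j ∈ Iᶜ, ∑ k ∈ I, (‖l ω j‖ ^ N * K) * ((‖l ω k‖ ^ N)⁻¹ * K) := by
          rw [Finset.sum_mul_sum]
      _ ≤ ∑ j ∈ Iᶜ, ∑ k ∈ I, K ^ 2 * (Λ ω ^ M)⁻¹ := by
          refine Finset.sum_le_sum fun j hj => Finset.sum_le_sum fun k hk => ?_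
          have h5 := hgap k hk j (Finset.mem_compl.1 hj)
          have h6 : ‖l ω j‖ ^ N * Λ ω ^ M ≤ ‖l ω k‖ ^ N := by
            have h6' := pow_le_pow_left₀ (by positivity) h5 M
            rw [mul_pow, ← pow_mul, ← pow_mul] at h6'
            exact h6'
          have h7 : ‖l ω j‖ ^ N * (‖l ω k‖ ^ N)⁻¹ ≤ (Λ ω ^ M)⁻¹ := by
            have := hr k
            rw [← div_eq_mul_inv, div_le_iff₀ (by positivity), inv_mul_eq_div,
              le_div_iff₀ (by positivity)]
            exact h6
          calc _ = K ^ 2 * (‖l ω j‖ ^ N * (‖l ω k‖ ^ N)⁻¹) := by ring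
            _ ≤ _ := by gcongr
      _ = ((Iᶜ.card : ℝ) * I.card) * (K ^ 2 * (Λ ω ^ M)⁻¹) := by
          simp only [Finset.sum_const, nsmul_eq_mul]; ring
      _ ≤ ((n : ℝ) * n) * (K ^ 2 * (Λ ω ^ M)⁻¹) := by
          have h8 : ∀ J : Finset (Fin n), (J.card : ℝ) ≤ n := fun J => by
            have := Finset.card_le_univ J
            rw [Fintype.card_fin] at this
            exact_mod_cast this
          have := h8 I
          have := h8 Iᶜ
          gcongr
      _ = _ := by ring
  have hw2 : bword (F D) (F (s ω) * F D) w = bword (F D) (F (s ω) * F D) w' := by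
    rw [← map_mul, ← bword_map, ← bword_map, ← eD]
    exact congrArg F hw
  refine pingpong (P := F P) (s := F (s ω)) (s' := F (s' ω)) (D := F D) (D' := F D')
    (C' := (F (P * s ω * P + (1 - P)))⁻¹) (K := K) (ε := n ^ 2 * K ^ 2 * (Λ ω ^ M)⁻¹) hK1
    ?_ ?_ ?_ ?_ ?_ ?_ ?_ (b2 I) ?_ b3 (b4 I) (b6 I b hbI a haI) hε ?_ w w' hlen hw2
  · rw [← map_mul, hP, PI_idem (hg ω)]
  · rw [← map_mul, ← map_mul, hP, hD, PI_mul_diag (hg ω)]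
  · rw [← map_mul, eDD, map_one]
  · rw [← map_mul, mul_eq_one_comm.1 eDD, map_one]
  · rw [← map_mul, hss, map_one]
  · rw [eX]; exact mul_nonsing_inv _ hud
  · rw [eX]; exact nonsing_inv_mul _ hud
  · rw [eQ]; exact b2 _
  · have h9 : (48 * (n:ℝ) ^ 2) ≤ Λ ω ^ c' := hc'.le.trans (by gcongr)
    have h10 : Λ ω ^ M = K ^ 10 * Λ ω ^ c' := by rw [hM, pow_add, hK, ← pow_mul, mul_comm 10 c]
    have h11 : 0 < Λ ω ^ M := by positivity
    rw [show 48 * K ^ 8 * (n ^ 2 * K ^ 2 * (Λ ω ^ M)⁻¹) = (K ^ 10 * (48 * n ^ 2)) / Λ ω ^ M by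
      rw [div_eq_mul_inv]; ring, div_le_one h11, h10]
    gcongr

end core2

section assembly
open Matrix
variable {n : ℕ}

attribute [local instance] Matrix.linftyOpNormedRing Matrix.linftyOpNormedAlgebra
  Matrix.linftyOpNormedAddCommGroup Matrix.linftyOpNormedSpace

/-- complexified representation -/
noncomputable def rhoC (n : ℕ) : OutF n →* Matrix (Fin n) (Fin n) ℂ :=
  ((Int.castRingHom ℂ).mapMatrix.toMonoidHom).comp (outRep n)

lemma rhoC_apply (g : OutF n) : rhoC n g = (Int.castRingHom ℂ).mapMatrix (outRep n g) := rfl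

lemma norm_cast_ge {z : ℤ} (h : z ≠ 0) : 1 ≤ ‖(Int.castRingHom ℂ) z‖ := by
  rw [eq_intCast, Complex.norm_intCast]
  exact_mod_cast Int.one_le_abs h

lemma rhoC_trace (g : OutF n) : (rhoC n g).trace = (Int.castRingHom ℂ) (outRep n g).trace :=
  (AddMonoidHom.map_trace (Int.castRingHom ℂ).toAddMonoidHom _).symm

lemma rhoC_det (g : OutF n) : ‖(rhoC n g).det‖ = 1 := by
  rw [rhoC_apply, ← RingHom.map_det]
  rcases outRep_det g with h | h <;> rw [h] <;> simp

lemma rhoC_inv (g : OutF n) : rhoC n g⁻¹ * rhoC n g = 1 := by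
  rw [← map_mul]; simp

lemma exists_eig (hn : 2 ≤ n) {Λ : ℝ} (hΛ : 2 ≤ Λ) (hΛn : (n : ℝ) ^ 2 ≤ Λ)
    (x : Matrix (Fin n) (Fin n) ℂ) (ht : Λ ≤ ‖x.trace‖) :
    ∃ (μ : ℂ) (y : Matrix (Fin n) (Fin n) ℂ), y ≠ 0 ∧ x * y = μ • y ∧ Λ ≤ ‖μ‖ ^ 2 := by
  classical
  have hcard : Multiset.card x.charpoly.roots = n := by
    rw [← (IsAlgClosed.splits x.charpoly).natDegree_eq_card_roots, Matrix.charpoly_natDegree_eq_dim,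
      Fintype.card_fin]
  have hne : x.charpoly.roots.toFinset.Nonempty := by
    rw [Multiset.toFinset_nonempty]
    intro h
    rw [h] at hcard
    simp at hcard
    omega
  obtain ⟨μ, hμ, hmax⟩ := Finset.exists_max_image _ (fun z : ℂ => ‖z‖) hne
  rw [Multiset.mem_toFinset] at hμ
  have h1 : Λ ≤ n * ‖μ‖ := by
    refine ht.trans ?_
    rw [Matrix.trace_eq_sum_roots_charpoly]
    refine (norm_multiset_sum_le _).trans ?_
    have h2 := Multiset.sum_le_card_nsmul (x.charpoly.roots.map fun z => ‖z‖) ‖μ‖ (by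
      intro r hr
      obtain ⟨z, hz, rfl⟩ := Multiset.mem_map.1 hr
      exact hmax z (Multiset.mem_toFinset.2 hz))
    rwa [Multiset.card_map, hcard, nsmul_eq_mul] at h2
  have h2 : Λ ≤ ‖μ‖ ^ 2 := by
    have h3 : Λ ^ 2 ≤ (n * ‖μ‖) ^ 2 := by gcongr
    have h4 : (n * ‖μ‖) ^ 2 ≤ Λ * ‖μ‖ ^ 2 := by rw [mul_pow]; gcongr
    have h5 : Λ * Λ ≤ Λ * ‖μ‖ ^ 2 := by rw [← sq]; exact h3.trans h4
    exact le_of_mul_le_mul_left h5 (by linarith)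
  have h3 : (Matrix.scalar (Fin n) μ - x).det = 0 := by
    rw [← Matrix.eval_charpoly]
    exact Polynomial.isRoot_of_mem_roots hμ
  obtain ⟨v, hv, hv0⟩ := Matrix.exists_mulVec_eq_zero_iff.2 h3
  refine ⟨μ, Matrix.of fun i _ => v i, ?_, ?_, h2⟩
  · intro h0
    apply hv
    ext i
    exact congrFun (congrFun h0 i) i
  · have h4 : x *ᵥ v = μ • v := by
      rw [Matrix.sub_mulVec, sub_eq_zero] at hv0
      rw [← hv0]
      ext i
      simp [Matrix.mulVec_diagonal]
    ext i j
    have := congrFun h4 i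
    simpa [Matrix.mul_apply, mulVec, dotProduct] using this

lemma InBall.split {G : Type*} [Group G] {S : Set G} {m : ℕ} {g : G} (h : InBall S (m + 1) g) :
    ∃ a b, InBall S 1 a ∧ InBall S m b ∧ g = a * b := by
  obtain ⟨w, h1, h2, h3⟩ := h
  cases w with
  | nil => exact ⟨1, 1, .one _, .one _, by simpa using h3.symm⟩
  | cons x w =>
    refine ⟨x, w.prod, ⟨[x], by simp, ?_, by simp⟩, ⟨w, by simpa using h1, ?_, rfl⟩, ?_⟩
    · intro y hy; exact h2 y (by simp at hy; simp [hy])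
    · intro y hy; exact h2 y (by simp [hy])
    · simpa using h3.symm

lemma eig_pow {x y : Matrix (Fin n) (Fin n) ℂ} {μ : ℂ} (h : x * y = μ • y) (k : ℕ) :
    x ^ k * y = μ ^ k • y := by
  induction k with
  | zero => simp
  | succ k ih => rw [pow_succ, Matrix.mul_assoc, h, Matrix.mul_smul, ih, smul_smul, pow_succ']

set_option maxHeartbeats 1600000 in
lemma free_words (hn : 2 ≤ n) : ∃ L : ℕ, 0 < L ∧ ∀ S : Finset (OutF n),
    Subgroup.closure (S : Set (OutF n)) = ⊤ → ∃ a b,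
      InBall (S : Set (OutF n)) L a ∧ InBall (S : Set (OutF n)) L b ∧
      ∀ l l' : List Bool, l.length = l'.length → bword a b l = bword a b l' → l = l' := by
  obtain ⟨R, e, he, hcfg⟩ := config0 hn
  let Ω := {S : Finset (OutF n) // Subgroup.closure (S : Set (OutF n)) = ⊤}
  choose u t z hu ht hz hgram htrz hank0 using fun ω : Ω => hcfg ω.1 ω.2
  have hw : ∀ ω : Ω, ∃ w, InBall (ω.1 : Set (OutF n)) (2 * R + 1) w ∧
      ∀ x, InBall (ω.1 : Set (OutF n)) (2 * R + 1) x →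
        ‖(rhoC n x).trace‖ ≤ ‖(rhoC n w).trace‖ := by
    intro ω
    obtain ⟨w, h1, h2⟩ := Set.exists_max_image {g | InBall (ω.1 : Set (OutF n)) (2 * R + 1) g}
      (fun x => ‖(rhoC n x).trace‖) (finite_ball ω.1.finite_toSet _) ⟨1, InBall.one _⟩
    exact ⟨w, h1, fun x hx => h2 x hx⟩
  choose w hwB hwmax using hw
  set Λ : Ω → ℝ := fun ω => ‖(rhoC n (w ω)).trace‖ with hΛdef
  have hΛn : ∀ ω, (n : ℝ) ^ 2 ≤ Λ ω := by
    intro ω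
    refine le_trans ?_ (hwmax ω (z ω) ((hz ω).mono (by omega)))
    rw [rhoC_trace, eq_intCast, Complex.norm_intCast]
    have := htrz ω
    rw [sq]
    exact_mod_cast this
  have hΛ : ∀ ω, 2 ≤ Λ ω := by
    intro ω
    have h1 : (2 : ℝ) ≤ n := by exact_mod_cast hn
    have := hΛn ω
    nlinarith
  set U : Ω → Fin (n * n) → Matrix (Fin n) (Fin n) ℂ := fun ω i => rhoC n (u ω i) with hU
  have hgU : ∀ ω, 1 ≤ ‖gramd (U ω)‖ := by
    intro ω
    have := norm_cast_ge (hgram ω)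
    rwa [gramd_map] at this
  have hex : ∀ ω, ∃ Φ, IsPhi (U ω) Φ := fun ω => exists_Phi _ (by
    intro h; have := hgU ω; rw [h] at this; norm_num at this)
  choose Φ hΦ using hex
  have htrU : ∀ ω i j, ‖(U ω i * U ω j).trace‖ ≤ Λ ω := by
    intro ω i j
    simp only [hU, ← map_mul]
    exact hwmax ω _ (((hu ω i).mul (hu ω j)).mono (by omega))
  -- generators
  obtain ⟨c, hc⟩ : ∃ c : ℕ, ∀ ω x, InBall (ω.1 : Set (OutF n)) 1 x →
      ‖Φ ω (rhoC n x)‖ ≤ Λ ω ^ c := by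
    let Ω1 := Σ ω : Ω, {x : OutF n // InBall (ω.1 : Set (OutF n)) 1 x}
    have h := phi_PB (Ω := Ω1) (Λ := fun p => Λ p.1) (u := fun p => U p.1) (Φ := fun p => Φ p.1)
      (fun p => hΛ p.1) (fun i j => ⟨1, fun p => by rw [pow_one]; exact htrU p.1 i j⟩)
      (fun p => hgU p.1) (fun p => hΦ p.1) (fun p => rhoC n p.2.1)
      (fun i j => ⟨1, fun p => by
        rw [pow_one]
        simp only [hU, ← map_mul]
        exact hwmax p.1 _ ((((hu p.1 i).mul p.2.2).mul (hu p.1 j)).mono (by omega))⟩)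
    obtain ⟨c, hc⟩ := h
    exact ⟨c, fun ω x hx => hc ⟨ω, x, hx⟩⟩
  have hball : ∀ m ω x, InBall (ω.1 : Set (OutF n)) (m + 1) x →
      ‖Φ ω (rhoC n x)‖ ≤ Λ ω ^ (c * (m + 1)) := by
    intro m
    induction m with
    | zero => intro ω x hx; simpa using hc ω x hx
    | succ m ih =>
      intro ω x hx
      obtain ⟨a, b, ha, hb, rfl⟩ := hx.split
      rw [map_mul, map_mul]
      refine (norm_mul_le _ _).trans ?_
      have h1 := hc ω a ha
      have h2 := ih ω b hb
      have h3 : (0:ℝ) ≤ Λ ω := by linarith [hΛ ω]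
      calc _ ≤ Λ ω ^ c * Λ ω ^ (c * (m + 1)) := by gcongr
        _ = _ := by rw [← pow_add]; ring_nf
  have hballPB : ∀ m (x : Ω → OutF n), (∀ ω, InBall (ω.1 : Set (OutF n)) m (x ω)) →
      PB Λ (fun ω => Φ ω (rhoC n (x ω))) := fun m x hx =>
    ⟨c * (m + 1), fun ω => hball m ω _ ((hx ω).mono (by omega))⟩
  -- powers
  obtain ⟨C, hC⟩ : ∃ C : ℕ, ∀ ω k, (∀ i, ‖(U ω i * rhoC n (w ω) ^ k).trace‖ ≤ Λ ω) →
      ‖Φ ω (rhoC n (w ω) ^ k)‖ ≤ Λ ω ^ C := by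
    let Ω2 := {p : Ω × ℕ // ∀ i, ‖(U p.1 i * rhoC n (w p.1) ^ p.2).trace‖ ≤ Λ p.1}
    have h := phi_PB' (Ω := Ω2) (Λ := fun p => Λ p.1.1) (u := fun p => U p.1.1)
      (Φ := fun p => Φ p.1.1)
      (fun p => hΛ p.1.1) (fun i j => ⟨1, fun p => by rw [pow_one]; exact htrU p.1.1 i j⟩)
      (fun p => hgU p.1.1) (fun p => hΦ p.1.1) (fun p => rhoC n (w p.1.1) ^ p.1.2)
      (fun i => ⟨c * (R + 1), fun p => hball R p.1.1 _ ((hu p.1.1 i).mono (by omega))⟩)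
      (fun i => ⟨1, fun p => by rw [pow_one]; exact p.2 i⟩)
    obtain ⟨C, hC⟩ := h
    exact ⟨C, fun ω k hk => hC ⟨(ω, k), hk⟩⟩
  set m := 2 * C + 1 with hm
  set k := m * e with hk
  have hkC : 2 * C < k := by
    have : m * 1 ≤ m * e := Nat.mul_le_mul_left _ he
    omega
  have hi : ∀ ω, ∃ i, Λ ω < ‖(U ω i * rhoC n (w ω) ^ k).trace‖ := by
    intro ω
    by_contra! hcon
    have h1 := hC ω k hcon
    obtain ⟨μ, y, hy, hxy, hμ⟩ := exists_eig hn (hΛ ω) (hΛn ω) (rhoC n (w ω)) le_rfl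
    have h2 := phi_eig (hΦ ω) (eig_pow hxy k) hy
    rw [norm_pow] at h2
    have h3 : (0:ℝ) ≤ Λ ω := by linarith [hΛ ω]
    have h4 : Λ ω ^ k ≤ Λ ω ^ (2 * C) := by
      calc Λ ω ^ k ≤ (‖μ‖ ^ 2) ^ k := by gcongr
        _ = (‖μ‖ ^ k) ^ 2 := by rw [← pow_mul, ← pow_mul, mul_comm]
        _ ≤ (Λ ω ^ C) ^ 2 := by have := h2.trans h1; gcongr
        _ = _ := by rw [← pow_mul, mul_comm]
    have h5 : Λ ω ^ (2 * C) < Λ ω ^ k := pow_lt_pow_right₀ (by linarith [hΛ ω]) hkC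
    linarith
  choose i hi using hi
  set A : Ω → OutF n := fun ω => (w ω ^ m) ^ e * u ω (i ω) with hA
  have hAB : ∀ ω, InBall (ω.1 : Set (OutF n)) (e * (m * (2 * R + 1)) + R) (A ω) := fun ω =>
    (((hwB ω).pow m).pow e).mul (hu ω _)
  have hAρ : ∀ ω, rhoC n (A ω) = rhoC n (w ω) ^ k * U ω (i ω) := by
    intro ω
    simp only [hA, hU, hk, map_mul, map_pow, pow_mul]
  obtain ⟨N, hN⟩ := core hn hΛ hΛn hΦ (fun ω => rhoC n (A ω)) (fun ω => rhoC n (t ω (i ω)))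
    (fun ω => rhoC n (t ω (i ω))⁻¹) (fun ω => rhoC_inv _) (hballPB _ A hAB)
    (hballPB R (fun ω => t ω (i ω)) (fun ω => ht ω _))
    (fun ω => by rw [hAρ, trace_mul_comm]; exact (hi ω).le) (fun ω => rhoC_det _)
    (fun ω => by
      have := norm_cast_ge (hank0 ω (i ω) (w ω ^ m)).1
      rw [hank_map] at this
      simp only [c1_map] at this
      exact this)
    (fun ω => by
      have := norm_cast_ge (hank0 ω (i ω) (w ω ^ m)).2.1
      rw [hank_map] at this
      simp only [c2_map] at this
      exact this)
    (fun ω => by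
      have := norm_cast_ge (hank0 ω (i ω) (w ω ^ m)).2.2
      rw [hank_map] at this
      simp only [c3_map] at this
      exact this)
  refine ⟨R + N * (e * (m * (2 * R + 1)) + R) + 1, by omega, fun S hS => ?_⟩
  let ω : Ω := ⟨S, hS⟩
  refine ⟨A ω ^ N, t ω (i ω) * A ω ^ N, ((hAB ω).pow N).mono (by omega),
    ((ht ω (i ω)).mul ((hAB ω).pow N)).mono (by omega), fun l l' hl h => hN ω l l' hl ?_⟩
  have h2 := congrArg (rhoC n) h
  simpa only [bword_map, map_mul, map_pow] using h2

end assembly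

theorem out_freeGroup_uniform_exponential_growth (n : ℕ) (hn : 2 ≤ n) :
    1 < minGrowth (MulAut (FreeGroup (Fin n)) ⧸
      (MulAut.conj : FreeGroup (Fin n) →* MulAut (FreeGroup (Fin n))).range) := by
  obtain ⟨L, hL, h⟩ := free_words hn
  exact one_lt_minGrowth (out_fg n) hL h
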